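/- arXiv:1602.08995 — 2 statements merged into one kernel-verified Lean document; each statement's English description precedes it below -/
import Mathlib

section
/- Under assumption (AS1), the backward stochastic Riccati equation admits at most one solution (P,Λ) ∈ L^∞_𝔽(Ω;C([0,T];S(ℝⁿ))) × L^p_𝔽(Ω;L²(0,T;S(ℝⁿ))) (for all p ≥ 1) satisfying Range(K(t,ω)) ⊇ Range(L(t,ω)) and K(t,ω) ≥ 0 for a.e. (t,ω) ∈ [0,T]×Ω, and K†L ∈ L^∞_𝔽(Ω;L²(0,T;ℝ^{m×n})). -/
/-!
Let `(P₁,Λ₁)` and `(P₂,Λ₂)` be two solutions, and put `Δ = P₁ - P₂`, `Γ = Λ₁ - Λ₂` and `g = f₁ - f₂`,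
where `-fᵢ` is the drift of `Pᵢ`.  Then `dΔ = -g dt + Γ dW` and `Δ(T) = 0`.

*Linearity of the drift difference.*  With `Uᵢ = Kᵢ†Lᵢ`, the range condition gives `Lᵢ = Kᵢ Uᵢ`
(`range_mul`), so that `LᵢᵀKᵢ†Lᵢ = UᵢᵀKᵢUᵢ`.  The difference of these quadratic terms can be written
linearly in `K₁ - K₂ = DᵀΔD` and `L₁ - L₂ = BᵀΔ + Dᵀ(ΔC + Γ)`, with coefficients depending on `U₁` and
`U₂` (`quad_sub`).  Hence `2⟨Δ,g⟩ ≤ ½|Γ|² + q|Δ|²` (`drift_main`) with a rate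
`q = (20 + 12 d)(|A| + |B|² + |C|² + |U₁|² + |U₂|²)`, where `|D|² ≤ d`; the time integral of `q` is
essentially bounded (`rate_bound`).

*Weighted energy estimate.*  Let `γ = 1 + q` and `β = exp ∫₀ᵗ γ`.  Itô's formula for `β X²`, applied to
each entry `X` of `Δ`, would give `E ∫ β (γX² - 2Xg + Γ²) ≤ 0`.  Summed over the entries, the integrand
is at least `β (|Δ|² + ½|Γ|²)`, so `Δ = 0` and `Γ = 0` (`energy_sum`).

*The estimate without stochastic calculus.*  The stochastic integral `N = ∫ Γ dW` is only known through
its martingale property and its covariation with `W`.  Over one step of a uniform partition, with a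
variable `h` known at the start of the step,
`(ΔX)² ≥ 2 h ΔX ΔW - h² (ΔW)²`, because `(ΔX - h ΔW)² ≥ 0`.
In expectation the covariation turns `ΔN ΔW` into `∫ Γ`, and `(ΔW)²` becomes the length of the step
(`GoodPath.energy_ineq`, `ItoData.energy_step`).  Taking for `h` the truncated average of `Γ` over the
preceding step and refining the partition, `2hΓ - h²` tends to `Γ²` by Lebesgue differentiation, and
the inequality needed follows by dominated convergence (`ItoData.energy`).  The average is adapted up
to null sets because time integrals of adapted processes are (`aestronglyMeasurable_integral`).
-/

open MeasureTheory ProbabilityTheory Filter Set Matrix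

noncomputable section

namespace SLQ

variable {Ω : Type} {mΩ : MeasurableSpace Ω}

/-- Squared Euclidean norm of a vector. -/
def enorm2 {k : ℕ} (v : Fin k → ℝ) : ℝ := ∑ i, (v i) ^ 2

/-- Squared Frobenius norm of a matrix. -/
def frob2 {k l : ℕ} (M : Matrix (Fin k) (Fin l) ℝ) : ℝ := ∑ i, ∑ j, (M i j) ^ 2

/-- The martingale property on the time interval `[s,T]`. -/
def MartOn (μ : Measure Ω) (F : Filtration ℝ mΩ) (s T : ℝ) (M : ℝ → Ω → ℝ) : Prop :=
  (∀ t ∈ Icc s T, Measurable[F t] (M t)) ∧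
  (∀ t ∈ Icc s T, Integrable (M t) μ) ∧
  ∀ t₁ t₂, s ≤ t₁ → t₁ ≤ t₂ → t₂ ≤ T → μ[M t₂ | F t₁] =ᵐ[μ] M t₁

/-- `W` is a standard one-dimensional Brownian motion and `F` is its natural filtration. -/
structure IsBrownian (μ : Measure Ω) (F : Filtration ℝ mΩ) (W : ℝ → Ω → ℝ) : Prop where
  meas : ∀ t, Measurable[F t] (W t)
  cont : ∀ᵐ ω ∂μ, Continuous fun t => W t ω
  start : ∀ᵐ ω ∂μ, W 0 ω = 0
  gauss : ∀ s t : ℝ, 0 ≤ s → s ≤ t →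
    Measure.map (fun ω => W t ω - W s ω) μ = gaussianReal 0 (Real.toNNReal (t - s))
  indep : ∀ s t : ℝ, 0 ≤ s → s ≤ t →
    Indep (MeasurableSpace.comap (fun ω => W t ω - W s ω) (borel ℝ)) (F s) μ
  natural : ∀ t : ℝ, 0 ≤ t →
    F t = ⨆ s ∈ Icc (0:ℝ) t, MeasurableSpace.comap (fun ω => W s ω) (borel ℝ)

/-- `M = ∫_s^· φ dW` on `[s,T]`: `M` is a continuous square-integrable martingale starting from `0`
at time `s`, whose quadratic variation is `∫_s^· φ² dr` and whose covariation with `W` is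
`∫_s^· φ dr`.  This characterizes the Itô integral of `φ` with respect to `W`. -/
def IsItoInt (μ : Measure Ω) (F : Filtration ℝ mΩ) (W : ℝ → Ω → ℝ) (s T : ℝ)
    (φ M : ℝ → Ω → ℝ) : Prop :=
  (∀ᵐ ω ∂μ, M s ω = 0) ∧
  (∀ᵐ ω ∂μ, ContinuousOn (fun t => M t ω) (Icc s T)) ∧
  MartOn μ F s T M ∧
  MartOn μ F s T (fun t ω => M t ω * W t ω - ∫ r in s..t, φ r ω) ∧
  MartOn μ F s T (fun t ω => (M t ω) ^ 2 - ∫ r in s..t, (φ r ω) ^ 2)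

/-- Componentwise Itô integral for `ℝᵏ`-valued integrands. -/
def IsItoIntVec {k : ℕ} (μ : Measure Ω) (F : Filtration ℝ mΩ) (W : ℝ → Ω → ℝ) (s T : ℝ)
    (φ M : ℝ → Ω → Fin k → ℝ) : Prop :=
  ∀ i, IsItoInt μ F W s T (fun t ω => φ t ω i) (fun t ω => M t ω i)

/-- `x` is a solution of the SDE `dx = b dt + σ dW` on `[s,T]` with `x(s) = η`. -/
def SolvesSDE {k : ℕ} (μ : Measure Ω) (F : Filtration ℝ mΩ) (W : ℝ → Ω → ℝ) (s T : ℝ)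
    (b σ : ℝ → Ω → Fin k → ℝ) (η : Ω → Fin k → ℝ) (x : ℝ → Ω → Fin k → ℝ) : Prop :=
  (∀ t ∈ Icc s T, ∀ i, Measurable[F t] fun ω => x t ω i) ∧
  (∀ᵐ ω ∂μ, ContinuousOn (fun t => x t ω) (Icc s T)) ∧
  (∀ᵐ ω ∂μ, IntegrableOn (fun r => b r ω) (Icc s T)) ∧
  ∃ M : ℝ → Ω → Fin k → ℝ, IsItoIntVec μ F W s T σ M ∧
    ∀ᵐ ω ∂μ, ∀ t ∈ Icc s T, x t ω = η ω + (∫ r in s..t, b r ω) + M t ω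

/-- `(y,z)` is a solution of the BSDE `dy = f dt + z dW` on `[s,T]` with `y(T) = ξ`. -/
def SolvesBSDE {k : ℕ} (μ : Measure Ω) (F : Filtration ℝ mΩ) (W : ℝ → Ω → ℝ) (s T : ℝ)
    (f : ℝ → Ω → Fin k → ℝ) (ξ : Ω → Fin k → ℝ) (y z : ℝ → Ω → Fin k → ℝ) : Prop :=
  (∀ t ∈ Icc s T, ∀ i, Measurable[F t] fun ω => y t ω i) ∧
  (∀ t ∈ Icc s T, ∀ i, Measurable[F t] fun ω => z t ω i) ∧
  (∀ᵐ ω ∂μ, ContinuousOn (fun t => y t ω) (Icc s T)) ∧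
  (∀ᵐ ω ∂μ, IntegrableOn (fun r => f r ω) (Icc s T)) ∧
  ∃ M : ℝ → Ω → Fin k → ℝ, IsItoIntVec μ F W s T z M ∧
    ∀ᵐ ω ∂μ, ∀ t ∈ Icc s T, y t ω = ξ ω - (∫ r in t..T, f r ω) - (M T ω - M t ω)

/-! ### Spaces of processes -/

/-- `φ ∈ L^∞_𝔽(Ω; L¹(a,b; ℝ^{k×l}))`. -/
def MatMemLinfL1 {k l : ℕ} (μ : Measure Ω) (F : Filtration ℝ mΩ) (a b : ℝ)
    (φ : ℝ → Ω → Matrix (Fin k) (Fin l) ℝ) : Prop :=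
  (∀ t i j, Measurable[F t] fun ω => φ t ω i j) ∧
  (∀ i j, Measurable fun p : ℝ × Ω => φ p.1 p.2 i j) ∧
  ∃ c : ℝ, ∀ᵐ ω ∂μ, (∀ i j, IntegrableOn (fun r => φ r ω i j) (Icc a b)) ∧
    (∫ r in a..b, Real.sqrt (frob2 (φ r ω))) ≤ c

/-- `φ ∈ L^∞_𝔽(Ω; L²(a,b; ℝ^{k×l}))`. -/
def MatMemLinfL2 {k l : ℕ} (μ : Measure Ω) (F : Filtration ℝ mΩ) (a b : ℝ)
    (φ : ℝ → Ω → Matrix (Fin k) (Fin l) ℝ) : Prop :=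
  (∀ t i j, Measurable[F t] fun ω => φ t ω i j) ∧
  (∀ i j, Measurable fun p : ℝ × Ω => φ p.1 p.2 i j) ∧
  ∃ c : ℝ, ∀ᵐ ω ∂μ, (IntegrableOn (fun r => frob2 (φ r ω)) (Icc a b)) ∧
    (∫ r in a..b, frob2 (φ r ω)) ≤ c

/-- `φ ∈ L^∞_𝔽(a,b; ℝ^{k×l})` (essentially bounded in `(t,ω)`). -/
def MatMemLinfLinf {k l : ℕ} (μ : Measure Ω) (F : Filtration ℝ mΩ) (a b : ℝ)
    (φ : ℝ → Ω → Matrix (Fin k) (Fin l) ℝ) : Prop :=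
  (∀ t i j, Measurable[F t] fun ω => φ t ω i j) ∧
  (∀ i j, Measurable fun p : ℝ × Ω => φ p.1 p.2 i j) ∧
  ∃ c : ℝ, ∀ᵐ p ∂(((volume : Measure ℝ).restrict (Icc a b)).prod μ), frob2 (φ p.1 p.2) ≤ c

/-- `Λ ∈ L^p_𝔽(Ω; L²(a,b; ℝ^{k×l}))` for all `p ≥ 1`. -/
def MatMemLpAllL2 {k l : ℕ} (μ : Measure Ω) (F : Filtration ℝ mΩ) (a b : ℝ)
    (φ : ℝ → Ω → Matrix (Fin k) (Fin l) ℝ) : Prop :=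
  (∀ t i j, Measurable[F t] fun ω => φ t ω i j) ∧
  (∀ i j, Measurable fun p : ℝ × Ω => φ p.1 p.2 i j) ∧
  (∀ᵐ ω ∂μ, IntegrableOn (fun r => frob2 (φ r ω)) (Icc a b)) ∧
  ∀ p : ℝ, 1 ≤ p →
    (∫⁻ ω, ENNReal.ofReal ((∫ r in a..b, frob2 (φ r ω)) ^ (p / 2)) ∂μ) < ⊤

/-- `P ∈ L^∞_𝔽(Ω; C([a,b]; ℝ^{k×k}))`. -/
def MatMemLinfC {k : ℕ} (μ : Measure Ω) (F : Filtration ℝ mΩ) (a b : ℝ)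
    (φ : ℝ → Ω → Matrix (Fin k) (Fin k) ℝ) : Prop :=
  (∀ t i j, Measurable[F t] fun ω => φ t ω i j) ∧
  (∀ᵐ ω ∂μ, ∀ i j, ContinuousOn (fun t => φ t ω i j) (Icc a b)) ∧
  ∃ c : ℝ, ∀ᵐ ω ∂μ, ∀ t ∈ Icc a b, frob2 (φ t ω) ≤ c

/-- `u ∈ L²_𝔽(s,T; ℝᵏ)`. -/
def VecMemL2 {k : ℕ} (μ : Measure Ω) (F : Filtration ℝ mΩ) (s T : ℝ)
    (u : ℝ → Ω → Fin k → ℝ) : Prop :=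
  (∀ t i, Measurable[F t] fun ω => u t ω i) ∧
  (∀ i, Measurable fun p : ℝ × Ω => u p.1 p.2 i) ∧
  (∫⁻ p, ENNReal.ofReal (enorm2 (u p.1 p.2)) ∂(((volume : Measure ℝ).restrict (Icc s T)).prod μ)) < ⊤

/-- `x ∈ L²_𝔽(Ω; C([s,T]; ℝᵏ))`. -/
def VecMemL2C {k : ℕ} (μ : Measure Ω) (F : Filtration ℝ mΩ) (s T : ℝ)
    (x : ℝ → Ω → Fin k → ℝ) : Prop :=
  (∀ t ∈ Icc s T, ∀ i, Measurable[F t] fun ω => x t ω i) ∧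
  (∀ᵐ ω ∂μ, ContinuousOn (fun t => x t ω) (Icc s T)) ∧
  (∫⁻ ω, ⨆ t : Icc s T, ENNReal.ofReal (enorm2 (x t ω)) ∂μ) < ⊤

/-- `η ∈ L²_{𝓕_s}(Ω; ℝᵏ)`. -/
def MemL2Rnd {k : ℕ} (μ : Measure Ω) (F : Filtration ℝ mΩ) (s : ℝ) (η : Ω → Fin k → ℝ) : Prop :=
  (∀ i, Measurable[F s] fun ω => η ω i) ∧ (∫⁻ ω, ENNReal.ofReal (enorm2 (η ω)) ∂μ) < ⊤

end SLQ
namespace SLQ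

variable {Ω : Type} {mΩ : MeasurableSpace Ω}

/-! ### The stochastic linear quadratic problem -/

/-- The state equation `dx = (Ax+Bu)dr + (Cx+Du)dW` on `[s,T]`, `x(s)=η`. -/
def SolvesState {n m : ℕ} (μ : Measure Ω) (F : Filtration ℝ mΩ) (W : ℝ → Ω → ℝ) (s T : ℝ)
    (A : ℝ → Ω → Matrix (Fin n) (Fin n) ℝ) (B : ℝ → Ω → Matrix (Fin n) (Fin m) ℝ)
    (C : ℝ → Ω → Matrix (Fin n) (Fin n) ℝ) (D : ℝ → Ω → Matrix (Fin n) (Fin m) ℝ)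
    (η : Ω → Fin n → ℝ) (u : ℝ → Ω → Fin m → ℝ) (x : ℝ → Ω → Fin n → ℝ) : Prop :=
  SolvesSDE μ F W s T
    (fun r ω => A r ω *ᵥ x r ω + B r ω *ᵥ u r ω)
    (fun r ω => C r ω *ᵥ x r ω + D r ω *ᵥ u r ω) η x

/-- The quadratic cost functional
`J(s,η;u) = ½ E[∫_s^T (⟨Qx,x⟩+⟨Ru,u⟩) dr + ⟨Gx(T),x(T)⟩]`. -/
def cost {n m : ℕ} (μ : Measure Ω) (s T : ℝ)
    (Q : ℝ → Ω → Matrix (Fin n) (Fin n) ℝ) (R : ℝ → Ω → Matrix (Fin m) (Fin m) ℝ)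
    (G : Ω → Matrix (Fin n) (Fin n) ℝ)
    (u : ℝ → Ω → Fin m → ℝ) (x : ℝ → Ω → Fin n → ℝ) : ℝ :=
  (1/2) * ∫ ω, ((∫ r in s..T,
      ((Q r ω *ᵥ x r ω) ⬝ᵥ x r ω + (R r ω *ᵥ u r ω) ⬝ᵥ u r ω))
    + (G ω *ᵥ x T ω) ⬝ᵥ x T ω) ∂μ

/-- Assumption (AS1) on the coefficients of Problem (SLQ). -/
structure AS1 {n m : ℕ} (μ : Measure Ω) (F : Filtration ℝ mΩ) (T : ℝ)
    (A : ℝ → Ω → Matrix (Fin n) (Fin n) ℝ) (B : ℝ → Ω → Matrix (Fin n) (Fin m) ℝ)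
    (C : ℝ → Ω → Matrix (Fin n) (Fin n) ℝ) (D : ℝ → Ω → Matrix (Fin n) (Fin m) ℝ)
    (Q : ℝ → Ω → Matrix (Fin n) (Fin n) ℝ) (R : ℝ → Ω → Matrix (Fin m) (Fin m) ℝ)
    (G : Ω → Matrix (Fin n) (Fin n) ℝ) : Prop where
  hA : MatMemLinfL1 μ F 0 T A
  hB : MatMemLinfL2 μ F 0 T B
  hC : MatMemLinfL2 μ F 0 T C
  hD : MatMemLinfLinf μ F 0 T D
  hQ : MatMemLinfL1 μ F 0 T Q
  hQsymm : ∀ r ω, (Q r ω)ᵀ = Q r ω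
  hR : MatMemLinfLinf μ F 0 T R
  hRsymm : ∀ r ω, (R r ω)ᵀ = R r ω
  hG : ∀ i j, Measurable[F T] fun ω => G ω i j
  hGbdd : ∃ c : ℝ, ∀ᵐ ω ∂μ, frob2 (G ω) ≤ c
  hGsymm : ∀ ω, (G ω)ᵀ = G ω

/-- `Θ` is an optimal feedback operator for Problem (SLQ) on `[0,T]`:
`Θ ∈ L^∞_𝔽(Ω;L²(0,T;ℝ^{m×n}))` and, for every initial pair `(s,η)`, every closed-loop state `x̄`
(which solves the state equation with control `Θx̄`, the latter being admissible) and every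
admissible control `u` with state `x`, one has `J(s,η;Θx̄) ≤ J(s,η;u)`. -/
def IsOptimalFeedback {n m : ℕ} (μ : Measure Ω) (F : Filtration ℝ mΩ) (W : ℝ → Ω → ℝ) (T : ℝ)
    (A : ℝ → Ω → Matrix (Fin n) (Fin n) ℝ) (B : ℝ → Ω → Matrix (Fin n) (Fin m) ℝ)
    (C : ℝ → Ω → Matrix (Fin n) (Fin n) ℝ) (D : ℝ → Ω → Matrix (Fin n) (Fin m) ℝ)
    (Q : ℝ → Ω → Matrix (Fin n) (Fin n) ℝ) (R : ℝ → Ω → Matrix (Fin m) (Fin m) ℝ)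
    (G : Ω → Matrix (Fin n) (Fin n) ℝ)
    (Θ : ℝ → Ω → Matrix (Fin m) (Fin n) ℝ) : Prop :=
  MatMemLinfL2 μ F 0 T Θ ∧
  ∀ s, 0 ≤ s → s < T → ∀ η : Ω → Fin n → ℝ, MemL2Rnd μ F s η →
    ∀ xb : ℝ → Ω → Fin n → ℝ,
      SolvesState μ F W s T A B C D η (fun r ω => Θ r ω *ᵥ xb r ω) xb →
      VecMemL2C μ F s T xb →
      VecMemL2 μ F s T (fun r ω => Θ r ω *ᵥ xb r ω) ∧
      ∀ (u : ℝ → Ω → Fin m → ℝ) (x : ℝ → Ω → Fin n → ℝ),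
        VecMemL2 μ F s T u → SolvesState μ F W s T A B C D η u x → VecMemL2C μ F s T x →
        cost μ s T Q R G (fun r ω => Θ r ω *ᵥ xb r ω) xb ≤ cost μ s T Q R G u x

/-! ### The backward stochastic Riccati equation -/

/-- `N` is the Moore–Penrose pseudo-inverse of `M`. -/
def IsMPInv {k l : ℕ} (M : Matrix (Fin k) (Fin l) ℝ) (N : Matrix (Fin l) (Fin k) ℝ) : Prop :=
  M * N * M = M ∧ N * M * N = N ∧ (M * N)ᵀ = M * N ∧ (N * M)ᵀ = N * M

/-- `K := R + DᵀPD`. -/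
def Kof {n m : ℕ} (D : ℝ → Ω → Matrix (Fin n) (Fin m) ℝ)
    (R : ℝ → Ω → Matrix (Fin m) (Fin m) ℝ) (P : ℝ → Ω → Matrix (Fin n) (Fin n) ℝ)
    (t : ℝ) (ω : Ω) : Matrix (Fin m) (Fin m) ℝ :=
  R t ω + (D t ω)ᵀ * P t ω * D t ω

/-- `L := BᵀP + Dᵀ(PC+Λ)`. -/
def Lof {n m : ℕ} (B : ℝ → Ω → Matrix (Fin n) (Fin m) ℝ)
    (C : ℝ → Ω → Matrix (Fin n) (Fin n) ℝ) (D : ℝ → Ω → Matrix (Fin n) (Fin m) ℝ)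
    (P Λ : ℝ → Ω → Matrix (Fin n) (Fin n) ℝ) (t : ℝ) (ω : Ω) : Matrix (Fin m) (Fin n) ℝ :=
  (B t ω)ᵀ * P t ω + (D t ω)ᵀ * (P t ω * C t ω + Λ t ω)

/-- `(P,Λ)` solves the backward stochastic Riccati equation
`dP = -(PA + AᵀP + ΛC + CᵀΛ + CᵀPC + Q - Lᵀ K† L) dt + Λ dW`, `P(T) = G`,
where `Kd` is a given process substituted for `K†` in the drift. -/
def SolvesRiccatiGen {n m : ℕ} (μ : Measure Ω) (F : Filtration ℝ mΩ) (W : ℝ → Ω → ℝ) (T : ℝ)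
    (A : ℝ → Ω → Matrix (Fin n) (Fin n) ℝ) (B : ℝ → Ω → Matrix (Fin n) (Fin m) ℝ)
    (C : ℝ → Ω → Matrix (Fin n) (Fin n) ℝ) (D : ℝ → Ω → Matrix (Fin n) (Fin m) ℝ)
    (Q : ℝ → Ω → Matrix (Fin n) (Fin n) ℝ) (R : ℝ → Ω → Matrix (Fin m) (Fin m) ℝ)
    (G : Ω → Matrix (Fin n) (Fin n) ℝ)
    (P Λ : ℝ → Ω → Matrix (Fin n) (Fin n) ℝ)
    (Kd : ℝ → Ω → Matrix (Fin m) (Fin m) ℝ) : Prop :=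
  ∃ M : ℝ → Ω → Matrix (Fin n) (Fin n) ℝ,
    (∀ i j, IsItoInt μ F W 0 T (fun t ω => Λ t ω i j) (fun t ω => M t ω i j)) ∧
    (∀ᵐ ω ∂μ, ∀ i j, IntegrableOn (fun r =>
        (P r ω * A r ω + (A r ω)ᵀ * P r ω + Λ r ω * C r ω + (C r ω)ᵀ * Λ r ω
          + (C r ω)ᵀ * P r ω * C r ω + Q r ω
          - (Lof B C D P Λ r ω)ᵀ * Kd r ω * Lof B C D P Λ r ω) i j) (Icc 0 T)) ∧
    ∀ᵐ ω ∂μ, ∀ t ∈ Icc (0:ℝ) T, ∀ i j,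
      P t ω i j = G ω i j
        + (∫ r in t..T,
            (P r ω * A r ω + (A r ω)ᵀ * P r ω + Λ r ω * C r ω + (C r ω)ᵀ * Λ r ω
              + (C r ω)ᵀ * P r ω * C r ω + Q r ω
              - (Lof B C D P Λ r ω)ᵀ * Kd r ω * Lof B C D P Λ r ω) i j)
        - (M T ω i j - M t ω i j)

/-- `(P,Λ)` solves the backward stochastic Riccati equation, with `Kd` being the pointwise
Moore–Penrose pseudo-inverse of `K = R + DᵀPD`. -/
def SolvesRiccati {n m : ℕ} (μ : Measure Ω) (F : Filtration ℝ mΩ) (W : ℝ → Ω → ℝ) (T : ℝ)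
    (A : ℝ → Ω → Matrix (Fin n) (Fin n) ℝ) (B : ℝ → Ω → Matrix (Fin n) (Fin m) ℝ)
    (C : ℝ → Ω → Matrix (Fin n) (Fin n) ℝ) (D : ℝ → Ω → Matrix (Fin n) (Fin m) ℝ)
    (Q : ℝ → Ω → Matrix (Fin n) (Fin n) ℝ) (R : ℝ → Ω → Matrix (Fin m) (Fin m) ℝ)
    (G : Ω → Matrix (Fin n) (Fin n) ℝ)
    (P Λ : ℝ → Ω → Matrix (Fin n) (Fin n) ℝ)
    (Kd : ℝ → Ω → Matrix (Fin m) (Fin m) ℝ) : Prop :=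
  (∀ t ω, IsMPInv (Kof D R P t ω) (Kd t ω)) ∧
  SolvesRiccatiGen μ F W T A B C D Q R G P Λ Kd

/-- The regularity/positivity class in Theorem 5.7-th1: `P ∈ L^∞_𝔽(Ω;C([0,T];S(ℝⁿ)))`,
`Λ ∈ L^p_𝔽(Ω;L²(0,T;S(ℝⁿ)))` for all `p ≥ 1`, `Range K ⊇ Range L` and `K ≥ 0` a.e.,
and `K†L ∈ L^∞_𝔽(Ω;L²(0,T;ℝ^{m×n}))`. -/
def RiccatiClass {n m : ℕ} (μ : Measure Ω) (F : Filtration ℝ mΩ) (T : ℝ)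
    (B : ℝ → Ω → Matrix (Fin n) (Fin m) ℝ)
    (C : ℝ → Ω → Matrix (Fin n) (Fin n) ℝ) (D : ℝ → Ω → Matrix (Fin n) (Fin m) ℝ)
    (R : ℝ → Ω → Matrix (Fin m) (Fin m) ℝ)
    (P Λ : ℝ → Ω → Matrix (Fin n) (Fin n) ℝ)
    (Kd : ℝ → Ω → Matrix (Fin m) (Fin m) ℝ) : Prop :=
  MatMemLinfC μ F 0 T P ∧ (∀ᵐ ω ∂μ, ∀ t ∈ Icc (0:ℝ) T, (P t ω)ᵀ = P t ω) ∧
  MatMemLpAllL2 μ F 0 T Λ ∧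
  (∀ᵐ p ∂(((volume : Measure ℝ).restrict (Icc 0 T)).prod μ), (Λ p.1 p.2)ᵀ = Λ p.1 p.2) ∧
  (∀ᵐ p ∂(((volume : Measure ℝ).restrict (Icc 0 T)).prod μ),
      Set.range (Matrix.mulVec (Lof B C D P Λ p.1 p.2)) ⊆
        Set.range (Matrix.mulVec (Kof D R P p.1 p.2)) ∧
      (Kof D R P p.1 p.2).PosSemidef) ∧
  MatMemLinfL2 μ F 0 T (fun t ω => Kd t ω * Lof B C D P Λ t ω)

end SLQ
namespace SLQ

variable {Ω : Type} {mΩ : MeasurableSpace Ω}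

/-- `φ ∈ L^∞_𝔽(Ω; L¹(a,b; ℝᵏ))` (vector-valued). -/
def VecMemLinfL1 {k : ℕ} (μ : Measure Ω) (F : Filtration ℝ mΩ) (a b : ℝ)
    (φ : ℝ → Ω → Fin k → ℝ) : Prop :=
  (∀ t i, Measurable[F t] fun ω => φ t ω i) ∧
  (∀ i, Measurable fun p : ℝ × Ω => φ p.1 p.2 i) ∧
  ∃ c : ℝ, ∀ᵐ ω ∂μ, IntegrableOn (fun r => Real.sqrt (enorm2 (φ r ω))) (Icc a b) ∧
    (∫ r in a..b, Real.sqrt (enorm2 (φ r ω))) ≤ c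

/-- `y ∈ L^∞_𝔽(Ω; C([a,b]; ℝᵏ))`. -/
def VecMemLinfC {k : ℕ} (μ : Measure Ω) (F : Filtration ℝ mΩ) (a b : ℝ)
    (y : ℝ → Ω → Fin k → ℝ) : Prop :=
  (∀ t ∈ Icc a b, ∀ i, Measurable[F t] fun ω => y t ω i) ∧
  (∀ᵐ ω ∂μ, ContinuousOn (fun t => y t ω) (Icc a b)) ∧
  ∃ c : ℝ, ∀ᵐ ω ∂μ, ∀ t ∈ Icc a b, enorm2 (y t ω) ≤ c

/-- `z ∈ L^p_𝔽(Ω; L²(a,b; ℝᵏ))` for a single exponent `p`. -/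
def VecMemLpL2 {k : ℕ} (μ : Measure Ω) (F : Filtration ℝ mΩ) (a b p : ℝ)
    (z : ℝ → Ω → Fin k → ℝ) : Prop :=
  (∀ t ∈ Icc a b, ∀ i, Measurable[F t] fun ω => z t ω i) ∧
  (∀ i, Measurable fun q : ℝ × Ω => z q.1 q.2 i) ∧
  (∀ᵐ ω ∂μ, IntegrableOn (fun r => enorm2 (z r ω)) (Icc a b)) ∧
  (∫⁻ ω, ENNReal.ofReal ((∫ r in a..b, enorm2 (z r ω)) ^ (p / 2)) ∂μ) < ⊤

/-- `ξ ∈ L^∞_{𝓕_s}(Ω; ℝᵏ)`. -/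
def MemLinfRnd {k : ℕ} (μ : Measure Ω) (F : Filtration ℝ mΩ) (s : ℝ)
    (ξ : Ω → Fin k → ℝ) : Prop :=
  (∀ i, Measurable[F s] fun ω => ξ ω i) ∧ ∃ c : ℝ, ∀ᵐ ω ∂μ, enorm2 (ξ ω) ≤ c

/-- scalar `φ ∈ L^∞_𝔽(Ω; L¹(a,b; ℝ))`. -/
def ScalMemLinfL1 (μ : Measure Ω) (F : Filtration ℝ mΩ) (a b : ℝ) (φ : ℝ → Ω → ℝ) : Prop :=
  (∀ t, Measurable[F t] (φ t)) ∧
  (Measurable fun p : ℝ × Ω => φ p.1 p.2) ∧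
  ∃ c : ℝ, ∀ᵐ ω ∂μ, IntegrableOn (fun r => |φ r ω|) (Icc a b) ∧
    (∫ r in a..b, |φ r ω|) ≤ c

/-- scalar `φ ∈ L^∞_𝔽(Ω; L²(a,b; ℝ))`. -/
def ScalMemLinfL2 (μ : Measure Ω) (F : Filtration ℝ mΩ) (a b : ℝ) (φ : ℝ → Ω → ℝ) : Prop :=
  (∀ t, Measurable[F t] (φ t)) ∧
  (Measurable fun p : ℝ × Ω => φ p.1 p.2) ∧
  ∃ c : ℝ, ∀ᵐ ω ∂μ, IntegrableOn (fun r => (φ r ω) ^ 2) (Icc a b) ∧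
    (∫ r in a..b, (φ r ω) ^ 2) ≤ c

/-- scalar `φ ∈ L^p_𝔽(Ω; L²(a,b; ℝ))` for all `p ≥ 1`. -/
def ScalMemLpAllL2 (μ : Measure Ω) (F : Filtration ℝ mΩ) (a b : ℝ) (φ : ℝ → Ω → ℝ) : Prop :=
  (∀ t, Measurable[F t] (φ t)) ∧
  (Measurable fun p : ℝ × Ω => φ p.1 p.2) ∧
  (∀ᵐ ω ∂μ, IntegrableOn (fun r => (φ r ω) ^ 2) (Icc a b)) ∧
  ∀ p : ℝ, 1 ≤ p →
    (∫⁻ ω, ENNReal.ofReal ((∫ r in a..b, (φ r ω) ^ 2) ^ (p / 2)) ∂μ) < ⊤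

/-- scalar `φ ∈ L^∞_𝔽(Ω; C([a,b]; ℝ))`. -/
def ScalMemLinfC (μ : Measure Ω) (F : Filtration ℝ mΩ) (a b : ℝ) (φ : ℝ → Ω → ℝ) : Prop :=
  (∀ t ∈ Icc a b, Measurable[F t] (φ t)) ∧
  (∀ᵐ ω ∂μ, ContinuousOn (fun t => φ t ω) (Icc a b)) ∧
  ∃ c : ℝ, ∀ᵐ ω ∂μ, ∀ t ∈ Icc a b, |φ t ω| ≤ c

/-- `X ∈ L²_𝔽(Ω; C([s,T]; ℝ^{n×n}))` (columnwise). -/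
def MatMemL2C {n : ℕ} (μ : Measure Ω) (F : Filtration ℝ mΩ) (s T : ℝ)
    (X : ℝ → Ω → Matrix (Fin n) (Fin n) ℝ) : Prop :=
  ∀ j, VecMemL2C μ F s T (fun t ω i => X t ω i j)

/-- `X` solves the linear matrix SDE `dX = 𝒜 X dt + 𝒞 X dW` on `[s,T]`, `X(s) = X₀`
(equivalently, every column of `X` solves the corresponding vector SDE). -/
def SolvesLinMatSDE {n : ℕ} (μ : Measure Ω) (F : Filtration ℝ mΩ) (W : ℝ → Ω → ℝ) (s T : ℝ)
    (𝒜 𝒞 : ℝ → Ω → Matrix (Fin n) (Fin n) ℝ) (X₀ : Matrix (Fin n) (Fin n) ℝ)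
    (X : ℝ → Ω → Matrix (Fin n) (Fin n) ℝ) : Prop :=
  ∀ j, SolvesSDE μ F W s T
    (fun r ω => 𝒜 r ω *ᵥ fun i => X r ω i j)
    (fun r ω => 𝒞 r ω *ᵥ fun i => X r ω i j)
    (fun _ω i => X₀ i j)
    (fun t ω i => X t ω i j)

/-- `(Y,Z)` solves the matrix BSDE `dY = f dt + Z dW` on `[s,T]`, `Y(T) = ξ` (columnwise). -/
def SolvesMatBSDE {n : ℕ} (μ : Measure Ω) (F : Filtration ℝ mΩ) (W : ℝ → Ω → ℝ) (s T : ℝ)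
    (f : ℝ → Ω → Matrix (Fin n) (Fin n) ℝ) (ξ : Ω → Matrix (Fin n) (Fin n) ℝ)
    (Y Z : ℝ → Ω → Matrix (Fin n) (Fin n) ℝ) : Prop :=
  ∀ j, SolvesBSDE μ F W s T
    (fun t ω i => f t ω i j) (fun ω i => ξ ω i j)
    (fun t ω i => Y t ω i j) (fun t ω i => Z t ω i j)

/-- `(P,Λ)` solves the scalar Riccati equation
`dP = (R+P)⁻¹ Λ² dt + Λ dW` on `[0,T]`, `P(T) = G`. -/
def SolvesScalarRiccati (μ : Measure Ω) (F : Filtration ℝ mΩ) (W : ℝ → Ω → ℝ) (T : ℝ)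
    (Rv : ℝ) (G : Ω → ℝ) (P Λ : ℝ → Ω → ℝ) : Prop :=
  (∀ t ∈ Icc (0:ℝ) T, Measurable[F t] (P t)) ∧
  (∀ᵐ ω ∂μ, ContinuousOn (fun t => P t ω) (Icc 0 T)) ∧
  (∀ᵐ ω ∂μ, IntegrableOn (fun r => (Rv + P r ω)⁻¹ * (Λ r ω) ^ 2) (Icc 0 T)) ∧
  ∃ M : ℝ → Ω → ℝ, IsItoInt μ F W 0 T Λ M ∧
    ∀ᵐ ω ∂μ, ∀ t ∈ Icc (0:ℝ) T,
      P t ω = G ω - (∫ r in t..T, (Rv + P r ω)⁻¹ * (Λ r ω) ^ 2) - (M T ω - M t ω)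

end SLQ
/-! ### Partitions and Riemann sums -/

namespace SLQ

/-- The points `k T / n` of the uniform partition of `[0,T]` into `n` pieces. -/
def tk (T : ℝ) (n k : ℕ) : ℝ := k * T / n

lemma tk_zero (T : ℝ) (n : ℕ) : tk T n 0 = 0 := by simp [tk]

lemma tk_self (T : ℝ) {n : ℕ} (hn : 0 < n) : tk T n n = T := by
  have : (n : ℝ) ≠ 0 := by positivity
  simp [tk]; field_simp

lemma tk_mono {T : ℝ} (hT : 0 < T) (n : ℕ) {j k : ℕ} (h : j ≤ k) : tk T n j ≤ tk T n k := by
  unfold tk; gcongr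

lemma tk_succ_sub (T : ℝ) (n k : ℕ) : tk T n (k + 1) - tk T n k = T / n := by
  simp only [tk]; push_cast; ring

lemma tk_mem {T : ℝ} (hT : 0 < T) {n k : ℕ} (h : k ≤ n) : tk T n k ∈ Icc (0 : ℝ) T := by
  rcases Nat.eq_zero_or_pos n with rfl | hn
  · simp [tk, hT.le]
  · exact ⟨by unfold tk; positivity, by simpa [tk_self T hn] using tk_mono hT n h⟩

/-- The index of the partition interval that contains `r`. -/
def idx (T : ℝ) (n : ℕ) (r : ℝ) : ℕ := ⌊r * n / T⌋₊

lemma idx_eq {T : ℝ} (hT : 0 < T) {n : ℕ} (hn : 0 < n) {k : ℕ} {r : ℝ}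
    (hr : r ∈ Ioo (tk T n k) (tk T n (k + 1))) : idx T n r = k := by
  have hn' : (0 : ℝ) < n := by positivity
  obtain ⟨h1, h2⟩ := hr
  unfold tk at h1 h2
  rw [div_lt_iff₀ hn'] at h1
  rw [lt_div_iff₀ hn'] at h2
  have h0 : 0 ≤ r * n / T := by
    apply div_nonneg _ hT.le
    have : 0 ≤ (k : ℝ) * T := by positivity
    linarith
  rw [idx, Nat.floor_eq_iff h0, le_div_iff₀ hT, div_lt_iff₀ hT]
  push_cast at h2
  exact ⟨h1.le, h2⟩

lemma idx_lt {T : ℝ} (hT : 0 < T) {n : ℕ} (hn : 0 < n) {r : ℝ} (hr : r ∈ Ioo 0 T) :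
    idx T n r < n := by
  have hn' : (0 : ℝ) < n := by positivity
  rw [idx, Nat.floor_lt (div_nonneg (mul_nonneg hr.1.le hn'.le) hT.le), div_lt_iff₀ hT, mul_comm]
  exact mul_lt_mul_of_pos_left hr.2 hn'

lemma tk_idx_le {T : ℝ} (hT : 0 < T) {n : ℕ} (hn : 0 < n) {r : ℝ} (hr : 0 ≤ r) :
    tk T n (idx T n r) ≤ r := by
  have hn' : (0 : ℝ) < n := by positivity
  have := Nat.floor_le (div_nonneg (mul_nonneg hr hn'.le) hT.le)
  rw [le_div_iff₀ hT] at this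
  rw [tk, idx, div_le_iff₀ hn']
  exact this

lemma lt_tk_idx {T : ℝ} (hT : 0 < T) {n : ℕ} (hn : 0 < n) {r : ℝ} :
    r < tk T n (idx T n r + 1) := by
  have hn' : (0 : ℝ) < n := by positivity
  have := Nat.lt_floor_add_one (r * n / T)
  rw [div_lt_iff₀ hT] at this
  rw [tk, idx, lt_div_iff₀ hn']
  push_cast
  exact this

lemma tendsto_mesh (T : ℝ) : Tendsto (fun n : ℕ => T / n) atTop (nhds 0) :=
  tendsto_const_div_atTop_nhds_zero_nat T

lemma tendsto_tk_idx {T : ℝ} (hT : 0 < T) {r : ℝ} (hr : 0 ≤ r) :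
    Tendsto (fun n => tk T n (idx T n r)) atTop (nhds r) := by
  have h : Tendsto (fun n : ℕ => r - T / n) atTop (nhds r) := by
    simpa using (tendsto_mesh T).const_sub r
  refine tendsto_of_tendsto_of_tendsto_of_le_of_le' h tendsto_const_nhds ?_ ?_
  · filter_upwards [eventually_gt_atTop 0] with n hn
    have h1 := lt_tk_idx hT hn (r := r)
    have h2 := tk_succ_sub T n (idx T n r)
    linarith
  · filter_upwards [eventually_gt_atTop 0] with n hn using tk_idx_le hT hn hr

lemma tendsto_tk_idx_succ {T : ℝ} (hT : 0 < T) {r : ℝ} (hr : 0 ≤ r) :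
    Tendsto (fun n => tk T n (idx T n r + 1)) atTop (nhds r) := by
  have h := (tendsto_tk_idx hT hr).add (tendsto_mesh T)
  rw [add_zero] at h
  refine h.congr fun n => ?_
  have h2 := tk_succ_sub T n (idx T n r)
  linarith

/-- Left-point style sums `∑ Zₖ ∫_{tₖ}^{tₖ₊₁} f` converge to `∫ z f` as soon as the bounded weights,
read as step functions, converge to `z` almost everywhere. -/
lemma tendsto_sum_mul_integral {T : ℝ} (hT : 0 < T) {f : ℝ → ℝ} (hf : IntegrableOn f (Icc 0 T))
    (Z : ℕ → ℕ → ℝ) (c : ℝ) (hZ : ∀ n k, k < n → |Z n k| ≤ c) (z : ℝ → ℝ)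
    (hz : ∀ᵐ r, r ∈ Ioo 0 T → Tendsto (fun n => Z n (idx T n r)) atTop (nhds (z r))) :
    Tendsto (fun n => ∑ k ∈ Finset.range n, Z n k * ∫ r in tk T n k..tk T n (k + 1), f r) atTop
      (nhds (∫ r in (0 : ℝ)..T, z r * f r)) := by
  have hII : ∀ a ∈ Icc 0 T, ∀ b ∈ Icc 0 T, IntervalIntegrable f volume a b := by
    intro a ha b hb
    exact (hf.mono_set (uIcc_subset_Icc ha hb)).intervalIntegrable
  have hne : ∀ᵐ r : ℝ, r ≠ T := by simp [ae_iff]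
  have key : ∀ n : ℕ, 0 < n → ∫ r in (0 : ℝ)..T, Z n (idx T n r) * f r
      = ∑ k ∈ Finset.range n, Z n k * ∫ r in tk T n k..tk T n (k + 1), f r := by
    intro n hn
    have hae : ∀ k, ∀ᵐ r, r ∈ uIoc (tk T n k) (tk T n (k + 1)) →
        Z n k * f r = Z n (idx T n r) * f r := by
      intro k
      have : ∀ᵐ r : ℝ, r ≠ tk T n (k + 1) := by simp [ae_iff]
      filter_upwards [this] with r hr hr'
      rw [uIoc_of_le (tk_mono hT n (Nat.le_succ k))] at hr'
      rw [idx_eq hT hn ⟨hr'.1, lt_of_le_of_ne hr'.2 hr⟩]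
    have hint : ∀ k < n, IntervalIntegrable (fun r => Z n (idx T n r) * f r) volume
        (tk T n k) (tk T n (k + 1)) := by
      intro k hk
      have h0 := (hII _ (tk_mem hT hk.le) _ (tk_mem hT (Nat.succ_le_of_lt hk))).const_mul (Z n k)
      refine h0.congr_ae ?_
      rw [EventuallyEq, ae_restrict_iff' measurableSet_uIoc]
      exact hae k
    have hs := intervalIntegral.sum_integral_adjacent_intervals (a := fun k => tk T n k) hint
    simp only [tk_zero, tk_self T hn] at hs
    rw [← hs]
    refine Finset.sum_congr rfl fun k _ => ?_
    rw [← intervalIntegral.integral_const_mul]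
    refine (intervalIntegral.integral_congr_ae (hae k)).symm
  have main : Tendsto (fun n => ∫ r in (0 : ℝ)..T, Z n (idx T n r) * f r) atTop
      (nhds (∫ r in (0 : ℝ)..T, z r * f r)) := by
    refine intervalIntegral.tendsto_integral_filter_of_dominated_convergence
      (fun r => c * ‖f r‖) ?_ ?_ ?_ ?_
    · refine Eventually.of_forall fun n => ?_
      have h1 : Measurable fun r => Z n (idx T n r) := by
        unfold idx
        exact (measurable_from_nat (f := Z n)).comp
          (Nat.measurable_floor.comp (by fun_prop))
      have h2 := (hII 0 ⟨le_rfl, hT.le⟩ T ⟨hT.le, le_rfl⟩).def'.aestronglyMeasurable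
      exact h1.aestronglyMeasurable.mul h2
    · filter_upwards [eventually_gt_atTop 0] with n hn
      filter_upwards [hne] with r hr hr'
      rw [uIoc_of_le hT.le] at hr'
      rw [norm_mul]
      exact mul_le_mul_of_nonneg_right
        (hZ n _ (idx_lt hT hn ⟨hr'.1, lt_of_le_of_ne hr'.2 hr⟩)) (norm_nonneg _)
    · exact ((hII 0 ⟨le_rfl, hT.le⟩ T ⟨hT.le, le_rfl⟩).norm).const_mul c
    · filter_upwards [hne, hz] with r hr hzr hr'
      rw [uIoc_of_le hT.le] at hr'
      exact (hzr ⟨hr'.1, lt_of_le_of_ne hr'.2 hr⟩).mul_const _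
  refine main.congr' ?_
  filter_upwards [eventually_gt_atTop 0] with n hn using key n hn

/-- Averages over the partition interval preceding the one containing `r` recover the function
almost everywhere (Lebesgue differentiation). -/
lemma ae_tendsto_avg {T : ℝ} (hT : 0 < T) {f : ℝ → ℝ} (hf : IntegrableOn f (Icc 0 T)) :
    ∀ᵐ r, r ∈ Ioo 0 T → Tendsto (fun n : ℕ => (n / T) *
      ((∫ x in (0 : ℝ)..tk T n (idx T n r), f x) - ∫ x in (0 : ℝ)..tk T n (idx T n r - 1), f x))
      atTop (nhds (f r)) := by
  have hloc : LocallyIntegrable ((Icc 0 T).indicator f) volume :=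
    ((integrable_indicator_iff measurableSet_Icc).2 hf).locallyIntegrable
  filter_upwards [IsUnifLocDoublingMeasure.ae_tendsto_average (volume : Measure ℝ) hloc 3]
    with r hr hr0
  have h := hr (l := atTop) (fun n : ℕ => tk T n (idx T n r) - T / n / 2)
    (fun n : ℕ => T / n / 2) ?_ ?_
  · rw [indicator_of_mem (show r ∈ Icc 0 T from ⟨hr0.1.le, hr0.2.le⟩)] at h
    refine h.congr' ?_
    have hk1 : ∀ᶠ n : ℕ in atTop, 1 ≤ idx T n r := by
      have : ∀ᶠ n : ℕ in atTop, T / n < r := (tendsto_mesh T).eventually_lt_const hr0.1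
      filter_upwards [this, eventually_gt_atTop 0] with n h1 hn
      have hn' : (0 : ℝ) < n := by positivity
      rw [idx, Nat.one_le_floor_iff, le_div_iff₀ hT]
      rw [div_lt_iff₀ hn'] at h1
      linarith
    filter_upwards [hk1, eventually_gt_atTop 0] with n hk hn
    have hn' : (0 : ℝ) < n := by positivity
    obtain ⟨j, hj⟩ : ∃ j, idx T n r = j + 1 := ⟨idx T n r - 1, by omega⟩
    have hlt := idx_lt hT hn hr0
    rw [hj] at hlt ⊢
    have hs := tk_succ_sub T n j
    rw [Real.closedBall_eq_Icc]
    have e1 : tk T n (j + 1) - T / n / 2 - T / n / 2 = tk T n j := by linarith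
    have e2 : tk T n (j + 1) - T / n / 2 + T / n / 2 = tk T n (j + 1) := by linarith
    rw [e1, e2]
    have m1 := tk_mem hT hlt.le
    have m0 := tk_mem hT (show j ≤ n by omega)
    have hII : ∀ a ∈ Icc 0 T, ∀ b ∈ Icc 0 T, IntervalIntegrable f volume a b := by
      intro a ha b hb
      exact (hf.mono_set (uIcc_subset_Icc ha hb)).intervalIntegrable
    have z0 : (0 : ℝ) ∈ Icc 0 T := ⟨le_rfl, hT.le⟩
    rw [Nat.add_sub_cancel, intervalIntegral.integral_interval_sub_left (hII _ z0 _ m1)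
      (hII _ z0 _ m0), setAverage_eq, integral_Icc_eq_integral_Ioc,
      ← intervalIntegral.integral_of_le (tk_mono hT n (Nat.le_succ j))]
    have hv : volume.real (Icc (tk T n j) (tk T n (j + 1))) = T / n := by
      rw [Real.volume_real_Icc, hs]
      exact max_eq_left (by positivity)
    rw [hv, smul_eq_mul, inv_div]
    congr 1
    refine intervalIntegral.integral_congr fun x hx => ?_
    rw [indicator_of_mem]
    exact uIcc_subset_Icc m0 m1 hx
  · rw [tendsto_nhdsWithin_iff]
    refine ⟨by simpa using (tendsto_mesh T).div_const 2, ?_⟩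
    filter_upwards [eventually_gt_atTop 0] with n hn
    have hn' : (0 : ℝ) < n := by positivity
    exact mem_Ioi.2 (by positivity)
  · filter_upwards [eventually_gt_atTop 0] with n hn
    have h1 := tk_idx_le hT hn hr0.1.le
    have h2 := lt_tk_idx hT hn (r := r)
    have h3 := tk_succ_sub T n (idx T n r)
    rw [Real.closedBall_eq_Icc]
    constructor <;> linarith

end SLQ

/-! ### Martingales and Brownian increments -/

namespace SLQ

variable {Ω : Type} {mΩ : MeasurableSpace Ω}

lemma integral_mul_eq_condExp_mul {μ : Measure Ω} [IsFiniteMeasure μ] {m : MeasurableSpace Ω}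
    (hm : m ≤ mΩ) {u v : Ω → ℝ} (hv : AEStronglyMeasurable[m] v μ)
    (huv : Integrable (fun ω => u ω * v ω) μ) (hu : Integrable u μ) :
    ∫ ω, u ω * v ω ∂μ = ∫ ω, (μ[u | m]) ω * v ω ∂μ := by
  rw [← integral_condExp hm]
  exact integral_congr_ae (condExp_mul_of_aestronglyMeasurable_right hv huv hu)

/-- The time integral over `[0,t]` of an adapted jointly measurable process is, up to a null set,
`F t`-measurable.  No progressive measurability is needed: by Fubini and the self-adjointness of
the conditional expectation, the integral agrees with its conditional expectation. -/
lemma aestronglyMeasurable_integral (μ : Measure Ω) [IsProbabilityMeasure μ]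
    (F : Filtration ℝ mΩ) {φ : ℝ → Ω → ℝ} (hφ : ∀ t, Measurable[F t] (φ t)) {t : ℝ} (ht : 0 ≤ t)
    (hint : Integrable (fun p : ℝ × Ω => φ p.1 p.2)
      (((volume : Measure ℝ).restrict (Ioc 0 t)).prod μ)) :
    AEStronglyMeasurable[F t] (fun ω => ∫ r in (0 : ℝ)..t, φ r ω) μ := by
  simp only [intervalIntegral.integral_of_le ht]
  set Y : Ω → ℝ := fun ω => ∫ r in Ioc 0 t, φ r ω with hY
  have hYi : Integrable Y μ := hint.integral_prod_right
  have hm := F.le t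
  suffices h : Y =ᵐ[μ] μ[Y | F t] from
    ⟨_, stronglyMeasurable_condExp, h⟩
  refine Integrable.ae_eq_of_forall_setIntegral_eq _ _ hYi integrable_condExp fun s hs _ => ?_
  set o : Ω → ℝ := s.indicator 1 with ho
  set q : Ω → ℝ := μ[o | F t] with hq
  have hoi : Integrable o μ := (integrable_const (1 : ℝ)).indicator hs
  have ho1 : ∀ ω, ‖o ω‖ ≤ 1 := fun ω => by
    by_cases h : ω ∈ s <;> simp [ho, h]
  have hq1 : ∀ᵐ ω ∂μ, ‖q ω‖ ≤ 1 := by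
    exact ae_bdd_abs_condExp_of_ae_bdd_abs (m := F t) (R := 1)
      (Eventually.of_forall (f := ae μ) ho1)
  have hqm : AEStronglyMeasurable q μ := integrable_condExp.aestronglyMeasurable
  have hset : ∀ f : Ω → ℝ, ∫ ω in s, f ω ∂μ = ∫ ω, o ω * f ω ∂μ := by
    intro f
    rw [← integral_indicator hs]
    refine integral_congr_ae (Eventually.of_forall fun ω => ?_)
    by_cases h : ω ∈ s <;> simp [ho, h]
  have hcond : Integrable (μ[Y | F t]) μ := integrable_condExp
  rw [hset, hset]
  have stepC : ∫ ω, o ω * (μ[Y | F t]) ω ∂μ = ∫ ω, q ω * Y ω ∂μ := by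
    rw [integral_mul_eq_condExp_mul hm stronglyMeasurable_condExp.aestronglyMeasurable
      (hcond.bdd_mul hoi.aestronglyMeasurable (Eventually.of_forall ho1)) hoi]
    have := integral_mul_eq_condExp_mul (u := Y) (v := q) (μ := μ) hm
      stronglyMeasurable_condExp.aestronglyMeasurable
      ((hYi.bdd_mul hqm hq1).congr (Eventually.of_forall fun ω => mul_comm _ _)) hYi
    simp only [mul_comm (Y _)] at this
    rw [this]
    simp only [mul_comm, hq]
  have fub : ∀ v : Ω → ℝ, AEStronglyMeasurable v μ → (∀ᵐ ω ∂μ, ‖v ω‖ ≤ 1) →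
      ∫ ω, v ω * Y ω ∂μ = ∫ r in Ioc 0 t, ∫ ω, v ω * φ r ω ∂μ := by
    intro v hv hv1
    have hi : Integrable (fun p : ℝ × Ω => v p.2 * φ p.1 p.2)
        (((volume : Measure ℝ).restrict (Ioc 0 t)).prod μ) := by
      refine hint.bdd_mul (c := 1) hv.comp_snd ?_
      exact Measure.quasiMeasurePreserving_snd.ae hv1
    rw [integral_integral_swap (f := fun r ω => v ω * φ r ω) hi]
    refine integral_congr_ae (Eventually.of_forall fun ω => ?_)
    simp only [hY]
    rw [integral_const_mul]
  rw [stepC, fub o hoi.aestronglyMeasurable (Eventually.of_forall ho1), fub q hqm hq1]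
  refine integral_congr_ae ?_
  filter_upwards [hint.prod_right_ae, ae_restrict_mem measurableSet_Ioc] with r hr hrt
  exact integral_mul_eq_condExp_mul hm
    ((hφ r).mono (F.mono hrt.2) le_rfl).aestronglyMeasurable
    (hr.bdd_mul hoi.aestronglyMeasurable (Eventually.of_forall ho1)) hoi

section Martingale

variable {μ : Measure Ω} [IsProbabilityMeasure μ] {F : Filtration ℝ mΩ} {W : ℝ → Ω → ℝ}

lemma MartOn.integral_mul {T : ℝ} {M : ℝ → Ω → ℝ} (hM : MartOn μ F 0 T M) {s t : ℝ}
    (hs : 0 ≤ s) (hst : s ≤ t) (ht : t ≤ T) {Z : Ω → ℝ} (hZ : AEStronglyMeasurable[F s] Z μ)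
    (hi : Integrable (fun ω => M t ω * Z ω) μ) :
    ∫ ω, M t ω * Z ω ∂μ = ∫ ω, M s ω * Z ω ∂μ := by
  rw [integral_mul_eq_condExp_mul (F.le s) hZ hi (hM.2.1 t ⟨hs.trans hst, ht⟩)]
  refine integral_congr_ae ?_
  filter_upwards [hM.2.2 s t hs hst ht] with ω h
  rw [h]

lemma IsBrownian.memLp_sub (hW : IsBrownian μ F W) {s t : ℝ} (hs : 0 ≤ s) (hst : s ≤ t) :
    MemLp (fun ω => W t ω - W s ω) 2 μ := by
  have hm : AEMeasurable (fun ω => W t ω - W s ω) μ :=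
    (((hW.meas t).mono (F.le t) le_rfl).sub ((hW.meas s).mono (F.le s) le_rfl)).aemeasurable
  have h := memLp_id_gaussianReal' (μ := 0) (v := Real.toNNReal (t - s)) 2 (by simp)
  rw [← hW.gauss s t hs hst, memLp_map_measure_iff (by fun_prop) hm] at h
  exact h

lemma IsBrownian.memLp (hW : IsBrownian μ F W) {t : ℝ} (ht : 0 ≤ t) : MemLp (W t) 2 μ := by
  refine (hW.memLp_sub le_rfl ht).ae_eq ?_
  filter_upwards [hW.start] with ω h
  simp [h]

/-- Increments of `W` are independent of the past, in the form of an integral identity. -/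
lemma IsBrownian.integral_mul (hW : IsBrownian μ F W) {s t : ℝ} (hs : 0 ≤ s) (hst : s ≤ t)
    {Z : Ω → ℝ} (hZ : AEStronglyMeasurable[F s] Z μ) {f : ℝ → ℝ} (hf : Measurable f) :
    ∫ ω, f (W t ω - W s ω) * Z ω ∂μ
      = (∫ x, f x ∂(gaussianReal 0 (Real.toNNReal (t - s)))) * ∫ ω, Z ω ∂μ := by
  obtain ⟨Z', hZ', hZe⟩ := hZ
  have hm : Measurable (fun ω => W t ω - W s ω) :=
    (((hW.meas t).mono (F.le t) le_rfl).sub ((hW.meas s).mono (F.le s) le_rfl))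
  have hind : IndepFun (fun ω => W t ω - W s ω) Z' μ := by
    rw [IndepFun_iff_Indep]
    have h := hW.indep s t hs hst
    refine indep_of_indep_of_le_right (by rwa [← (inferInstance : BorelSpace ℝ).measurable_eq] at h) ?_
    exact hZ'.measurable.comap_le
  have hind' : IndepFun (fun ω => f (W t ω - W s ω)) Z' μ := hind.comp hf measurable_id
  have e1 : ∫ ω, f (W t ω - W s ω) * Z ω ∂μ = ∫ ω, f (W t ω - W s ω) * Z' ω ∂μ := by
    refine integral_congr_ae ?_
    filter_upwards [hZe] with ω h
    rw [h]
  rw [e1, integral_congr_ae hZe, hind'.integral_fun_mul_eq_mul_integral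
    (hf.comp hm).aestronglyMeasurable (hZ'.mono (F.le s)).aestronglyMeasurable,
    ← hW.gauss s t hs hst, integral_map hm.aemeasurable hf.aestronglyMeasurable]

lemma IsBrownian.integral_sub_mul (hW : IsBrownian μ F W) {s t : ℝ} (hs : 0 ≤ s) (hst : s ≤ t)
    {Z : Ω → ℝ} (hZ : AEStronglyMeasurable[F s] Z μ) :
    ∫ ω, (W t ω - W s ω) * Z ω ∂μ = 0 := by
  have h := hW.integral_mul hs hst hZ measurable_id
  simp only [id, integral_id_gaussianReal, zero_mul] at h
  exact h

lemma IsBrownian.integral_sub_sq_mul (hW : IsBrownian μ F W) {s t : ℝ} (hs : 0 ≤ s) (hst : s ≤ t)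
    {Z : Ω → ℝ} (hZ : AEStronglyMeasurable[F s] Z μ) :
    ∫ ω, (W t ω - W s ω) ^ 2 * Z ω ∂μ = (t - s) * ∫ ω, Z ω ∂μ := by
  have h := hW.integral_mul hs hst hZ (f := fun x => x ^ 2) (by fun_prop)
  have hv := variance_eq_sub (X := id) (μ := gaussianReal 0 (Real.toNNReal (t - s)))
    (memLp_id_gaussianReal' 2 (by simp))
  rw [variance_id_gaussianReal] at hv
  simp only [Pi.pow_apply, id, integral_id_gaussianReal] at hv
  have hv' : ∫ x, x ^ 2 ∂gaussianReal 0 (Real.toNNReal (t - s)) = t - s := by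
    rw [Real.coe_toNNReal _ (sub_nonneg.2 hst)] at hv
    linarith
  rw [h, hv']

/-- The covariation of `N` and `W` over one step, tested against a bounded variable known at the
start of the step. -/
lemma integral_cov {T : ℝ} (hW : IsBrownian μ F W) {N J : ℝ → Ω → ℝ} (hN : MartOn μ F 0 T N)
    (hN2 : ∀ t ∈ Icc 0 T, MemLp (N t) 2 μ)
    (hNW : MartOn μ F 0 T (fun t ω => N t ω * W t ω - J t ω))
    {s t : ℝ} (hs : 0 ≤ s) (hst : s ≤ t) (ht : t ≤ T) {Z : Ω → ℝ}
    (hZ : AEStronglyMeasurable[F s] Z μ) {c : ℝ} (hc : ∀ᵐ ω ∂μ, ‖Z ω‖ ≤ c) :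
    ∫ ω, (N t ω - N s ω) * (W t ω - W s ω) * Z ω ∂μ
      = ∫ ω, (J t ω - J s ω) * Z ω ∂μ := by
  have ht0 : 0 ≤ t := hs.trans hst
  have ms : s ∈ Icc 0 T := ⟨hs, hst.trans ht⟩
  have mt : t ∈ Icc 0 T := ⟨ht0, ht⟩
  have hZ' : AEStronglyMeasurable Z μ := hZ.mono (F.le s)
  have bdd : ∀ {f : Ω → ℝ}, Integrable f μ → Integrable (fun ω => f ω * Z ω) μ := fun hf =>
    (hf.bdd_mul hZ' hc).congr (Eventually.of_forall fun ω => mul_comm _ _)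
  have hWs := hW.memLp hs
  have hWt := hW.memLp ht0
  have hNs := hN2 s ms
  have hNt := hN2 t mt
  have itt : Integrable (fun ω => N t ω * W t ω) μ := hNt.integrable_mul hWt
  have iss : Integrable (fun ω => N s ω * W s ω) μ := hNs.integrable_mul hWs
  have its : Integrable (fun ω => N t ω * W s ω) μ := hNt.integrable_mul hWs
  have ist : Integrable (fun ω => N s ω * (W t ω - W s ω)) μ :=
    hNs.integrable_mul (hW.memLp_sub hs hst)
  have e1 := hNW.integral_mul hs hst ht hZ (bdd (hNW.2.1 t mt))
  have e2 : ∫ ω, (W t ω - W s ω) * (N s ω * Z ω) ∂μ = 0 :=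
    hW.integral_sub_mul hs hst ((hN.1 s ms).aestronglyMeasurable.mul hZ)
  have e3 : ∫ ω, N t ω * (W s ω * Z ω) ∂μ = ∫ ω, N s ω * (W s ω * Z ω) ∂μ :=
    hN.integral_mul hs hst ht ((hW.meas s).aestronglyMeasurable.mul hZ)
      ((bdd its).congr (Eventually.of_forall fun ω => by ring))
  have iGt : Integrable (fun ω => J t ω) μ :=
    (itt.sub (hNW.2.1 t mt)).congr (Eventually.of_forall fun ω => by simp)
  have iGs : Integrable (fun ω => J s ω) μ :=
    (iss.sub (hNW.2.1 s ms)).congr (Eventually.of_forall fun ω => by simp)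
  simp only [sub_mul] at e1
  rw [integral_sub (bdd itt) (bdd iGt), integral_sub (bdd iss) (bdd iGs)] at e1
  simp only [sub_mul _ _ (Z _)]
  rw [integral_sub (bdd iGt) (bdd iGs)]
  have e0 : ∫ ω, (N t ω - N s ω) * (W t ω - W s ω) * Z ω ∂μ
      = (∫ ω, N t ω * W t ω * Z ω ∂μ) - (∫ ω, N t ω * (W s ω * Z ω) ∂μ)
        - ∫ ω, (W t ω - W s ω) * (N s ω * Z ω) ∂μ := by
    rw [← integral_sub (bdd itt), ← integral_sub]
    · refine integral_congr_ae (Eventually.of_forall fun ω => ?_)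
      simp only; ring
    · refine ((bdd itt).sub (bdd its)).congr (Eventually.of_forall fun ω => ?_)
      simp only [Pi.sub_apply]; ring
    · exact (bdd ist).congr (Eventually.of_forall fun ω => by ring)
    · exact (bdd its).congr (Eventually.of_forall fun ω => by ring)
  have e4 : ∫ ω, N s ω * (W s ω * Z ω) ∂μ = ∫ ω, N s ω * W s ω * Z ω ∂μ :=
    integral_congr_ae (Eventually.of_forall fun ω => by ring)
  rw [e0, e2, e3, e4]
  linarith

end Martingale

end SLQ

/-! ### The discretised energy along one path -/

namespace SLQ

/-- The increment of the primitive of `f` over the `k`-th partition interval. -/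
def incr (T : ℝ) (n k : ℕ) (f : ℝ → ℝ) : ℝ :=
  (∫ r in (0 : ℝ)..tk T n (k + 1), f r) - ∫ r in (0 : ℝ)..tk T n k, f r

/-- Truncation of a real number to `[-b,b]`. -/
def clip (b x : ℝ) : ℝ := max (-b) (min b x)

lemma abs_clip_le {b : ℝ} (hb : 0 ≤ b) (x : ℝ) : |clip b x| ≤ b := by
  unfold clip
  rw [abs_le]
  exact ⟨le_max_left _ _, max_le (by linarith) (min_le_left _ _)⟩

lemma abs_clip_le_abs {b : ℝ} (hb : 0 ≤ b) (x : ℝ) : |clip b x| ≤ |x| := by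
  unfold clip
  rw [abs_le]
  have h1 := neg_abs_le x
  have h2 := le_abs_self x
  have h3 := abs_nonneg x
  constructor
  · rcases le_total b x with h | h
    · rw [min_eq_left h]; exact le_max_of_le_right (by linarith)
    · rw [min_eq_right h]; exact le_max_of_le_right h1
  · exact max_le (by linarith) ((min_le_right _ _).trans h2)

lemma clip_eq_self {b x : ℝ} (h : |x| ≤ b) : clip b x = x := by
  obtain ⟨h1, h2⟩ := abs_le.1 h
  rw [clip, min_eq_right h2, max_eq_right h1]

lemma continuous_clip (b : ℝ) : Continuous (clip b) := by
  unfold clip; fun_prop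

/-- The weight `β t = exp (∫₀ᵗ γ)`. -/
def wt (γ : ℝ → ℝ) (t : ℝ) : ℝ := Real.exp (∫ r in (0 : ℝ)..t, γ r)

/-- The predictable step approximation of `Γ` on the `k`-th interval: the truncated average of `Γ`
over the preceding interval (and `0` for `k = 0`). -/
def avg (T b : ℝ) (n k : ℕ) (Γ : ℝ → ℝ) : ℝ :=
  clip b ((n / T) * ((∫ r in (0 : ℝ)..tk T n k, Γ r) - ∫ r in (0 : ℝ)..tk T n (k - 1), Γ r))

/-- The pathwise properties used in the energy estimate: `dX = -g dt + dN` with `X(T) = 0`, `X`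
continuous and bounded by `c`, and bounds on the time integrals of `γ`, `g` and `Γ²`. -/
structure GoodPath (T : ℝ) (X N g Γ γ : ℝ → ℝ) (y c : ℝ) : Prop where
  cont : ContinuousOn X (Icc 0 T)
  bdd : ∀ t ∈ Icc 0 T, |X t| ≤ c
  γ0 : ∀ t, 0 ≤ γ t
  γi : IntegrableOn γ (Icc 0 T)
  γc : (∫ r in (0 : ℝ)..T, γ r) ≤ c
  gi : IntegrableOn g (Icc 0 T)
  gy : (∫ r in (0 : ℝ)..T, |g r|) ≤ y
  Γi : IntegrableOn Γ (Icc 0 T)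
  Γ2i : IntegrableOn (fun r => Γ r ^ 2) (Icc 0 T)
  Γy : (∫ r in (0 : ℝ)..T, Γ r ^ 2) ≤ y
  eqn : ∀ t ∈ Icc 0 T, X t = X 0 - (∫ r in (0 : ℝ)..t, g r) + N t
  fin : X T = 0

/-- The discretised energy. -/
def energySum (T b : ℝ) (n : ℕ) (X g Γ γ : ℝ → ℝ) : ℝ :=
  ∑ k ∈ Finset.range n,
    (wt γ (tk T n k) * X (tk T n (k + 1)) ^ 2 * incr T n k γ
      - 2 * (wt γ (tk T n k) * X (tk T n k) * incr T n k g)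
      + 2 * (wt γ (tk T n k) * avg T b n k Γ * incr T n k Γ)
      - wt γ (tk T n k) * avg T b n k Γ ^ 2 * incr T n k (fun _ => 1))

lemma intervalIntegrable_of_mem {T : ℝ} {f : ℝ → ℝ} (hf : IntegrableOn f (Icc 0 T)) {a b : ℝ}
    (ha : a ∈ Icc 0 T) (hb : b ∈ Icc 0 T) : IntervalIntegrable f volume a b :=
  (hf.mono_set (uIcc_subset_Icc ha hb)).intervalIntegrable

lemma incr_eq {T : ℝ} (hT : 0 < T) {f : ℝ → ℝ} (hf : IntegrableOn f (Icc 0 T)) {n k : ℕ}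
    (hk : k < n) : incr T n k f = ∫ r in tk T n k..tk T n (k + 1), f r := by
  have z0 : (0 : ℝ) ∈ Icc 0 T := ⟨le_rfl, hT.le⟩
  exact intervalIntegral.integral_interval_sub_left
    (intervalIntegrable_of_mem hf z0 (tk_mem hT hk))
    (intervalIntegrable_of_mem hf z0 (tk_mem hT hk.le))

lemma tendsto_sum_incr {T : ℝ} (hT : 0 < T) {f : ℝ → ℝ} (hf : IntegrableOn f (Icc 0 T))
    (Z : ℕ → ℕ → ℝ) (c : ℝ) (hZ : ∀ n k, k < n → |Z n k| ≤ c) (z : ℝ → ℝ)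
    (hz : ∀ᵐ r, r ∈ Ioo 0 T → Tendsto (fun n => Z n (idx T n r)) atTop (nhds (z r))) :
    Tendsto (fun n => ∑ k ∈ Finset.range n, Z n k * incr T n k f) atTop
      (nhds (∫ r in (0 : ℝ)..T, z r * f r)) := by
  refine (tendsto_sum_mul_integral hT hf Z c hZ z hz).congr fun n => ?_
  exact Finset.sum_congr rfl fun k hk => by rw [incr_eq hT hf (Finset.mem_range.1 hk)]

lemma abs_incr_le {T : ℝ} (hT : 0 < T) {f : ℝ → ℝ} (hf : IntegrableOn f (Icc 0 T)) {n k : ℕ}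
    (hk : k < n) : |incr T n k f| ≤ incr T n k (fun r => |f r|) := by
  rw [incr_eq hT hf hk, incr_eq hT hf.abs hk]
  exact intervalIntegral.abs_integral_le_integral_abs (tk_mono hT n (Nat.le_succ k))

lemma sum_incr {T : ℝ} (f : ℝ → ℝ) {n : ℕ} (hn : 0 < n) :
    ∑ k ∈ Finset.range n, incr T n k f = ∫ r in (0 : ℝ)..T, f r := by
  have := Finset.sum_range_sub (fun k => ∫ r in (0 : ℝ)..tk T n k, f r) n
  simpa [incr, tk_self T hn, tk_zero] using this

lemma abs_sum_mul_incr_le {T : ℝ} (hT : 0 < T) {f : ℝ → ℝ} (hf : IntegrableOn f (Icc 0 T)) {n : ℕ}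
    (hn : 0 < n) (Z : ℕ → ℝ) {c : ℝ} (hZ : ∀ k < n, |Z k| ≤ c) :
    |∑ k ∈ Finset.range n, Z k * incr T n k f| ≤ c * ∫ r in (0 : ℝ)..T, |f r| := by
  rw [← sum_incr (fun r => |f r|) hn, Finset.mul_sum]
  refine (Finset.abs_sum_le_sum_abs _ _).trans (Finset.sum_le_sum fun k hk => ?_)
  have hk := Finset.mem_range.1 hk
  rw [abs_mul]
  exact mul_le_mul (hZ k hk) (abs_incr_le hT hf hk) (abs_nonneg _)
    ((abs_nonneg _).trans (hZ k hk))

lemma abs_incr_le_integral {T : ℝ} (hT : 0 < T) {f : ℝ → ℝ} (hf : IntegrableOn f (Icc 0 T))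
    {n k : ℕ} (hk : k < n) : |incr T n k f| ≤ ∫ r in (0 : ℝ)..T, |f r| := by
  rw [← sum_incr (fun r => |f r|) (by omega : 0 < n)]
  refine (abs_incr_le hT hf hk).trans ?_
  refine Finset.single_le_sum (f := fun k => incr T n k (fun r => |f r|)) (fun j hj => ?_)
    (Finset.mem_range.2 hk)
  exact (abs_nonneg _).trans (abs_incr_le hT hf (Finset.mem_range.1 hj))

lemma abs_integral_mul_le {T : ℝ} (hT : 0 < T) {z f : ℝ → ℝ} (hf : IntegrableOn f (Icc 0 T))
    {c : ℝ} (hz : ∀ r ∈ Icc 0 T, |z r| ≤ c) :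
    |∫ r in (0 : ℝ)..T, z r * f r| ≤ c * ∫ r in (0 : ℝ)..T, |f r| := by
  rw [← intervalIntegral.integral_const_mul, ← Real.norm_eq_abs]
  refine intervalIntegral.norm_integral_le_of_norm_le hT.le ?_
    (((intervalIntegrable_of_mem hf ⟨le_rfl, hT.le⟩ ⟨hT.le, le_rfl⟩).abs).const_mul c)
  refine Eventually.of_forall fun r hr => ?_
  rw [norm_mul]
  exact mul_le_mul_of_nonneg_right (hz r ⟨hr.1.le, hr.2⟩) (abs_nonneg _)

section Path

variable {T : ℝ} {X N g Γ γ : ℝ → ℝ} {y c : ℝ}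

lemma GoodPath.c0 (hT : 0 < T) (h : GoodPath T X N g Γ γ y c) : 0 ≤ c :=
  (abs_nonneg _).trans (h.bdd 0 ⟨le_rfl, hT.le⟩)

lemma GoodPath.wt_le (h : GoodPath T X N g Γ γ y c) {t : ℝ} (ht : t ∈ Icc 0 T) :
    |wt γ t| ≤ Real.exp c := by
  rw [wt, Real.abs_exp, Real.exp_le_exp]
  refine le_trans ?_ h.γc
  have z0 : (0 : ℝ) ∈ Icc 0 T := ⟨le_rfl, ht.1.trans ht.2⟩
  refine intervalIntegral.integral_mono_interval le_rfl ht.1 ht.2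
    (Eventually.of_forall h.γ0) ?_
  exact intervalIntegrable_of_mem h.γi z0 ⟨ht.1.trans ht.2, le_rfl⟩

lemma GoodPath.wt_cont (hT : 0 < T) (h : GoodPath T X N g Γ γ y c) :
    ContinuousOn (wt γ) (Icc 0 T) := by
  have : ContinuousOn (fun t => ∫ r in (0 : ℝ)..t, γ r) (Icc 0 T) := by
    have := intervalIntegral.continuousOn_primitive_interval (a := 0) (b := T) (μ := volume)
      (f := γ) (by rw [uIcc_of_le hT.le]; exact h.γi)
    rwa [uIcc_of_le hT.le] at this
  exact Real.continuous_exp.comp_continuousOn this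

lemma tendsto_comp_tk (hT : 0 < T) {u : ℝ → ℝ} (hu : ContinuousOn u (Icc 0 T)) {r : ℝ}
    (hr : r ∈ Ioo 0 T) : Tendsto (fun n => u (tk T n (idx T n r))) atTop (nhds (u r)) := by
  have h1 : ContinuousAt u r := hu.continuousAt (Icc_mem_nhds hr.1 hr.2)
  exact h1.tendsto.comp (tendsto_tk_idx hT hr.1.le)

lemma tendsto_comp_tk_succ (hT : 0 < T) {u : ℝ → ℝ} (hu : ContinuousOn u (Icc 0 T)) {r : ℝ}
    (hr : r ∈ Ioo 0 T) : Tendsto (fun n => u (tk T n (idx T n r + 1))) atTop (nhds (u r)) := by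
  have h1 : ContinuousAt u r := hu.continuousAt (Icc_mem_nhds hr.1 hr.2)
  exact h1.tendsto.comp (tendsto_tk_idx_succ hT hr.1.le)

/-- The sum of the squared drift increments tends to zero. -/
lemma GoodPath.tendsto_sq (hT : 0 < T) (h : GoodPath T X N g Γ γ y c) :
    Tendsto (fun n => ∑ k ∈ Finset.range n, incr T n k g ^ 2) atTop (nhds 0) := by
  have hc : ContinuousOn (fun t => ∫ r in (0 : ℝ)..t, g r) (Icc 0 T) := by
    have := intervalIntegral.continuousOn_primitive_interval (a := 0) (b := T) (μ := volume)
      (f := g) (by rw [uIcc_of_le hT.le]; exact h.gi)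
    rwa [uIcc_of_le hT.le] at this
  have := tendsto_sum_incr hT h.gi (fun n k => incr T n k g) _
    (fun n k hk => abs_incr_le_integral hT h.gi hk) (fun _ => 0)
    (Eventually.of_forall fun r hr => by
      simpa [incr] using (tendsto_comp_tk_succ hT hc hr).sub (tendsto_comp_tk hT hc hr))
  simpa [pow_two] using this

lemma GoodPath.sum_sq_le (hT : 0 < T) (h : GoodPath T X N g Γ γ y c) (n : ℕ) :
    ∑ k ∈ Finset.range n, incr T n k g ^ 2 ≤ y ^ 2 := by
  have h0 : 0 ≤ ∫ r in (0 : ℝ)..T, |g r| :=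
    intervalIntegral.integral_nonneg hT.le fun _ _ => abs_nonneg _
  rcases Nat.eq_zero_or_pos n with rfl | hn
  · simp [sq_nonneg]
  have := abs_sum_mul_incr_le hT h.gi hn (fun k => incr T n k g)
    (fun k hk => abs_incr_le_integral hT h.gi hk)
  simp only [← pow_two] at this
  exact (le_abs_self _).trans (this.trans (pow_le_pow_left₀ h0 h.gy 2))

lemma GoodPath.abs_Γ (hT : 0 < T) (h : GoodPath T X N g Γ γ y c) :
    ∫ r in (0 : ℝ)..T, |Γ r| ≤ T + y := by
  have z0 : (0 : ℝ) ∈ Icc 0 T := ⟨le_rfl, hT.le⟩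
  have z1 : T ∈ Icc 0 T := ⟨hT.le, le_rfl⟩
  have h2 : ∫ r in (0 : ℝ)..T, (1 + Γ r ^ 2) = T + ∫ r in (0 : ℝ)..T, Γ r ^ 2 := by
    rw [intervalIntegral.integral_add (by simp) (intervalIntegrable_of_mem h.Γ2i z0 z1)]
    simp
  have h1 : ∫ r in (0 : ℝ)..T, |Γ r| ≤ ∫ r in (0 : ℝ)..T, (1 + Γ r ^ 2) := by
    refine intervalIntegral.integral_mono_on hT.le (intervalIntegrable_of_mem h.Γi z0 z1).abs
      ((intervalIntegrable_const).add (intervalIntegrable_of_mem h.Γ2i z0 z1)) fun r _ => ?_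
    nlinarith [sq_nonneg (|Γ r| - 1), sq_abs (Γ r), abs_nonneg (Γ r)]
  linarith [h.Γy]

lemma GoodPath.y0 (hT : 0 < T) (h : GoodPath T X N g Γ γ y c) : 0 ≤ y :=
  (intervalIntegral.integral_nonneg hT.le fun _ _ => abs_nonneg _).trans h.gy

/-- A bound for the discretised energy that is uniform in `n` and affine in `y`. -/
lemma GoodPath.abs_energySum_le (hT : 0 < T) (h : GoodPath T X N g Γ γ y c) {b : ℝ} (hb : 0 ≤ b)
    (n : ℕ) : |energySum T b n X g Γ γ| ≤
      Real.exp c * (c ^ 3 + 2 * c * y + 2 * b * (T + y) + b ^ 2 * T) := by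
  have hc := h.c0 hT
  have hy := h.y0 hT
  have hE := (Real.exp_pos c).le
  rcases Nat.eq_zero_or_pos n with rfl | hn
  · simp only [energySum, Finset.range_zero, Finset.sum_empty, abs_zero]
    positivity
  have hwk : ∀ k < n, |wt γ (tk T n k)| ≤ Real.exp c := fun k hk => h.wt_le (tk_mem hT hk.le)
  have hXk : ∀ k ≤ n, |X (tk T n k)| ≤ c := fun k hk => h.bdd _ (tk_mem hT hk)
  have b1 := abs_sum_mul_incr_le hT h.γi hn
    (fun k => wt γ (tk T n k) * X (tk T n (k + 1)) ^ 2) (c := Real.exp c * c ^ 2) (fun k hk => by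
      rw [abs_mul, abs_pow]
      exact mul_le_mul (hwk k hk) (pow_le_pow_left₀ (abs_nonneg _) (hXk _ hk) 2)
        (by positivity) hE)
  have b2 := abs_sum_mul_incr_le hT h.gi hn
    (fun k => wt γ (tk T n k) * X (tk T n k)) (c := Real.exp c * c) (fun k hk => by
      rw [abs_mul]
      exact mul_le_mul (hwk k hk) (hXk _ hk.le) (by positivity) hE)
  have b3 := abs_sum_mul_incr_le hT h.Γi hn
    (fun k => wt γ (tk T n k) * avg T b n k Γ) (c := Real.exp c * b) (fun k hk => by
      rw [abs_mul]
      exact mul_le_mul (hwk k hk) (abs_clip_le hb _) (by positivity) hE)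
  have b4 := abs_sum_mul_incr_le (f := fun _ => (1 : ℝ)) hT (by simp) hn
    (fun k => wt γ (tk T n k) * avg T b n k Γ ^ 2) (c := Real.exp c * b ^ 2) (fun k hk => by
      rw [abs_mul, abs_pow]
      exact mul_le_mul (hwk k hk) (pow_le_pow_left₀ (abs_nonneg _) (abs_clip_le hb _) 2)
        (by positivity) hE)
  have eγ : ∫ r in (0 : ℝ)..T, |γ r| ≤ c := by
    simpa only [abs_of_nonneg (h.γ0 _)] using h.γc
  have e1 : ∫ r in (0 : ℝ)..T, |(1 : ℝ)| = T := by simp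
  have b1' := b1.trans (mul_le_mul_of_nonneg_left eγ (by positivity))
  have b2' := b2.trans (mul_le_mul_of_nonneg_left h.gy (by positivity))
  have b3' := b3.trans (mul_le_mul_of_nonneg_left (h.abs_Γ hT) (by positivity))
  rw [e1] at b4
  simp only [energySum, Finset.sum_sub_distrib, Finset.sum_add_distrib, ← Finset.mul_sum]
  rw [abs_le] at *
  constructor <;> nlinarith

/-- The pathwise limit of the discretised energy. -/
lemma GoodPath.tendsto_energySum (hT : 0 < T) (h : GoodPath T X N g Γ γ y c) {b : ℝ} (hb : 0 ≤ b) :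
    Tendsto (fun n => energySum T b n X g Γ γ) atTop
      (nhds ((∫ r in (0 : ℝ)..T, wt γ r * X r ^ 2 * γ r)
        - 2 * (∫ r in (0 : ℝ)..T, wt γ r * X r * g r)
        + 2 * (∫ r in (0 : ℝ)..T, wt γ r * clip b (Γ r) * Γ r)
        - ∫ r in (0 : ℝ)..T, wt γ r * clip b (Γ r) ^ 2 * 1)) := by
  have hc := h.c0 hT
  have hE := (Real.exp_pos c).le
  have hwk : ∀ n k, k < n → |wt γ (tk T n k)| ≤ Real.exp c :=
    fun n k hk => h.wt_le (tk_mem hT hk.le)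
  have hXk : ∀ n k, k ≤ n → |X (tk T n k)| ≤ c := fun n k hk => h.bdd _ (tk_mem hT hk)
  have hw := h.wt_cont hT
  have havg : ∀ᵐ r, r ∈ Ioo 0 T →
      Tendsto (fun n => avg T b n (idx T n r) Γ) atTop (nhds (clip b (Γ r))) := by
    filter_upwards [ae_tendsto_avg hT h.Γi] with r hr hr0
    exact ((continuous_clip b).tendsto _).comp (hr hr0)
  have b1 := tendsto_sum_incr hT h.γi
    (fun n k => wt γ (tk T n k) * X (tk T n (k + 1)) ^ 2) (Real.exp c * c ^ 2) (fun n k hk => by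
      rw [abs_mul, abs_pow]
      exact mul_le_mul (hwk n k hk) (pow_le_pow_left₀ (abs_nonneg _) (hXk _ _ hk) 2)
        (by positivity) hE) (fun r => wt γ r * X r ^ 2)
    (Eventually.of_forall fun r hr =>
      (tendsto_comp_tk hT hw hr).mul ((tendsto_comp_tk_succ hT h.cont hr).pow 2))
  have b2 := tendsto_sum_incr hT h.gi
    (fun n k => wt γ (tk T n k) * X (tk T n k)) (Real.exp c * c) (fun n k hk => by
      rw [abs_mul]
      exact mul_le_mul (hwk n k hk) (hXk _ _ hk.le) (by positivity) hE) (fun r => wt γ r * X r)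
    (Eventually.of_forall fun r hr =>
      (tendsto_comp_tk hT hw hr).mul (tendsto_comp_tk hT h.cont hr))
  have b3 := tendsto_sum_incr hT h.Γi
    (fun n k => wt γ (tk T n k) * avg T b n k Γ) (Real.exp c * b) (fun n k hk => by
      rw [abs_mul]
      exact mul_le_mul (hwk n k hk) (abs_clip_le hb _) (by positivity) hE)
    (fun r => wt γ r * clip b (Γ r))
    (by filter_upwards [havg] with r hr hr0 using (tendsto_comp_tk hT hw hr0).mul (hr hr0))
  have b4 := tendsto_sum_incr (f := fun _ => (1 : ℝ)) hT (by simp)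
    (fun n k => wt γ (tk T n k) * avg T b n k Γ ^ 2) (Real.exp c * b ^ 2) (fun n k hk => by
      rw [abs_mul, abs_pow]
      exact mul_le_mul (hwk n k hk) (pow_le_pow_left₀ (abs_nonneg _) (abs_clip_le hb _) 2)
        (by positivity) hE) (fun r => wt γ r * clip b (Γ r) ^ 2)
    (by filter_upwards [havg] with r hr hr0 using
          (tendsto_comp_tk hT hw hr0).mul ((hr hr0).pow 2))
  refine (((b1.sub (b2.const_mul 2)).add (b3.const_mul 2)).sub b4).congr fun n => ?_
  simp only [energySum, Finset.sum_sub_distrib, Finset.sum_add_distrib, ← Finset.mul_sum]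

/-- Removal of the truncation level `b`. -/
lemma GoodPath.tendsto_clip (hT : 0 < T) (h : GoodPath T X N g Γ γ y c) :
    Tendsto (fun b : ℕ => (∫ r in (0 : ℝ)..T, wt γ r * X r ^ 2 * γ r)
        - 2 * (∫ r in (0 : ℝ)..T, wt γ r * X r * g r)
        + 2 * (∫ r in (0 : ℝ)..T, wt γ r * clip b (Γ r) * Γ r)
        - ∫ r in (0 : ℝ)..T, wt γ r * clip b (Γ r) ^ 2 * 1) atTop
      (nhds ((∫ r in (0 : ℝ)..T, wt γ r * X r ^ 2 * γ r)
        - 2 * (∫ r in (0 : ℝ)..T, wt γ r * X r * g r)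
        + ∫ r in (0 : ℝ)..T, wt γ r * Γ r ^ 2)) := by
  have z0 : (0 : ℝ) ∈ Icc 0 T := ⟨le_rfl, hT.le⟩
  have z1 : T ∈ Icc 0 T := ⟨hT.le, le_rfl⟩
  have hsub : Ioc 0 T ⊆ Icc 0 T := Ioc_subset_Icc_self
  have hwm : AEStronglyMeasurable (wt γ) (volume.restrict (uIoc 0 T)) := by
    rw [uIoc_of_le hT.le]
    exact ((h.wt_cont hT).mono hsub).aestronglyMeasurable measurableSet_Ioc
  have hΓm : AEStronglyMeasurable Γ (volume.restrict (uIoc 0 T)) := by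
    rw [uIoc_of_le hT.le]
    exact (h.Γi.mono_set hsub).aestronglyMeasurable
  have hev : ∀ r, ∀ᶠ b : ℕ in atTop, clip b (Γ r) = Γ r := fun r => by
    filter_upwards [eventually_ge_atTop ⌈|Γ r|⌉₊] with b hb
    exact clip_eq_self ((Nat.le_ceil _).trans (by exact_mod_cast hb))
  have hbd : IntervalIntegrable (fun r => Real.exp c * Γ r ^ 2) volume 0 T :=
    (intervalIntegrable_of_mem h.Γ2i z0 z1).const_mul _
  have l3 : Tendsto (fun b : ℕ => ∫ r in (0 : ℝ)..T, wt γ r * clip b (Γ r) * Γ r) atTop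
      (nhds (∫ r in (0 : ℝ)..T, wt γ r * Γ r ^ 2)) := by
    refine intervalIntegral.tendsto_integral_filter_of_dominated_convergence
      (fun r => Real.exp c * Γ r ^ 2) (Eventually.of_forall fun b => ?_)
      (Eventually.of_forall fun b => Eventually.of_forall fun r hr => ?_) hbd
      (Eventually.of_forall fun r hr => ?_)
    · exact (hwm.mul ((continuous_clip b).comp_aestronglyMeasurable hΓm)).mul hΓm
    · rw [uIoc_of_le hT.le] at hr
      rw [mul_assoc, norm_mul, norm_mul, ← sq_abs (Γ r), pow_two]
      exact mul_le_mul (h.wt_le (hsub hr)) (mul_le_mul_of_nonneg_right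
        (abs_clip_le_abs (Nat.cast_nonneg b) _) (abs_nonneg _)) (by positivity)
        (Real.exp_pos c).le
    · refine Tendsto.congr' ?_ tendsto_const_nhds
      filter_upwards [hev r] with b hb
      rw [hb]; ring
  have l4 : Tendsto (fun b : ℕ => ∫ r in (0 : ℝ)..T, wt γ r * clip b (Γ r) ^ 2 * 1) atTop
      (nhds (∫ r in (0 : ℝ)..T, wt γ r * Γ r ^ 2)) := by
    refine intervalIntegral.tendsto_integral_filter_of_dominated_convergence
      (fun r => Real.exp c * Γ r ^ 2) (Eventually.of_forall fun b => ?_)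
      (Eventually.of_forall fun b => Eventually.of_forall fun r hr => ?_) hbd
      (Eventually.of_forall fun r hr => ?_)
    · simp only [mul_one]
      exact hwm.mul (((continuous_clip b).comp_aestronglyMeasurable hΓm).pow 2)
    · rw [uIoc_of_le hT.le] at hr
      rw [mul_one, norm_mul, norm_pow, ← sq_abs (Γ r)]
      exact mul_le_mul (h.wt_le (hsub hr)) (pow_le_pow_left₀ (norm_nonneg _)
        (abs_clip_le_abs (Nat.cast_nonneg b) _) 2) (by positivity) (Real.exp_pos c).le
    · refine Tendsto.congr' ?_ tendsto_const_nhds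
      filter_upwards [hev r] with b hb
      rw [hb, mul_one]
  have := ((tendsto_const_nhds (x := (∫ r in (0 : ℝ)..T, wt γ r * X r ^ 2 * γ r)
        - 2 * (∫ r in (0 : ℝ)..T, wt γ r * X r * g r))).add (l3.const_mul 2)).sub l4
  convert this using 2
  ring

/-- A bound for the truncated energy that is uniform in the truncation level. -/
lemma GoodPath.abs_limit_le (hT : 0 < T) (h : GoodPath T X N g Γ γ y c) (b : ℕ) :
    |(∫ r in (0 : ℝ)..T, wt γ r * X r ^ 2 * γ r)
        - 2 * (∫ r in (0 : ℝ)..T, wt γ r * X r * g r)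
        + 2 * (∫ r in (0 : ℝ)..T, wt γ r * clip b (Γ r) * Γ r)
        - ∫ r in (0 : ℝ)..T, wt γ r * clip b (Γ r) ^ 2 * 1|
      ≤ Real.exp c * (c ^ 3 + 2 * c * y + 3 * y) := by
  have hc := h.c0 hT
  have hE := (Real.exp_pos c).le
  have z0 : (0 : ℝ) ∈ Icc 0 T := ⟨le_rfl, hT.le⟩
  have z1 : T ∈ Icc 0 T := ⟨hT.le, le_rfl⟩
  have hbd : IntervalIntegrable (fun r => Real.exp c * Γ r ^ 2) volume 0 T :=
    (intervalIntegrable_of_mem h.Γ2i z0 z1).const_mul _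
  have b1 := abs_integral_mul_le (z := fun r => wt γ r * X r ^ 2) (c := Real.exp c * c ^ 2)
    hT h.γi (fun r hr => by
      rw [abs_mul, abs_pow]
      exact mul_le_mul (h.wt_le hr) (pow_le_pow_left₀ (abs_nonneg _) (h.bdd r hr) 2)
        (by positivity) hE)
  have b2 := abs_integral_mul_le (z := fun r => wt γ r * X r) (c := Real.exp c * c)
    hT h.gi (fun r hr => by
      rw [abs_mul]
      exact mul_le_mul (h.wt_le hr) (h.bdd r hr) (by positivity) hE)
  have b3 : |∫ r in (0 : ℝ)..T, wt γ r * clip b (Γ r) * Γ r|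
      ≤ ∫ r in (0 : ℝ)..T, Real.exp c * Γ r ^ 2 := by
    rw [← Real.norm_eq_abs]
    refine intervalIntegral.norm_integral_le_of_norm_le hT.le
      (Eventually.of_forall fun r hr => ?_) hbd
    rw [mul_assoc, norm_mul, norm_mul, ← sq_abs (Γ r), pow_two]
    exact mul_le_mul (h.wt_le (Ioc_subset_Icc_self hr)) (mul_le_mul_of_nonneg_right
      (abs_clip_le_abs (Nat.cast_nonneg b) _) (abs_nonneg _)) (by positivity) hE
  have b4 : |∫ r in (0 : ℝ)..T, wt γ r * clip b (Γ r) ^ 2 * 1|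
      ≤ ∫ r in (0 : ℝ)..T, Real.exp c * Γ r ^ 2 := by
    rw [← Real.norm_eq_abs]
    refine intervalIntegral.norm_integral_le_of_norm_le hT.le
      (Eventually.of_forall fun r hr => ?_) hbd
    rw [mul_one, norm_mul, norm_pow, ← sq_abs (Γ r)]
    exact mul_le_mul (h.wt_le (Ioc_subset_Icc_self hr)) (pow_le_pow_left₀ (norm_nonneg _)
        (abs_clip_le_abs (Nat.cast_nonneg b) _) 2) (by positivity) hE
  rw [intervalIntegral.integral_const_mul] at b3 b4
  have eγ : ∫ r in (0 : ℝ)..T, |γ r| ≤ c := by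
    simpa only [abs_of_nonneg (h.γ0 _)] using h.γc
  have b1' := b1.trans (mul_le_mul_of_nonneg_left eγ (by positivity))
  have b2' := b2.trans (mul_le_mul_of_nonneg_left h.gy (by positivity))
  have b3' := b3.trans (mul_le_mul_of_nonneg_left h.Γy hE)
  have b4' := b4.trans (mul_le_mul_of_nonneg_left h.Γy hE)
  rw [abs_le] at *
  constructor <;> nlinarith

/-- The discrete energy inequality along one path.  The weight satisfies `βₖ₊₁ ≥ βₖ (1 + ∫ γ)`, the
squared increment of `X` is bounded below through `(ΔX - hₖ ΔW)² ≥ 0`, and the product of `ΔW` with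
the drift increment is split by Young's inequality with parameter `ε`. -/
lemma GoodPath.energy_ineq (hT : 0 < T) (h : GoodPath T X N g Γ γ y c) {b : ℝ} (hb : 0 ≤ b)
    {n : ℕ} (hn : 0 < n) (w : ℝ → ℝ) {ε : ℝ} (hε : 0 < ε) :
    energySum T b n X g Γ γ + ∑ k ∈ Finset.range n,
      (2 * ((N (tk T n (k + 1)) - N (tk T n k)) * (wt γ (tk T n k) * X (tk T n k)))
      + 2 * ((N (tk T n (k + 1)) - N (tk T n k)) * (w (tk T n (k + 1)) - w (tk T n k))
            * (wt γ (tk T n k) * avg T b n k Γ)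
          - incr T n k Γ * (wt γ (tk T n k) * avg T b n k Γ))
      - ((w (tk T n (k + 1)) - w (tk T n k)) ^ 2 * (wt γ (tk T n k) * avg T b n k Γ ^ 2)
          - T / n * (wt γ (tk T n k) * avg T b n k Γ ^ 2)))
    ≤ ∑ k ∈ Finset.range n, Real.exp c * b *
      (ε * (w (tk T n (k + 1)) - w (tk T n k)) ^ 2 + ε⁻¹ * incr T n k g ^ 2) := by
  have tele := Finset.sum_range_sub (fun k => wt γ (tk T n k) * X (tk T n k) ^ 2) n
  rw [tk_self T hn, h.fin] at tele
  have hw0 : 0 ≤ wt γ (tk T n 0) * X (tk T n 0) ^ 2 :=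
    mul_nonneg (Real.exp_pos _).le (sq_nonneg _)
  have key : ∀ k ∈ Finset.range n,
      (wt γ (tk T n k) * X (tk T n (k + 1)) ^ 2 * incr T n k γ
      - 2 * (wt γ (tk T n k) * X (tk T n k) * incr T n k g)
      + 2 * (wt γ (tk T n k) * avg T b n k Γ * incr T n k Γ)
      - wt γ (tk T n k) * avg T b n k Γ ^ 2 * incr T n k (fun _ => 1)) +
      (2 * ((N (tk T n (k + 1)) - N (tk T n k)) * (wt γ (tk T n k) * X (tk T n k)))
      + 2 * ((N (tk T n (k + 1)) - N (tk T n k)) * (w (tk T n (k + 1)) - w (tk T n k))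
            * (wt γ (tk T n k) * avg T b n k Γ)
          - incr T n k Γ * (wt γ (tk T n k) * avg T b n k Γ))
      - ((w (tk T n (k + 1)) - w (tk T n k)) ^ 2 * (wt γ (tk T n k) * avg T b n k Γ ^ 2)
          - T / n * (wt γ (tk T n k) * avg T b n k Γ ^ 2)))
      ≤ Real.exp c * b *
      (ε * (w (tk T n (k + 1)) - w (tk T n k)) ^ 2 + ε⁻¹ * incr T n k g ^ 2)
        + (wt γ (tk T n (k + 1)) * X (tk T n (k + 1)) ^ 2
          - wt γ (tk T n k) * X (tk T n k) ^ 2) := by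
    intro k hk
    have hk := Finset.mem_range.1 hk
    have hX1 := h.eqn _ (tk_mem hT hk)
    have hX0 := h.eqn _ (tk_mem hT hk.le)
    have hΔ : X (tk T n (k + 1)) = X (tk T n k)
        + ((N (tk T n (k + 1)) - N (tk T n k)) - incr T n k g) := by
      rw [hX1, hX0, incr]; ring
    have h1 : incr T n k (fun _ => (1 : ℝ)) = T / n := by
      simp only [incr, intervalIntegral.integral_const, smul_eq_mul, mul_one, sub_zero]
      exact tk_succ_sub T n k
    have hβ0 : 0 < wt γ (tk T n k) := Real.exp_pos _
    have hβ1 : wt γ (tk T n k) * (1 + incr T n k γ) ≤ wt γ (tk T n (k + 1)) := by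
      have e : wt γ (tk T n (k + 1)) = wt γ (tk T n k) * Real.exp (incr T n k γ) := by
        rw [wt, wt, ← Real.exp_add, incr]; congr 1; ring
      rw [e]
      exact mul_le_mul_of_nonneg_left (by linarith [Real.add_one_le_exp (incr T n k γ)]) hβ0.le
    have hβc : wt γ (tk T n k) ≤ Real.exp c := (le_abs_self _).trans (h.wt_le (tk_mem hT hk.le))
    have hh : |avg T b n k Γ| ≤ b := abs_clip_le hb _
    rw [h1]
    generalize N (tk T n (k + 1)) - N (tk T n k) = dN at *
    generalize w (tk T n (k + 1)) - w (tk T n k) = dw at *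
    generalize X (tk T n (k + 1)) = x1 at *
    generalize X (tk T n k) = x0 at *
    generalize wt γ (tk T n (k + 1)) = β1 at *
    generalize wt γ (tk T n k) = β at *
    generalize avg T b n k Γ = a at *
    generalize incr T n k g = G at *
    generalize incr T n k γ = J at *
    generalize incr T n k Γ = Q at *
    have young : 2 * (a * dw * G) ≤ b * (ε * dw ^ 2 + ε⁻¹ * G ^ 2) := by
      have hs : 2 * (|dw| * |G|) ≤ ε * dw ^ 2 + ε⁻¹ * G ^ 2 := by
        have e : ε * dw ^ 2 + ε⁻¹ * G ^ 2 - 2 * (|dw| * |G|) = ε⁻¹ * (ε * |dw| - |G|) ^ 2 := by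
          rw [← sq_abs dw, ← sq_abs G]; field_simp; ring
        have : 0 ≤ ε⁻¹ * (ε * |dw| - |G|) ^ 2 := by positivity
        linarith
      calc 2 * (a * dw * G) ≤ |2 * (a * dw * G)| := le_abs_self _
        _ = |a| * (2 * (|dw| * |G|)) := by rw [abs_mul, abs_mul, abs_mul, abs_two]; ring
        _ ≤ b * (ε * dw ^ 2 + ε⁻¹ * G ^ 2) := mul_le_mul hh hs (by positivity) hb
    have hY0 : 0 ≤ b * (ε * dw ^ 2 + ε⁻¹ * G ^ 2) := by positivity
    have y1 : β * (2 * (a * dw * G)) ≤ Real.exp c * (b * (ε * dw ^ 2 + ε⁻¹ * G ^ 2)) :=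
      (mul_le_mul_of_nonneg_left young hβ0.le).trans (mul_le_mul_of_nonneg_right hβc hY0)
    have y2 : β * (1 + J) * x1 ^ 2 ≤ β1 * x1 ^ 2 :=
      mul_le_mul_of_nonneg_right hβ1 (sq_nonneg _)
    have y3 : 0 ≤ β * ((dN - G) - a * dw) ^ 2 := by positivity
    have y4 : β * x1 ^ 2 = β * (x0 + (dN - G)) ^ 2 := by rw [hΔ]
    nlinarith
  have hsum := Finset.sum_le_sum key
  rw [Finset.sum_add_distrib, Finset.sum_add_distrib, tele] at hsum
  rw [energySum]
  linarith

end Path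

end SLQ

/-! ### The weighted energy estimate -/

namespace SLQ

section Energy

variable {Ω : Type} {mΩ : MeasurableSpace Ω}

/-- A bounded scalar semimartingale `dX = -g dt + dN`, `X(T) = 0`, together with the facts on
`N = ∫ Γ dW` that the energy estimate uses; `J` is an adapted version of `∫₀ᵗ Γ`, and `γ` is the
rate of the exponential weight. -/
structure ItoData (μ : Measure Ω) (F : Filtration ℝ mΩ) (W : ℝ → Ω → ℝ) (T : ℝ)
    (X N J g Γ γ : ℝ → Ω → ℝ) (Y : Ω → ℝ) (c : ℝ) : Prop where
  Xm : ∀ t, Measurable[F t] (X t)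
  mart : MartOn μ F 0 T N
  N2 : ∀ t ∈ Icc 0 T, MemLp (N t) 2 μ
  cov : MartOn μ F 0 T (fun t ω => N t ω * W t ω - J t ω)
  Jeq : ∀ t ∈ Icc 0 T, ∀ᵐ ω ∂μ, J t ω = ∫ r in (0 : ℝ)..t, Γ r ω
  γm : ∀ t, Measurable[F t] (γ t)
  γj : Measurable (fun p : ℝ × Ω => γ p.1 p.2)
  Y2 : MemLp Y 2 μ
  good : ∀ᵐ ω ∂μ, GoodPath T (fun t => X t ω) (fun t => N t ω) (fun t => g t ω)
    (fun t => Γ t ω) (fun t => γ t ω) (Y ω) c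

variable {μ : Measure Ω} [IsProbabilityMeasure μ] {F : Filtration ℝ mΩ} {W : ℝ → Ω → ℝ} {T : ℝ}
  {X N J g Γ γ : ℝ → Ω → ℝ} {Y : Ω → ℝ} {c : ℝ}

lemma ItoData.integrable_γ (h : ItoData μ F W T X N J g Γ γ Y c) {t : ℝ} (ht : t ∈ Icc 0 T) :
    Integrable (fun p : ℝ × Ω => γ p.1 p.2) (((volume : Measure ℝ).restrict (Ioc 0 t)).prod μ) := by
  rw [integrable_prod_iff' h.γj.aestronglyMeasurable]
  constructor
  · filter_upwards [h.good] with ω hω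
    exact hω.γi.mono_set (fun r hr => ⟨hr.1.le, hr.2.trans ht.2⟩)
  · refine Integrable.of_bound (C := c) ?_ ?_
    · exact (h.γj.stronglyMeasurable.norm.integral_prod_left
        (μ := (volume : Measure ℝ).restrict (Ioc 0 t))).aestronglyMeasurable
    · filter_upwards [h.good] with ω hω
      rw [Real.norm_of_nonneg (integral_nonneg fun _ => norm_nonneg _)]
      have e : ∫ r in Ioc 0 t, ‖γ r ω‖ = ∫ r in (0 : ℝ)..t, γ r ω := by
        rw [intervalIntegral.integral_of_le ht.1]
        exact integral_congr_ae (Eventually.of_forall fun r => Real.norm_of_nonneg (hω.γ0 r))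
      simp only [e]
      refine le_trans ?_ hω.γc
      exact intervalIntegral.integral_mono_interval le_rfl ht.1 ht.2 (Eventually.of_forall hω.γ0)
        (intervalIntegrable_of_mem hω.γi ⟨le_rfl, ht.1.trans ht.2⟩ ⟨ht.1.trans ht.2, le_rfl⟩)

lemma ItoData.aesm_γ (h : ItoData μ F W T X N J g Γ γ Y c) {t : ℝ} (ht : t ∈ Icc 0 T) :
    AEStronglyMeasurable[F t] (fun ω => ∫ r in (0 : ℝ)..t, γ r ω) μ :=
  aestronglyMeasurable_integral μ F h.γm ht.1 (h.integrable_γ ht)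

lemma ItoData.aesm_wt (h : ItoData μ F W T X N J g Γ γ Y c) {t : ℝ} (ht : t ∈ Icc 0 T) :
    AEStronglyMeasurable[F t] (fun ω => wt (fun r => γ r ω) t) μ :=
  Real.continuous_exp.comp_aestronglyMeasurable (h.aesm_γ ht)

lemma ItoData.aesm_J (h : ItoData μ F W T X N J g Γ γ Y c) (hW : IsBrownian μ F W) {t : ℝ}
    (ht : t ∈ Icc 0 T) :
    AEStronglyMeasurable[F t] (fun ω => ∫ r in (0 : ℝ)..t, Γ r ω) μ := by
  have h1 : Measurable[F t] (fun ω => N t ω * W t ω - (N t ω * W t ω - J t ω)) :=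
    ((h.mart.1 t ht).mul (hW.meas t)).sub (h.cov.1 t ht)
  refine AEStronglyMeasurable.congr h1.aestronglyMeasurable ?_
  filter_upwards [h.Jeq t ht] with ω hω
  rw [← hω]; ring

lemma ItoData.aesm_avg (h : ItoData μ F W T X N J g Γ γ Y c) (hW : IsBrownian μ F W) (hT : 0 < T)
    (b : ℝ) {n k : ℕ} (hk : k ≤ n) :
    AEStronglyMeasurable[F (tk T n k)] (fun ω => avg T b n k (fun r => Γ r ω)) μ := by
  refine (continuous_clip b).comp_aestronglyMeasurable ?_
  refine AEStronglyMeasurable.const_mul ?_ _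
  refine (h.aesm_J hW (tk_mem hT hk)).sub ?_
  exact (h.aesm_J hW (tk_mem hT ((Nat.sub_le k 1).trans hk))).mono
    (F.mono (tk_mono hT n (Nat.sub_le k 1)))

lemma ItoData.incr_g (h : ItoData μ F W T X N J g Γ γ Y c) (hT : 0 < T) {n k : ℕ} (hk : k < n) :
    AEStronglyMeasurable (fun ω => incr T n k (fun r => g r ω)) μ := by
  have m : ∀ t ∈ Icc 0 T, Measurable (fun ω => N t ω - X t ω) := fun t ht =>
    ((h.mart.1 t ht).mono (F.le t) le_rfl).sub ((h.Xm t).mono (F.le t) le_rfl)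
  refine AEStronglyMeasurable.congr
    ((m _ (tk_mem hT hk)).sub (m _ (tk_mem hT hk.le))).aestronglyMeasurable ?_
  filter_upwards [h.good] with ω hω
  have h1 := hω.eqn _ (tk_mem hT (Nat.succ_le_of_lt hk))
  have h2 := hω.eqn _ (tk_mem hT hk.le)
  simp only [Pi.sub_apply, incr] at *
  linarith

lemma ItoData.incr_Γ (h : ItoData μ F W T X N J g Γ γ Y c) (hW : IsBrownian μ F W) (hT : 0 < T)
    {n k : ℕ} (hk : k < n) :
    AEStronglyMeasurable (fun ω => incr T n k (fun r => Γ r ω)) μ :=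
  ((h.aesm_J hW (tk_mem hT hk)).mono (F.le _)).sub
    ((h.aesm_J hW (tk_mem hT hk.le)).mono (F.le _))

lemma ItoData.incr_γ (h : ItoData μ F W T X N J g Γ γ Y c) (hT : 0 < T)
    {n k : ℕ} (hk : k < n) :
    AEStronglyMeasurable (fun ω => incr T n k (fun r => γ r ω)) μ :=
  ((h.aesm_γ (tk_mem hT hk)).mono (F.le _)).sub
    ((h.aesm_γ (tk_mem hT hk.le)).mono (F.le _))

lemma ItoData.integrable_Y (h : ItoData μ F W T X N J g Γ γ Y c) : Integrable Y μ :=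
  h.Y2.integrable (by norm_num)

lemma ItoData.aesm_energySum (h : ItoData μ F W T X N J g Γ γ Y c) (hW : IsBrownian μ F W)
    (hT : 0 < T) (b : ℝ) (n : ℕ) :
    AEStronglyMeasurable (fun ω => energySum T b n (fun t => X t ω) (fun t => g t ω)
      (fun t => Γ t ω) (fun t => γ t ω)) μ := by
  have aX : ∀ t, AEStronglyMeasurable (X t) μ := fun t =>
    ((h.Xm t).mono (F.le t) le_rfl).aestronglyMeasurable
  unfold energySum
  refine Finset.aestronglyMeasurable_fun_sum _ fun k hk => ?_
  have hk := Finset.mem_range.1 hk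
  have hw := (h.aesm_wt (tk_mem hT hk.le)).mono (F.le _)
  have ha := (h.aesm_avg hW hT b hk.le).mono (F.le _)
  exact ((((hw.mul ((aX _).pow 2)).mul (h.incr_γ hT hk)).sub
    (((hw.mul (aX _)).mul (h.incr_g hT hk)).const_mul 2)).add
    (((hw.mul ha).mul (h.incr_Γ hW hT hk)).const_mul 2)).sub
    ((hw.mul (ha.pow 2)).mul_const _)

lemma ItoData.integrable_bound (h : ItoData μ F W T X N J g Γ γ Y c) (b : ℝ) :
    Integrable (fun ω => Real.exp c *
      (c ^ 3 + 2 * c * Y ω + 2 * b * (T + Y ω) + b ^ 2 * T)) μ := by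
  have hY := h.integrable_Y
  fun_prop

lemma ItoData.integrable_energySum (h : ItoData μ F W T X N J g Γ γ Y c) (hW : IsBrownian μ F W)
    (hT : 0 < T) {b : ℝ} (hb : 0 ≤ b) (n : ℕ) :
    Integrable (fun ω => energySum T b n (fun t => X t ω) (fun t => g t ω)
      (fun t => Γ t ω) (fun t => γ t ω)) μ := by
  refine (h.integrable_bound b).mono' (h.aesm_energySum hW hT b n) ?_
  filter_upwards [h.good] with ω hω
  exact hω.abs_energySum_le hT hb n

lemma ItoData.integrable_sq (h : ItoData μ F W T X N J g Γ γ Y c) (hT : 0 < T) {n k : ℕ}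
    (hk : k < n) : Integrable (fun ω => incr T n k (fun r => g r ω) ^ 2) μ := by
  refine h.Y2.integrable_sq.mono' ((h.incr_g hT hk).pow 2) ?_
  filter_upwards [h.good] with ω hω
  rw [Real.norm_of_nonneg (sq_nonneg _)]
  exact (Finset.single_le_sum (f := fun k => incr T n k (fun r => g r ω) ^ 2)
    (fun _ _ => sq_nonneg _) (Finset.mem_range.2 hk)).trans (hω.sum_sq_le hT n)

/-- In expectation, the martingale terms of the discrete energy inequality disappear. -/
lemma ItoData.energy_step (h : ItoData μ F W T X N J g Γ γ Y c) (hW : IsBrownian μ F W)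
    (hT : 0 < T) {b : ℝ} (hb : 0 ≤ b) {n : ℕ} (hn : 0 < n) {ε : ℝ} (hε : 0 < ε) :
    ∫ ω, energySum T b n (fun t => X t ω) (fun t => g t ω) (fun t => Γ t ω) (fun t => γ t ω) ∂μ
      ≤ Real.exp c * b *
        (ε * T + ε⁻¹ * ∫ ω, ∑ k ∈ Finset.range n, incr T n k (fun r => g r ω) ^ 2 ∂μ) := by
  set V : ℕ → Ω → ℝ := fun k ω => W (tk T n (k + 1)) ω - W (tk T n k) ω with hV
  set U : ℕ → Ω → ℝ := fun k ω => N (tk T n (k + 1)) ω - N (tk T n k) ω with hU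
  set Z1 : ℕ → Ω → ℝ := fun k ω => wt (fun r => γ r ω) (tk T n k) * X (tk T n k) ω with hZ1
  set Z2 : ℕ → Ω → ℝ := fun k ω =>
    wt (fun r => γ r ω) (tk T n k) * avg T b n k (fun r => Γ r ω) with hZ2
  set Z3 : ℕ → Ω → ℝ := fun k ω =>
    wt (fun r => γ r ω) (tk T n k) * avg T b n k (fun r => Γ r ω) ^ 2 with hZ3
  set I : ℕ → Ω → ℝ := fun k ω => incr T n k (fun r => Γ r ω) with hI
  have c0 : 0 ≤ c := by
    obtain ⟨ω, hω⟩ := h.good.exists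
    exact hω.c0 hT
  have le1 : ∀ k, tk T n k ≤ tk T n (k + 1) := fun k => tk_mono hT n (Nat.le_succ k)
  have mz1 : ∀ k < n, AEStronglyMeasurable[F (tk T n k)] (Z1 k) μ := fun k hk =>
    (h.aesm_wt (tk_mem hT hk.le)).mul (h.Xm _).aestronglyMeasurable
  have mz2 : ∀ k < n, AEStronglyMeasurable[F (tk T n k)] (Z2 k) μ := fun k hk =>
    (h.aesm_wt (tk_mem hT hk.le)).mul (h.aesm_avg hW hT b hk.le)
  have mz3 : ∀ k < n, AEStronglyMeasurable[F (tk T n k)] (Z3 k) μ := fun k hk =>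
    (h.aesm_wt (tk_mem hT hk.le)).mul ((h.aesm_avg hW hT b hk.le).pow 2)
  have bz1 : ∀ k < n, ∀ᵐ ω ∂μ, ‖Z1 k ω‖ ≤ Real.exp c * c := fun k hk => by
    filter_upwards [h.good] with ω hω
    rw [norm_mul]
    exact mul_le_mul (hω.wt_le (tk_mem hT hk.le)) (hω.bdd _ (tk_mem hT hk.le)) (norm_nonneg _)
      (Real.exp_pos _).le
  have bz2 : ∀ k < n, ∀ᵐ ω ∂μ, ‖Z2 k ω‖ ≤ Real.exp c * b := fun k hk => by
    filter_upwards [h.good] with ω hω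
    rw [norm_mul]
    exact mul_le_mul (hω.wt_le (tk_mem hT hk.le)) (abs_clip_le hb _) (norm_nonneg _)
      (Real.exp_pos _).le
  have bz3 : ∀ k < n, ∀ᵐ ω ∂μ, ‖Z3 k ω‖ ≤ Real.exp c * b ^ 2 := fun k hk => by
    filter_upwards [h.good] with ω hω
    rw [norm_mul, norm_pow]
    exact mul_le_mul (hω.wt_le (tk_mem hT hk.le))
      (pow_le_pow_left₀ (norm_nonneg _) (abs_clip_le hb _) 2) (by positivity)
      (Real.exp_pos _).le
  have bdd : ∀ {f Z : Ω → ℝ} {k : ℕ} {C : ℝ}, AEStronglyMeasurable[F (tk T n k)] Z μ →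
      (∀ᵐ ω ∂μ, ‖Z ω‖ ≤ C) → Integrable f μ → Integrable (fun ω => f ω * Z ω) μ :=
    fun hm hb hf => (hf.bdd_mul (hm.mono (F.le _)) hb).congr
      (Eventually.of_forall fun ω => mul_comm _ _)
  have iN : ∀ k ≤ n, Integrable (N (tk T n k)) μ := fun k hk => h.mart.2.1 _ (tk_mem hT hk)
  have lV : ∀ k < n, MemLp (V k) 2 μ := fun k hk =>
    hW.memLp_sub (tk_mem hT hk.le).1 (le1 k)
  have lU : ∀ k < n, MemLp (U k) 2 μ := fun k hk =>
    (h.N2 _ (tk_mem hT hk)).sub (h.N2 _ (tk_mem hT hk.le))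
  have iI : ∀ k < n, Integrable (I k) μ := fun k hk => by
    have iY : Integrable (fun ω => T + Y ω) μ := (integrable_const T).add h.integrable_Y
    refine iY.mono' (h.incr_Γ hW hT hk) ?_
    filter_upwards [h.good] with ω hω
    exact (abs_incr_le_integral hT hω.Γi hk).trans (hω.abs_Γ hT)
  have i1 : ∀ k < n, Integrable (fun ω => U k ω * Z1 k ω) μ := fun k hk =>
    bdd (mz1 k hk) (bz1 k hk) ((lU k hk).integrable (by norm_num))
  have i2 : ∀ k < n, Integrable (fun ω => U k ω * V k ω * Z2 k ω) μ := fun k hk =>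
    bdd (mz2 k hk) (bz2 k hk) ((lU k hk).integrable_mul (lV k hk))
  have i3 : ∀ k < n, Integrable (fun ω => I k ω * Z2 k ω) μ := fun k hk =>
    bdd (mz2 k hk) (bz2 k hk) (iI k hk)
  have i4 : ∀ k < n, Integrable (fun ω => V k ω ^ 2 * Z3 k ω) μ := fun k hk =>
    bdd (mz3 k hk) (bz3 k hk) (lV k hk).integrable_sq
  have i5 : ∀ k < n, Integrable (fun ω => T / n * Z3 k ω) μ := fun k hk =>
    bdd (mz3 k hk) (bz3 k hk) (integrable_const (T / n : ℝ))
  have e1 : ∀ k < n, ∫ ω, U k ω * Z1 k ω ∂μ = 0 := fun k hk => by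
    simp only [hU, sub_mul]
    rw [integral_sub (bdd (mz1 k hk) (bz1 k hk) (iN _ hk))
      (bdd (mz1 k hk) (bz1 k hk) (iN _ hk.le)), sub_eq_zero]
    exact h.mart.integral_mul (tk_mem hT hk.le).1 (le1 k) (tk_mem hT hk).2 (mz1 k hk)
      (bdd (mz1 k hk) (bz1 k hk) (iN _ hk))
  have e2 : ∀ k < n, ∫ ω, U k ω * V k ω * Z2 k ω ∂μ = ∫ ω, I k ω * Z2 k ω ∂μ := fun k hk => by
    rw [integral_cov hW h.mart h.N2 h.cov (tk_mem hT hk.le).1 (le1 k) (tk_mem hT hk).2 (mz2 k hk)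
      (bz2 k hk)]
    refine integral_congr_ae ?_
    filter_upwards [h.Jeq _ (tk_mem hT hk), h.Jeq _ (tk_mem hT hk.le)] with ω h1 h2
    simp only [hI, incr, h1, h2]
  have e3 : ∀ k < n, ∫ ω, V k ω ^ 2 * Z3 k ω ∂μ = ∫ ω, T / n * Z3 k ω ∂μ := fun k hk => by
    rw [hW.integral_sub_sq_mul (tk_mem hT hk.le).1 (le1 k) (mz3 k hk), tk_succ_sub,
      integral_const_mul]
  have eV : ∀ k < n, ∫ ω, V k ω ^ 2 ∂μ = T / n := fun k hk => by
    have := hW.integral_sub_sq_mul (Z := fun _ => (1 : ℝ)) (tk_mem hT hk.le).1 (le1 k)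
      aestronglyMeasurable_const
    simpa [tk_succ_sub] using this
  set S : ℕ → Ω → ℝ := fun k ω =>
    2 * (U k ω * Z1 k ω) + 2 * (U k ω * V k ω * Z2 k ω - I k ω * Z2 k ω)
      - (V k ω ^ 2 * Z3 k ω - T / n * Z3 k ω) with hS
  have iS : ∀ k < n, Integrable (S k) μ := fun k hk =>
    (((i1 k hk).const_mul 2).add (((i2 k hk).sub (i3 k hk)).const_mul 2)).sub
      ((i4 k hk).sub (i5 k hk))
  have eS : ∀ k < n, ∫ ω, S k ω ∂μ = 0 := fun k hk => by
    have j1 : Integrable (fun ω => 2 * (U k ω * Z1 k ω)) μ := (i1 k hk).const_mul 2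
    have j2 : Integrable (fun ω => 2 * (U k ω * V k ω * Z2 k ω - I k ω * Z2 k ω)) μ :=
      ((i2 k hk).sub (i3 k hk)).const_mul 2
    have j12 : Integrable (fun ω => 2 * (U k ω * Z1 k ω)
      + 2 * (U k ω * V k ω * Z2 k ω - I k ω * Z2 k ω)) μ := j1.add j2
    have j3 : Integrable (fun ω => V k ω ^ 2 * Z3 k ω - T / n * Z3 k ω) μ :=
      (i4 k hk).sub (i5 k hk)
    simp only [hS]
    rw [integral_sub j12 j3, integral_add j1 j2, integral_sub (i4 k hk) (i5 k hk),
      integral_const_mul, integral_const_mul, integral_sub (i2 k hk) (i3 k hk), e1 k hk, e2 k hk,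
      e3 k hk]
    ring
  have iR : ∀ k < n, Integrable (fun ω => Real.exp c * b *
      (ε * V k ω ^ 2 + ε⁻¹ * incr T n k (fun r => g r ω) ^ 2)) μ := fun k hk =>
    (((lV k hk).integrable_sq.const_mul ε).add ((h.integrable_sq hT hk).const_mul ε⁻¹)).const_mul _
  have key : ∫ ω, (energySum T b n (fun t => X t ω) (fun t => g t ω) (fun t => Γ t ω)
        (fun t => γ t ω) + ∑ k ∈ Finset.range n, S k ω) ∂μ
      ≤ ∫ ω, ∑ k ∈ Finset.range n, Real.exp c * b *
      (ε * V k ω ^ 2 + ε⁻¹ * incr T n k (fun r => g r ω) ^ 2) ∂μ := by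
    refine integral_mono_ae ((h.integrable_energySum hW hT hb n).add
      (integrable_finsetSum _ fun k hk => iS k (Finset.mem_range.1 hk)))
      (integrable_finsetSum _ fun k hk => iR k (Finset.mem_range.1 hk)) ?_
    filter_upwards [h.good] with ω hω
    exact hω.energy_ineq hT hb hn (fun t => W t ω) hε
  rw [integral_add (h.integrable_energySum hW hT hb n)
    (integrable_finsetSum _ fun k hk => iS k (Finset.mem_range.1 hk)),
    integral_finsetSum _ fun k hk => iS k (Finset.mem_range.1 hk),
    Finset.sum_eq_zero fun k hk => eS k (Finset.mem_range.1 hk), add_zero,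
    integral_finsetSum _ fun k hk => iR k (Finset.mem_range.1 hk)] at key
  refine key.trans (le_of_eq ?_)
  rw [integral_finsetSum _ fun k hk => h.integrable_sq hT (Finset.mem_range.1 hk)]
  have e4 : ∀ k ∈ Finset.range n, ∫ ω, Real.exp c * b *
      (ε * V k ω ^ 2 + ε⁻¹ * incr T n k (fun r => g r ω) ^ 2) ∂μ
      = Real.exp c * b * (ε * (T / n) + ε⁻¹ * ∫ ω, incr T n k (fun r => g r ω) ^ 2 ∂μ) := by
    intro k hk
    have hk := Finset.mem_range.1 hk
    rw [integral_const_mul, integral_add ((lV k hk).integrable_sq.const_mul ε)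
      ((h.integrable_sq hT hk).const_mul ε⁻¹), integral_const_mul, integral_const_mul, eV k hk]
  rw [Finset.sum_congr rfl e4, ← Finset.mul_sum, Finset.sum_add_distrib, ← Finset.mul_sum]
  have hn' : (n : ℝ) ≠ 0 := by positivity
  simp only [Finset.sum_const, Finset.card_range, nsmul_eq_mul]
  have e5 : (n : ℝ) * (T / n) = T := by field_simp
  rw [e5, ← Finset.mul_sum]

/-- **Weighted energy estimate**: `E ∫ β (γ X² - 2 X g + Γ²) ≤ 0`. -/
lemma ItoData.energy (h : ItoData μ F W T X N J g Γ γ Y c) (hW : IsBrownian μ F W) (hT : 0 < T) :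
    Integrable (fun ω => (∫ r in (0 : ℝ)..T, wt (fun r => γ r ω) r * X r ω ^ 2 * γ r ω)
        - 2 * (∫ r in (0 : ℝ)..T, wt (fun r => γ r ω) r * X r ω * g r ω)
        + ∫ r in (0 : ℝ)..T, wt (fun r => γ r ω) r * Γ r ω ^ 2) μ ∧
    ∫ ω, ((∫ r in (0 : ℝ)..T, wt (fun r => γ r ω) r * X r ω ^ 2 * γ r ω)
        - 2 * (∫ r in (0 : ℝ)..T, wt (fun r => γ r ω) r * X r ω * g r ω)
        + ∫ r in (0 : ℝ)..T, wt (fun r => γ r ω) r * Γ r ω ^ 2) ∂μ ≤ 0 := by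
  set E : ℕ → Ω → ℝ := fun b ω => (∫ r in (0 : ℝ)..T, wt (fun r => γ r ω) r * X r ω ^ 2 * γ r ω)
        - 2 * (∫ r in (0 : ℝ)..T, wt (fun r => γ r ω) r * X r ω * g r ω)
        + 2 * (∫ r in (0 : ℝ)..T, wt (fun r => γ r ω) r * clip b (Γ r ω) * Γ r ω)
        - ∫ r in (0 : ℝ)..T, wt (fun r => γ r ω) r * clip b (Γ r ω) ^ 2 * 1 with hE
  have bi : Integrable (fun ω => Real.exp c * (c ^ 3 + 2 * c * Y ω + 3 * Y ω)) μ := by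
    have hY := h.integrable_Y
    fun_prop
  have Em : ∀ b, AEStronglyMeasurable (E b) μ := fun b => by
    refine aestronglyMeasurable_of_tendsto_ae (u := atTop) (fun n : ℕ =>
      h.aesm_energySum hW hT b n) ?_
    filter_upwards [h.good] with ω hω
    exact hω.tendsto_energySum hT (Nat.cast_nonneg b)
  have lim : ∀ᵐ ω ∂μ, Tendsto (fun b => E b ω) atTop
      (nhds ((∫ r in (0 : ℝ)..T, wt (fun r => γ r ω) r * X r ω ^ 2 * γ r ω)
        - 2 * (∫ r in (0 : ℝ)..T, wt (fun r => γ r ω) r * X r ω * g r ω)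
        + ∫ r in (0 : ℝ)..T, wt (fun r => γ r ω) r * Γ r ω ^ 2)) := by
    filter_upwards [h.good] with ω hω
    exact hω.tendsto_clip hT
  have Eb : ∀ b, ∀ᵐ ω ∂μ, ‖E b ω‖ ≤ Real.exp c * (c ^ 3 + 2 * c * Y ω + 3 * Y ω) := fun b => by
    filter_upwards [h.good] with ω hω
    exact hω.abs_limit_le hT b
  have Ele : ∀ b : ℕ, ∫ ω, E b ω ∂μ ≤ 0 := by
    intro b
    have t1 := tendsto_integral_of_dominated_convergence
      (F := fun n ω => energySum T b n (fun t => X t ω) (fun t => g t ω) (fun t => Γ t ω)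
        (fun t => γ t ω)) (f := E b) (μ := μ) _ (fun n => h.aesm_energySum hW hT b n)
      (h.integrable_bound b) (fun n => by
        filter_upwards [h.good] with ω hω
        exact hω.abs_energySum_le hT (Nat.cast_nonneg b) n) (by
        filter_upwards [h.good] with ω hω
        exact hω.tendsto_energySum hT (Nat.cast_nonneg b))
    have t2 := tendsto_integral_of_dominated_convergence
      (F := fun n ω => ∑ k ∈ Finset.range n, incr T n k (fun r => g r ω) ^ 2) (f := fun _ => 0)
      (μ := μ) _ (fun n => Finset.aestronglyMeasurable_fun_sum _ fun k hk =>
        (h.incr_g hT (Finset.mem_range.1 hk)).pow 2) h.Y2.integrable_sq (fun n => by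
        filter_upwards [h.good] with ω hω
        rw [Real.norm_of_nonneg (Finset.sum_nonneg fun _ _ => sq_nonneg _)]
        exact hω.sum_sq_le hT n) (by
        filter_upwards [h.good] with ω hω
        exact hω.tendsto_sq hT)
    simp only [integral_zero] at t2
    have t3 : ∀ ε : ℝ, 0 < ε → ∫ ω, E b ω ∂μ ≤ Real.exp c * b * (ε * T) := by
      intro ε hε
      have t4 := ((t2.const_mul ε⁻¹).const_add (ε * T)).const_mul (Real.exp c * b)
      rw [mul_zero, add_zero] at t4
      refine le_of_tendsto_of_tendsto t1 t4 ?_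
      filter_upwards [eventually_gt_atTop 0] with n hn
      exact h.energy_step hW hT (Nat.cast_nonneg b) hn hε
    have t5 : Tendsto (fun ε : ℝ => Real.exp c * b * (ε * T)) (nhdsWithin 0 (Ioi 0)) (nhds 0) := by
      have : Continuous (fun ε : ℝ => Real.exp c * b * (ε * T)) := by fun_prop
      simpa using (this.tendsto 0).mono_left (nhdsWithin_le_nhds (s := Ioi 0))
    refine ge_of_tendsto t5 ?_
    filter_upwards [self_mem_nhdsWithin] with ε hε
    exact t3 ε hε
  constructor
  · refine bi.mono' (aestronglyMeasurable_of_tendsto_ae atTop Em lim) ?_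
    filter_upwards [lim, ae_all_iff.2 Eb] with ω h1 h2
    exact le_of_tendsto h1.norm (Eventually.of_forall h2)
  · exact le_of_tendsto (tendsto_integral_of_dominated_convergence _ Em bi Eb lim)
      (Eventually.of_forall Ele)

end Energy

end SLQ

/-! ### Matrix estimates for the drift -/

namespace SLQ

section MatrixAlgebra

open scoped Matrix.Norms.Frobenius

lemma frob2_eq {k l : ℕ} (M : Matrix (Fin k) (Fin l) ℝ) : frob2 M = ‖M‖ ^ 2 := by
  have h0 : 0 ≤ ∑ i, ∑ j, ‖M i j‖ ^ (2 : ℝ) :=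
    Finset.sum_nonneg fun i _ => Finset.sum_nonneg fun j _ => by positivity
  rw [Matrix.frobenius_norm_def, ← Real.sqrt_eq_rpow, Real.sq_sqrt h0, frob2]
  simp

lemma sqrt_frob2 {k l : ℕ} (M : Matrix (Fin k) (Fin l) ℝ) : Real.sqrt (frob2 M) = ‖M‖ := by
  rw [frob2_eq, Real.sqrt_sq (norm_nonneg _)]

lemma sq_entry_le {k l : ℕ} (M : Matrix (Fin k) (Fin l) ℝ) (i : Fin k) (j : Fin l) :
    M i j ^ 2 ≤ frob2 M :=
  (Finset.single_le_sum (f := fun j => M i j ^ 2) (fun _ _ => sq_nonneg _)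
    (Finset.mem_univ j)).trans
    (Finset.single_le_sum (f := fun i => ∑ j, M i j ^ 2)
      (fun _ _ => Finset.sum_nonneg fun _ _ => sq_nonneg _) (Finset.mem_univ i))

lemma abs_entry_le {k l : ℕ} (M : Matrix (Fin k) (Fin l) ℝ) (i : Fin k) (j : Fin l) :
    |M i j| ≤ ‖M‖ := by
  refine abs_le_of_sq_le_sq ?_ (norm_nonneg _)
  rw [← frob2_eq]
  exact sq_entry_le M i j

lemma sum_mul_le {k l : ℕ} (M N : Matrix (Fin k) (Fin l) ℝ) :
    ∑ i, ∑ j, M i j * N i j ≤ ‖M‖ * ‖N‖ := by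
  refine (le_abs_self _).trans (abs_le_of_sq_le_sq ?_ (by positivity))
  rw [mul_pow, ← frob2_eq, ← frob2_eq]
  simp only [frob2, ← Fintype.sum_prod_type']
  exact Finset.sum_mul_sq_le_sq_mul_sq _ _ _

/-- The difference of two quadratic terms `UᵀKU`, written so that it is linear in `K₁ - K₂` and
`K₁U₁ - K₂U₂`. -/
lemma quad_sub {n m : ℕ} {K₁ K₂ : Matrix (Fin m) (Fin m) ℝ} (h₁ : K₁ᵀ = K₁) (h₂ : K₂ᵀ = K₂)
    (U₁ U₂ : Matrix (Fin m) (Fin n) ℝ) :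
    (K₁ * U₁)ᵀ * U₁ - (K₂ * U₂)ᵀ * U₂
      = (1 / 4 : ℝ) • ((U₁ - U₂)ᵀ * (K₁ - K₂) * (U₁ - U₂))
        - ((1 / 2 : ℝ) • (U₁ + U₂))ᵀ * (K₁ - K₂) * ((1 / 2 : ℝ) • (U₁ + U₂))
        + ((1 / 2 : ℝ) • (U₁ + U₂))ᵀ * (K₁ * U₁ - K₂ * U₂)
        + (K₁ * U₁ - K₂ * U₂)ᵀ * ((1 / 2 : ℝ) • (U₁ + U₂)) := by
  simp only [Matrix.transpose_mul, Matrix.transpose_sub, Matrix.transpose_add,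
    Matrix.transpose_smul, h₁, h₂, Matrix.mul_sub, Matrix.sub_mul, Matrix.mul_add, Matrix.add_mul,
    Matrix.smul_mul, Matrix.mul_smul, Matrix.mul_assoc]
  module

lemma norm_tr {k l : ℕ} (M : Matrix (Fin k) (Fin l) ℝ) : ‖Mᵀ‖ = ‖M‖ :=
  Matrix.frobenius_norm_transpose M

lemma norm_mul2 {k l p : ℕ} (M : Matrix (Fin k) (Fin l) ℝ) (N : Matrix (Fin l) (Fin p) ℝ) {a b : ℝ}
    (ha : ‖M‖ ≤ a) (hb : ‖N‖ ≤ b) : ‖M * N‖ ≤ a * b :=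
  (Matrix.frobenius_norm_mul M N).trans
    (mul_le_mul ha hb (norm_nonneg _) ((norm_nonneg _).trans ha))

/-- The scalar inequality behind the choice of the constant in `drift_bound`. -/
lemma coef_bound {α β κ σ x v u₁ u₂ d : ℝ} (hα : 0 ≤ α)
    (hd : σ ^ 2 ≤ d) (δs : x ^ 2 ≤ 2 * (u₁ ^ 2 + u₂ ^ 2))
    (Vs : v ^ 2 ≤ 1 / 2 * (u₁ ^ 2 + u₂ ^ 2)) :
    2 * (2 * α + κ ^ 2 + σ ^ 2 * (1 / 4 * x ^ 2 + v ^ 2) + 2 * v * (β + σ * κ))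
      + 2 * (2 * κ + 2 * v * σ) ^ 2
      ≤ (20 + 12 * d) * (α + β ^ 2 + κ ^ 2 + u₁ ^ 2 + u₂ ^ 2) := by
  set s := u₁ ^ 2 + u₂ ^ 2 with hs
  have s0 : 0 ≤ s := by positivity
  have d0 : 0 ≤ d := (sq_nonneg _).trans hd
  have e1 : σ ^ 2 * (1 / 4 * x ^ 2 + v ^ 2) ≤ d * s :=
    mul_le_mul hd (by linarith) (by positivity) d0
  have e2 : 2 * v * β ≤ v ^ 2 + β ^ 2 := by nlinarith [sq_nonneg (v - β)]
  have e3 : 2 * v * (σ * κ) ≤ (v * σ) ^ 2 + κ ^ 2 := by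
    nlinarith [sq_nonneg (v * σ - κ)]
  have e4 : (v * σ) ^ 2 ≤ 1 / 2 * (d * s) := by
    rw [mul_pow]
    calc v ^ 2 * σ ^ 2 ≤ (1 / 2 * s) * d := mul_le_mul Vs hd (by positivity) (by positivity)
      _ = _ := by ring
  have e5 : (2 * κ + 2 * v * σ) ^ 2 ≤ 8 * κ ^ 2 + 8 * (v * σ) ^ 2 := by
    nlinarith [sq_nonneg (κ - v * σ)]
  have e6 : (20 + 12 * d) * (α + β ^ 2 + κ ^ 2 + u₁ ^ 2 + u₂ ^ 2)
      = 20 * (α + β ^ 2 + κ ^ 2 + s) + 12 * (d * α) + 12 * (d * β ^ 2)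
        + 12 * (d * κ ^ 2) + 12 * (d * s) := by rw [hs]; ring
  have f1 : 0 ≤ d * α := by positivity
  have f2 : 0 ≤ d * β ^ 2 := by positivity
  have f3 : 0 ≤ d * κ ^ 2 := by positivity
  have f5 := sq_nonneg β
  have f6 := sq_nonneg κ
  rw [e6]
  nlinarith

/-- Under the range condition the drift difference of two solutions is bounded linearly in the
differences of `P` and `Λ`. -/
lemma drift_bound {n m : ℕ} (A C Q P₁ P₂ Λ₁ Λ₂ : Matrix (Fin n) (Fin n) ℝ)
    (B D : Matrix (Fin n) (Fin m) ℝ) (R Kd₁ Kd₂ : Matrix (Fin m) (Fin m) ℝ)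
    (L₁ L₂ : Matrix (Fin m) (Fin n) ℝ) (hR : Rᵀ = R) (hP₁ : P₁ᵀ = P₁) (hP₂ : P₂ᵀ = P₂)
    (hL₁ : L₁ = Bᵀ * P₁ + Dᵀ * (P₁ * C + Λ₁)) (hL₂ : L₂ = Bᵀ * P₂ + Dᵀ * (P₂ * C + Λ₂))
    (hK₁ : L₁ = (R + Dᵀ * P₁ * D) * (Kd₁ * L₁)) (hK₂ : L₂ = (R + Dᵀ * P₂ * D) * (Kd₂ * L₂))
    {d : ℝ} (hd : ‖D‖ ^ 2 ≤ d) :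
    ∃ a e : ℝ, 0 ≤ a ∧ 2 * a + 2 * e ^ 2 ≤ (20 + 12 * d) *
        (‖A‖ + ‖B‖ ^ 2 + ‖C‖ ^ 2 + ‖Kd₁ * L₁‖ ^ 2 + ‖Kd₂ * L₂‖ ^ 2) ∧
      ‖(P₁ * A + Aᵀ * P₁ + Λ₁ * C + Cᵀ * Λ₁ + Cᵀ * P₁ * C + Q - L₁ᵀ * Kd₁ * L₁)
        - (P₂ * A + Aᵀ * P₂ + Λ₂ * C + Cᵀ * Λ₂ + Cᵀ * P₂ * C + Q - L₂ᵀ * Kd₂ * L₂)‖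
      ≤ a * ‖P₁ - P₂‖ + e * ‖Λ₁ - Λ₂‖ := by
  set U₁ := Kd₁ * L₁ with hU₁
  set U₂ := Kd₂ * L₂ with hU₂
  set Δ := P₁ - P₂ with hΔ
  set Γ := Λ₁ - Λ₂ with hΓ
  set δ := U₁ - U₂ with hδ
  set V := (1 / 2 : ℝ) • (U₁ + U₂) with hV
  have s₁ : (R + Dᵀ * P₁ * D)ᵀ = R + Dᵀ * P₁ * D := by
    simp [Matrix.transpose_mul, hR, hP₁, Matrix.mul_assoc]
  have s₂ : (R + Dᵀ * P₂ * D)ᵀ = R + Dᵀ * P₂ * D := by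
    simp [Matrix.transpose_mul, hR, hP₂, Matrix.mul_assoc]
  have q := quad_sub s₁ s₂ U₁ U₂
  rw [← hK₁, ← hK₂] at q
  have dK : (R + Dᵀ * P₁ * D) - (R + Dᵀ * P₂ * D) = Dᵀ * Δ * D := by
    rw [hΔ]; simp only [Matrix.mul_sub, Matrix.sub_mul]; abel
  have dL : L₁ - L₂ = Bᵀ * Δ + Dᵀ * (Δ * C + Γ) := by
    rw [hL₁, hL₂, hΔ, hΓ]; simp only [Matrix.mul_sub, Matrix.sub_mul, Matrix.mul_add]; abel
  rw [dK, dL] at q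
  have key : (P₁ * A + Aᵀ * P₁ + Λ₁ * C + Cᵀ * Λ₁ + Cᵀ * P₁ * C + Q - L₁ᵀ * Kd₁ * L₁)
        - (P₂ * A + Aᵀ * P₂ + Λ₂ * C + Cᵀ * Λ₂ + Cᵀ * P₂ * C + Q - L₂ᵀ * Kd₂ * L₂)
      = Δ * A + Aᵀ * Δ + Γ * C + Cᵀ * Γ + Cᵀ * Δ * C
        - ((1 / 4 : ℝ) • (δᵀ * (Dᵀ * Δ * D) * δ) - Vᵀ * (Dᵀ * Δ * D) * V
          + Vᵀ * (Bᵀ * Δ + Dᵀ * (Δ * C + Γ)) + (Bᵀ * Δ + Dᵀ * (Δ * C + Γ))ᵀ * V) := by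
    rw [← q, hU₁, hU₂, hΔ, hΓ]
    simp only [Matrix.mul_sub, Matrix.sub_mul, Matrix.mul_assoc]
    abel
  have bK : ‖Dᵀ * Δ * D‖ ≤ ‖D‖ * ‖Δ‖ * ‖D‖ :=
    norm_mul2 _ _ (norm_mul2 _ _ (norm_tr D).le le_rfl) le_rfl
  have bL : ‖Bᵀ * Δ + Dᵀ * (Δ * C + Γ)‖ ≤ ‖B‖ * ‖Δ‖ + ‖D‖ * (‖Δ‖ * ‖C‖ + ‖Γ‖) := by
    refine (norm_add_le _ _).trans (add_le_add (norm_mul2 _ _ (norm_tr B).le le_rfl)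
      (norm_mul2 _ _ (norm_tr D).le ((norm_add_le _ _).trans ?_)))
    exact add_le_add (norm_mul2 _ _ le_rfl le_rfl) le_rfl
  have b1 : ‖Δ * A‖ ≤ ‖Δ‖ * ‖A‖ := norm_mul2 _ _ le_rfl le_rfl
  have b2 : ‖Aᵀ * Δ‖ ≤ ‖A‖ * ‖Δ‖ := norm_mul2 _ _ (norm_tr A).le le_rfl
  have b3 : ‖Γ * C‖ ≤ ‖Γ‖ * ‖C‖ := norm_mul2 _ _ le_rfl le_rfl
  have b4 : ‖Cᵀ * Γ‖ ≤ ‖C‖ * ‖Γ‖ := norm_mul2 _ _ (norm_tr C).le le_rfl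
  have b5 : ‖Cᵀ * Δ * C‖ ≤ ‖C‖ * ‖Δ‖ * ‖C‖ :=
    norm_mul2 _ _ (norm_mul2 _ _ (norm_tr C).le le_rfl) le_rfl
  have b6 : ‖(1 / 4 : ℝ) • (δᵀ * (Dᵀ * Δ * D) * δ)‖
      ≤ 1 / 4 * (‖δ‖ * (‖D‖ * ‖Δ‖ * ‖D‖) * ‖δ‖) := by
    rw [norm_smul, Real.norm_of_nonneg (by norm_num)]
    exact mul_le_mul_of_nonneg_left
      (norm_mul2 _ _ (norm_mul2 _ _ (norm_tr δ).le bK) le_rfl) (by norm_num)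
  have b7 : ‖Vᵀ * (Dᵀ * Δ * D) * V‖ ≤ ‖V‖ * (‖D‖ * ‖Δ‖ * ‖D‖) * ‖V‖ :=
    norm_mul2 _ _ (norm_mul2 _ _ (norm_tr V).le bK) le_rfl
  have b8 : ‖Vᵀ * (Bᵀ * Δ + Dᵀ * (Δ * C + Γ))‖
      ≤ ‖V‖ * (‖B‖ * ‖Δ‖ + ‖D‖ * (‖Δ‖ * ‖C‖ + ‖Γ‖)) := norm_mul2 _ _ (norm_tr V).le bL
  have b9 : ‖(Bᵀ * Δ + Dᵀ * (Δ * C + Γ))ᵀ * V‖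
      ≤ (‖B‖ * ‖Δ‖ + ‖D‖ * (‖Δ‖ * ‖C‖ + ‖Γ‖)) * ‖V‖ :=
    norm_mul2 _ _ ((norm_tr _).trans_le bL) le_rfl
  have hnδ : ‖δ‖ ≤ ‖U₁‖ + ‖U₂‖ := norm_sub_le _ _
  have hnV : ‖V‖ ≤ 1 / 2 * (‖U₁‖ + ‖U₂‖) := by
    rw [hV, norm_smul, Real.norm_of_nonneg (by norm_num)]
    exact mul_le_mul_of_nonneg_left (norm_add_le _ _) (by norm_num)
  have p1 := norm_nonneg δ
  have p2 := norm_nonneg V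
  have δs : ‖δ‖ ^ 2 ≤ 2 * (‖U₁‖ ^ 2 + ‖U₂‖ ^ 2) := by
    nlinarith [sq_nonneg (‖U₁‖ - ‖U₂‖)]
  have Vs : ‖V‖ ^ 2 ≤ 1 / 2 * (‖U₁‖ ^ 2 + ‖U₂‖ ^ 2) := by
    nlinarith [sq_nonneg (‖U₁‖ - ‖U₂‖)]
  refine ⟨2 * ‖A‖ + ‖C‖ ^ 2 + ‖D‖ ^ 2 * (1 / 4 * ‖δ‖ ^ 2 + ‖V‖ ^ 2)
      + 2 * ‖V‖ * (‖B‖ + ‖D‖ * ‖C‖), 2 * ‖C‖ + 2 * ‖V‖ * ‖D‖, by positivity,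
      ?_, ?_⟩
  · exact coef_bound (norm_nonneg _) hd δs Vs
  · rw [key]
    have t1 := norm_sub_le (Δ * A + Aᵀ * Δ + Γ * C + Cᵀ * Γ + Cᵀ * Δ * C)
      ((1 / 4 : ℝ) • (δᵀ * (Dᵀ * Δ * D) * δ) - Vᵀ * (Dᵀ * Δ * D) * V
          + Vᵀ * (Bᵀ * Δ + Dᵀ * (Δ * C + Γ)) + (Bᵀ * Δ + Dᵀ * (Δ * C + Γ))ᵀ * V)
    have t2 := norm_add_le (Δ * A + Aᵀ * Δ + Γ * C + Cᵀ * Γ) (Cᵀ * Δ * C)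
    have t3 := norm_add_le (Δ * A + Aᵀ * Δ + Γ * C) (Cᵀ * Γ)
    have t4 := norm_add_le (Δ * A + Aᵀ * Δ) (Γ * C)
    have t5 := norm_add_le (Δ * A) (Aᵀ * Δ)
    have t6 := norm_add_le ((1 / 4 : ℝ) • (δᵀ * (Dᵀ * Δ * D) * δ) - Vᵀ * (Dᵀ * Δ * D) * V
          + Vᵀ * (Bᵀ * Δ + Dᵀ * (Δ * C + Γ))) ((Bᵀ * Δ + Dᵀ * (Δ * C + Γ))ᵀ * V)
    have t7 := norm_add_le ((1 / 4 : ℝ) • (δᵀ * (Dᵀ * Δ * D) * δ) - Vᵀ * (Dᵀ * Δ * D) * V)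
      (Vᵀ * (Bᵀ * Δ + Dᵀ * (Δ * C + Γ)))
    have t8 := norm_sub_le ((1 / 4 : ℝ) • (δᵀ * (Dᵀ * Δ * D) * δ)) (Vᵀ * (Dᵀ * Δ * D) * V)
    linarith

/-- The pointwise form of the estimates on the drift difference `g`: the energy inequality and a
bound on its size. -/
lemma drift_energy {n : ℕ} {Δ Γ g : Matrix (Fin n) (Fin n) ℝ} {a e q : ℝ}
    (ha : 0 ≤ a) (hq : 2 * a + 2 * e ^ 2 ≤ q)
    (hg : ‖g‖ ≤ a * ‖Δ‖ + e * ‖Γ‖) :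
    2 * ∑ i, ∑ j, Δ i j * g i j ≤ 1 / 2 * frob2 Γ + q * frob2 Δ ∧
      ‖g‖ ≤ (‖Δ‖ + 1) * q + frob2 Γ := by
  have h1 := norm_nonneg Δ
  have h2 := norm_nonneg Γ
  rw [frob2_eq, frob2_eq]
  constructor
  · have h3 := (sum_mul_le Δ g).trans (mul_le_mul_of_nonneg_left hg h1)
    have h4 : 2 * (‖Δ‖ * (e * ‖Γ‖)) ≤ 2 * e ^ 2 * ‖Δ‖ ^ 2 + 1 / 2 * ‖Γ‖ ^ 2 := by
      nlinarith [sq_nonneg (2 * e * ‖Δ‖ - ‖Γ‖)]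
    have h5 : (2 * a + 2 * e ^ 2) * ‖Δ‖ ^ 2 ≤ q * ‖Δ‖ ^ 2 :=
      mul_le_mul_of_nonneg_right hq (by positivity)
    nlinarith
  · have h4 : e * ‖Γ‖ ≤ e ^ 2 + ‖Γ‖ ^ 2 := by nlinarith [sq_nonneg (e - ‖Γ‖)]
    have h5 : a ≤ q := by nlinarith [sq_nonneg e]
    have h6 : e ^ 2 ≤ q := by nlinarith [sq_nonneg e]
    have h7 := mul_le_mul_of_nonneg_right h5 h1
    linarith

/-- The range condition makes `K†L` a solution `U` of `KU = L`. -/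
lemma range_mul {n m : ℕ} {K Kd : Matrix (Fin m) (Fin m) ℝ} {L : Matrix (Fin m) (Fin n) ℝ}
    (hK : IsMPInv K Kd)
    (hr : Set.range (Matrix.mulVec L) ⊆ Set.range (Matrix.mulVec K)) : L = K * (Kd * L) := by
  have h : ∀ v, (K * (Kd * L)) *ᵥ v = L *ᵥ v := fun v => by
    obtain ⟨w, hw⟩ := hr ⟨v, rfl⟩
    rw [← Matrix.mulVec_mulVec, ← Matrix.mulVec_mulVec, ← hw, Matrix.mulVec_mulVec,
      Matrix.mulVec_mulVec, hK.1]
  exact (Matrix.ext_of_mulVec_single fun j => (h _)).symm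

lemma frob2_nonneg {k l : ℕ} (M : Matrix (Fin k) (Fin l) ℝ) : 0 ≤ frob2 M :=
  Finset.sum_nonneg fun _ _ => Finset.sum_nonneg fun _ _ => sq_nonneg _

lemma eq_zero_of_frob2 {k l : ℕ} {M : Matrix (Fin k) (Fin l) ℝ} (h : frob2 M = 0) : M = 0 := by
  rw [frob2_eq] at h
  exact norm_eq_zero.1 (pow_eq_zero_iff two_ne_zero |>.1 h)

lemma sqrt_frob2_sub_le {k l : ℕ} (M N : Matrix (Fin k) (Fin l) ℝ) :
    Real.sqrt (frob2 (M - N)) ≤ Real.sqrt (frob2 M) + Real.sqrt (frob2 N) := by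
  simp only [sqrt_frob2]
  exact norm_sub_le M N

lemma frob2_sub_le {k l : ℕ} (M N : Matrix (Fin k) (Fin l) ℝ) :
    frob2 (M - N) ≤ 2 * frob2 M + 2 * frob2 N := by
  simp only [frob2_eq]
  nlinarith [norm_sub_le M N, norm_nonneg (M - N), sq_nonneg (‖M‖ - ‖N‖)]

lemma sqrt_frob2_le_sum {k l : ℕ} (M : Matrix (Fin k) (Fin l) ℝ) :
    Real.sqrt (frob2 M) ≤ ∑ i, ∑ j, |M i j| := by
  have h0 : 0 ≤ ∑ i, ∑ j, |M i j| := Finset.sum_nonneg fun _ _ => Finset.sum_nonneg fun _ _ =>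
    abs_nonneg _
  rw [Real.sqrt_le_left h0]
  simp only [frob2, ← Fintype.sum_prod_type', ← sq_abs (M _ _)]
  exact Finset.sum_sq_le_sq_sum_of_nonneg fun _ _ => abs_nonneg _

/-- The estimates on the drift difference in terms of `frob2`. -/
lemma drift_main {n m : ℕ} (A C Q P₁ P₂ Λ₁ Λ₂ : Matrix (Fin n) (Fin n) ℝ)
    (B D : Matrix (Fin n) (Fin m) ℝ) (R Kd₁ Kd₂ : Matrix (Fin m) (Fin m) ℝ)
    (L₁ L₂ : Matrix (Fin m) (Fin n) ℝ) (hR : Rᵀ = R) (hP₁ : P₁ᵀ = P₁) (hP₂ : P₂ᵀ = P₂)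
    (hL₁ : L₁ = Bᵀ * P₁ + Dᵀ * (P₁ * C + Λ₁)) (hL₂ : L₂ = Bᵀ * P₂ + Dᵀ * (P₂ * C + Λ₂))
    (hK₁ : L₁ = (R + Dᵀ * P₁ * D) * (Kd₁ * L₁)) (hK₂ : L₂ = (R + Dᵀ * P₂ * D) * (Kd₂ * L₂))
    {d : ℝ} (hd : frob2 D ≤ d) (g : Matrix (Fin n) (Fin n) ℝ)
    (hg : g = (P₁ * A + Aᵀ * P₁ + Λ₁ * C + Cᵀ * Λ₁ + Cᵀ * P₁ * C + Q - L₁ᵀ * Kd₁ * L₁)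
        - (P₂ * A + Aᵀ * P₂ + Λ₂ * C + Cᵀ * Λ₂ + Cᵀ * P₂ * C + Q - L₂ᵀ * Kd₂ * L₂)) (q : ℝ)
    (hq : q = (20 + 12 * d) * (Real.sqrt (frob2 A) + frob2 B + frob2 C + frob2 (Kd₁ * L₁)
      + frob2 (Kd₂ * L₂))) :
    2 * ∑ i, ∑ j, (P₁ - P₂) i j * g i j ≤ 1 / 2 * frob2 (Λ₁ - Λ₂) + q * frob2 (P₁ - P₂) ∧
      ∀ i j, |g i j| ≤ (Real.sqrt (frob2 (P₁ - P₂)) + 1) * q + frob2 (Λ₁ - Λ₂) := by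
  obtain ⟨a, e, ha, hae, hb⟩ := drift_bound A C Q P₁ P₂ Λ₁ Λ₂ B D R Kd₁ Kd₂ L₁ L₂ hR hP₁ hP₂
    hL₁ hL₂ hK₁ hK₂ (d := d) (by rwa [← frob2_eq])
  rw [← hg] at hb
  simp only [← frob2_eq, ← sqrt_frob2 A] at hae
  rw [← hq] at hae
  obtain ⟨h1, h2⟩ := drift_energy ha hae hb
  refine ⟨h1, fun i j => (abs_entry_le g i j).trans ?_⟩
  rwa [sqrt_frob2]

end MatrixAlgebra

end SLQ

/-! ### The difference of two solutions -/

namespace SLQ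

section Assembly

variable {Ω : Type} {mΩ : MeasurableSpace Ω} {μ : Measure Ω} {F : Filtration ℝ mΩ}
  {W : ℝ → Ω → ℝ} {T : ℝ}

lemma MartOn.sub {s : ℝ} {M N : ℝ → Ω → ℝ} (hM : MartOn μ F s T M) (hN : MartOn μ F s T N) :
    MartOn μ F s T (fun t ω => M t ω - N t ω) := by
  refine ⟨fun t ht => (hM.1 t ht).sub (hN.1 t ht), fun t ht => (hM.2.1 t ht).sub (hN.2.1 t ht),
    fun t₁ t₂ h1 h2 h3 => ?_⟩
  have m2 : t₂ ∈ Icc s T := ⟨h1.trans h2, h3⟩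
  exact (condExp_sub (hM.2.1 t₂ m2) (hN.2.1 t₂ m2) (F t₁)).trans
    ((hM.2.2 t₁ t₂ h1 h2 h3).sub (hN.2.2 t₁ t₂ h1 h2 h3))

lemma measurable_frob2 {β : Type*} {mβ : MeasurableSpace β} {k l : ℕ}
    {φ : β → Matrix (Fin k) (Fin l) ℝ} (h : ∀ i j, Measurable fun p => φ p i j) :
    Measurable fun p => frob2 (φ p) := by
  unfold frob2
  exact Finset.measurable_fun_sum _ fun i _ => Finset.measurable_fun_sum _ fun j _ =>
    (h i j).pow_const 2

/-- The exponent `p = 4` in the integrability of `Λ` makes `∫₀ᵀ |Λ|²` square integrable. -/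
lemma MatMemLpAllL2.memLp {k l : ℕ} {φ : ℝ → Ω → Matrix (Fin k) (Fin l) ℝ} (hT : 0 < T)
    (h : MatMemLpAllL2 μ F 0 T φ) :
    MemLp (fun ω => ∫ r in (0 : ℝ)..T, frob2 (φ r ω)) 2 μ := by
  obtain ⟨-, hj, -, hp⟩ := h
  have hm : AEStronglyMeasurable (fun ω => ∫ r in (0 : ℝ)..T, frob2 (φ r ω)) μ := by
    simp only [intervalIntegral.integral_of_le hT.le]
    exact ((measurable_frob2 hj).stronglyMeasurable.integral_prod_left
      (μ := (volume : Measure ℝ).restrict (Ioc 0 T))).aestronglyMeasurable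
  rw [memLp_two_iff_integrable_sq hm]
  refine ⟨hm.pow 2, ?_⟩
  rw [hasFiniteIntegral_iff_ofReal (Eventually.of_forall fun ω => sq_nonneg _)]
  have := hp 4 (by norm_num)
  norm_num at this
  exact this

/-- The time integral of a squared entry is dominated by `∫₀ᵀ |φ|²`, hence integrable. -/
lemma integrable_integral_sq [IsFiniteMeasure μ] {k l : ℕ} {φ : ℝ → Ω → Matrix (Fin k) (Fin l) ℝ}
    (hT : 0 < T) (h : MatMemLpAllL2 μ F 0 T φ) (i : Fin k) (j : Fin l) {t : ℝ}
    (ht : t ∈ Icc 0 T) : Integrable (fun ω => ∫ r in (0 : ℝ)..t, φ r ω i j ^ 2) μ := by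
  refine ((h.memLp hT).integrable (by norm_num)).mono' ?_ ?_
  · simp only [intervalIntegral.integral_of_le ht.1]
    exact (((h.2.1 i j).pow_const 2).stronglyMeasurable.integral_prod_left
      (μ := (volume : Measure ℝ).restrict (Ioc 0 t))).aestronglyMeasurable
  · filter_upwards [h.2.2.1] with ω hω
    rw [Real.norm_of_nonneg (intervalIntegral.integral_nonneg ht.1 fun _ _ => sq_nonneg _),
      intervalIntegral.integral_of_le ht.1, intervalIntegral.integral_of_le hT.le]
    have i1 : IntegrableOn (fun r => frob2 (φ r ω)) (Ioc 0 T) := hω.mono_set Ioc_subset_Icc_self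
    have i2 : IntegrableOn (fun r => frob2 (φ r ω)) (Ioc 0 t) :=
      i1.mono_set (Ioc_subset_Ioc_right ht.2)
    refine (integral_mono_of_nonneg (Eventually.of_forall fun _ => sq_nonneg _) i2
      (Eventually.of_forall fun r => sq_entry_le _ i j)).trans ?_
    exact setIntegral_mono_set i1 (Eventually.of_forall fun _ => frob2_nonneg _)
      (Ioc_subset_Ioc_right ht.2).eventuallyLE

lemma IsItoInt.memLp_two [IsFiniteMeasure μ] {φ M : ℝ → Ω → ℝ} (h : IsItoInt μ F W 0 T φ M) {t : ℝ}
    (ht : t ∈ Icc 0 T) (hi : Integrable (fun ω => ∫ r in (0 : ℝ)..t, φ r ω ^ 2) μ) :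
    MemLp (M t) 2 μ := by
  rw [memLp_two_iff_integrable_sq (h.2.2.1.2.1 t ht).aestronglyMeasurable]
  refine ((h.2.2.2.2.2.1 t ht).add hi).congr (Eventually.of_forall fun ω => ?_)
  simp

/-- Entries of a matrix path with integrable squared norm are integrable. -/
lemma integrableOn_entry {k l : ℕ} {φ : ℝ → Matrix (Fin k) (Fin l) ℝ}
    (hm : ∀ i j, Measurable fun r => φ r i j) (h : IntegrableOn (fun r => frob2 (φ r)) (Icc 0 T))
    (i : Fin k) (j : Fin l) :
    IntegrableOn (fun r => φ r i j) (Icc 0 T) ∧ IntegrableOn (fun r => φ r i j ^ 2) (Icc 0 T) := by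
  have h2 : IntegrableOn (fun r => φ r i j ^ 2) (Icc 0 T) :=
    Integrable.mono' h ((hm i j).pow_const 2).aestronglyMeasurable
      (Eventually.of_forall fun r => by
        rw [Real.norm_of_nonneg (sq_nonneg _)]; exact sq_entry_le _ i j)
  refine ⟨?_, h2⟩
  have h1 : IntegrableOn (fun _ : ℝ => (1 : ℝ)) (Icc 0 T) := by
    simp
  refine Integrable.mono' (h1.add h2) (hm i j).aestronglyMeasurable
    (Eventually.of_forall fun r => ?_)
  simp only [Pi.add_apply, Real.norm_eq_abs]
  nlinarith [sq_abs (φ r i j), sq_nonneg (|φ r i j| - 1), sq_nonneg (|φ r i j|)]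

/-- Nonnegativity of the total energy of a matrix path, and its vanishing only for the zero path:
the integrand of the sum over all entries is at least `β (|X|² + ½ |Γ|²)`. -/
lemma energy_sum {n : ℕ} (hT : 0 < T) {X N g Γ : ℝ → Matrix (Fin n) (Fin n) ℝ} {γ : ℝ → ℝ}
    {y c : ℝ} (h : ∀ i j, GoodPath T (fun t => X t i j) (fun t => N t i j) (fun t => g t i j)
      (fun t => Γ t i j) γ y c)
    (hae : ∀ᵐ r ∂(volume : Measure ℝ).restrict (Icc 0 T),
      2 * ∑ i, ∑ j, X r i j * g r i j ≤ 1 / 2 * frob2 (Γ r) + (γ r - 1) * frob2 (X r))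
    {E : ℝ} (hE : E = ∑ i, ∑ j, ((∫ r in (0 : ℝ)..T, wt γ r * X r i j ^ 2 * γ r)
      - 2 * (∫ r in (0 : ℝ)..T, wt γ r * X r i j * g r i j)
      + ∫ r in (0 : ℝ)..T, wt γ r * Γ r i j ^ 2)) :
    0 ≤ E ∧ (E = 0 → (∀ t ∈ Icc 0 T, X t = 0) ∧
      ∀ᵐ r ∂(volume : Measure ℝ).restrict (Icc 0 T), Γ r = 0) := by
  have hcont : ∀ {u v : ℝ → ℝ}, ContinuousOn u (Icc 0 T) → IntegrableOn v (Icc 0 T) →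
      IntegrableOn (fun r => u r * v r) (Icc 0 T) := fun hu hv =>
    hv.continuousOn_mul hu isCompact_Icc
  have i1 : ∀ i j, IntegrableOn (fun r => wt γ r * X r i j ^ 2 * γ r) (Icc 0 T) := fun i j =>
    hcont (((h i j).wt_cont hT).mul ((h i j).cont.pow 2)) (h i j).γi
  have i2 : ∀ i j, IntegrableOn (fun r => wt γ r * X r i j * g r i j) (Icc 0 T) := fun i j =>
    hcont (((h i j).wt_cont hT).mul (h i j).cont) (h i j).gi
  have i3 : ∀ i j, IntegrableOn (fun r => wt γ r * Γ r i j ^ 2) (Icc 0 T) := fun i j =>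
    hcont ((h i j).wt_cont hT) (h i j).Γ2i
  have i4 : ∀ i j, IntegrableOn (fun r => wt γ r * X r i j ^ 2 * γ r
      - 2 * (wt γ r * X r i j * g r i j) + wt γ r * Γ r i j ^ 2) (Icc 0 T) := fun i j =>
    ((i1 i j).sub ((i2 i j).const_mul 2)).add (i3 i j)
  set f : ℝ → ℝ := fun r => ∑ i, ∑ j, (wt γ r * X r i j ^ 2 * γ r
      - 2 * (wt γ r * X r i j * g r i j) + wt γ r * Γ r i j ^ 2) with hf
  have i5 : IntegrableOn f (Icc 0 T) :=
    integrable_finsetSum _ fun i _ => integrable_finsetSum _ fun j _ => i4 i j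
  have hE' : E = ∫ r in Icc 0 T, f r := by
    rw [hE, hf, integral_finsetSum _ fun i _ => integrable_finsetSum _ fun j _ => i4 i j]
    refine Finset.sum_congr rfl fun i _ => ?_
    rw [integral_finsetSum _ fun j _ => i4 i j]
    refine Finset.sum_congr rfl fun j _ => ?_
    have i12 : IntegrableOn (fun r => wt γ r * X r i j ^ 2 * γ r
        - 2 * (wt γ r * X r i j * g r i j)) (Icc 0 T) := (i1 i j).sub ((i2 i j).const_mul 2)
    rw [integral_add i12 (i3 i j), integral_sub (i1 i j) ((i2 i j).const_mul 2), integral_const_mul]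
    simp only [intervalIntegral.integral_of_le hT.le, integral_Icc_eq_integral_Ioc]
  have hf2 : ∀ r, f r = wt γ r * (γ r * frob2 (X r) - 2 * (∑ i, ∑ j, X r i j * g r i j)
      + frob2 (Γ r)) := by
    intro r
    simp only [hf, frob2, Finset.mul_sum, ← Finset.sum_sub_distrib, ← Finset.sum_add_distrib]
    refine Finset.sum_congr rfl fun i _ => Finset.sum_congr rfl fun j _ => ?_
    ring
  have hpos : ∀ᵐ r ∂(volume : Measure ℝ).restrict (Icc 0 T),
      wt γ r * (frob2 (X r) + 1 / 2 * frob2 (Γ r)) ≤ f r := by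
    filter_upwards [hae] with r hr
    rw [hf2]
    exact mul_le_mul_of_nonneg_left (by linarith) (Real.exp_pos _).le
  have hnn : 0 ≤ᵐ[(volume : Measure ℝ).restrict (Icc 0 T)] f := by
    filter_upwards [hpos] with r hr
    refine le_trans ?_ hr
    have := frob2_nonneg (X r)
    have := frob2_nonneg (Γ r)
    exact mul_nonneg (Real.exp_pos _).le (by linarith)
  refine ⟨hE' ▸ integral_nonneg_of_ae hnn, fun h0 => ?_⟩
  rw [hE', integral_eq_zero_iff_of_nonneg_ae hnn i5] at h0
  have hz : ∀ᵐ r ∂(volume : Measure ℝ).restrict (Icc 0 T), X r = 0 ∧ Γ r = 0 := by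
    filter_upwards [h0, hpos] with r h0 hr
    have a1 := frob2_nonneg (X r)
    have a2 := frob2_nonneg (Γ r)
    simp only [Pi.zero_apply] at h0
    rw [h0] at hr
    have : frob2 (X r) + 1 / 2 * frob2 (Γ r) ≤ 0 := by
      by_contra hc
      push Not at hc
      exact absurd (mul_pos (Real.exp_pos (∫ s in (0 : ℝ)..r, γ s)) hc) (not_lt.2 hr)
    exact ⟨eq_zero_of_frob2 (by linarith), eq_zero_of_frob2 (by linarith)⟩
  refine ⟨fun t ht => ?_, hz.mono fun r hr => hr.2⟩
  ext i j
  have := Measure.eqOn_Icc_of_ae_eq (volume : Measure ℝ) hT.ne (f := fun t => X t i j)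
    (g := fun _ => (0 : ℝ)) (hz.mono fun r hr => by simp [hr.1]) (h i j).cont continuousOn_const
  exact this ht

lemma ae_ae_swap [SFinite μ] {ν : Measure ℝ} [SFinite ν] {p : ℝ × Ω → Prop}
    (h : ∀ᵐ x ∂(ν.prod μ), p x) : ∀ᵐ ω ∂μ, ∀ᵐ r ∂ν, p (r, ω) :=
  Measure.ae_ae_of_ae_prod
    ((Measure.measurePreserving_swap (μ := μ) (ν := ν)).quasiMeasurePreserving.ae h)

lemma MatMemLinfL1.sqrt_frob2 {k l : ℕ} {φ : ℝ → Ω → Matrix (Fin k) (Fin l) ℝ}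
    (h : MatMemLinfL1 μ F 0 T φ) : ∃ c : ℝ, ∀ᵐ ω ∂μ,
      IntegrableOn (fun r => Real.sqrt (frob2 (φ r ω))) (Icc 0 T) ∧
      (∫ r in (0 : ℝ)..T, Real.sqrt (frob2 (φ r ω))) ≤ c := by
  obtain ⟨-, hj, c, hc⟩ := h
  refine ⟨c, hc.mono fun ω hω => ⟨?_, hω.2⟩⟩
  have hs : IntegrableOn (fun r => ∑ i, ∑ j, |φ r ω i j|) (Icc 0 T) :=
    integrable_finsetSum _ fun i _ => integrable_finsetSum _ fun j _ => (hω.1 i j).abs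
  refine Integrable.mono' hs ?_ (Eventually.of_forall fun r => ?_)
  · exact ((measurable_frob2 hj).sqrt.comp measurable_prodMk_right).aestronglyMeasurable
  · rw [Real.norm_of_nonneg (Real.sqrt_nonneg _)]
    exact sqrt_frob2_le_sum _

/-- The rate `q` that controls the difference of the two Riccati drifts is an adapted process with
essentially bounded time integral. -/
lemma rate_bound (hT : 0 < T) {n m : ℕ} {A C : ℝ → Ω → Matrix (Fin n) (Fin n) ℝ}
    {B : ℝ → Ω → Matrix (Fin n) (Fin m) ℝ} {U₁ U₂ : ℝ → Ω → Matrix (Fin m) (Fin n) ℝ}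
    (hA : MatMemLinfL1 μ F 0 T A) (hB : MatMemLinfL2 μ F 0 T B) (hC : MatMemLinfL2 μ F 0 T C)
    (hU₁ : MatMemLinfL2 μ F 0 T U₁) (hU₂ : MatMemLinfL2 μ F 0 T U₂) {κ : ℝ} (hκ : 0 ≤ κ)
    {q : ℝ → Ω → ℝ} (hq : q = fun r ω => κ * (Real.sqrt (frob2 (A r ω)) + frob2 (B r ω)
      + frob2 (C r ω) + frob2 (U₁ r ω) + frob2 (U₂ r ω))) :
    (∀ t, Measurable[F t] (q t)) ∧ (Measurable fun p : ℝ × Ω => q p.1 p.2) ∧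
      (∀ r ω, 0 ≤ q r ω) ∧
      ∃ c, 0 ≤ c ∧ ∀ᵐ ω ∂μ, IntegrableOn (fun r => q r ω) (Icc 0 T) ∧
        (∫ r in (0 : ℝ)..T, q r ω) ≤ c := by
  obtain ⟨a, ha⟩ := hA.sqrt_frob2
  obtain ⟨b1, b2, b, hb⟩ := hB
  obtain ⟨c1, c2, c, hc⟩ := hC
  obtain ⟨u1, u2, u, hu⟩ := hU₁
  obtain ⟨v1, v2, v, hv⟩ := hU₂
  subst hq
  refine ⟨fun t => ?_, ?_, fun r ω => ?_, max 0 (κ * (a + b + c + u + v)), le_max_left _ _, ?_⟩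
  · exact Measurable.const_mul (((((measurable_frob2 (hA.1 t)).sqrt.add
      (measurable_frob2 (b1 t))).add (measurable_frob2 (c1 t))).add (measurable_frob2 (u1 t))).add
      (measurable_frob2 (v1 t))) κ
  · exact Measurable.const_mul (((((measurable_frob2 hA.2.1).sqrt.add
      (measurable_frob2 b2)).add (measurable_frob2 c2)).add (measurable_frob2 u2)).add
      (measurable_frob2 v2)) κ
  · have := frob2_nonneg (B r ω)
    have := frob2_nonneg (C r ω)
    have := frob2_nonneg (U₁ r ω)
    have := frob2_nonneg (U₂ r ω)
    have := Real.sqrt_nonneg (frob2 (A r ω))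
    exact mul_nonneg hκ (by linarith)
  · filter_upwards [ha, hb, hc, hu, hv] with ω ha hb hc hu hv
    have i1 : IntegrableOn (fun r => Real.sqrt (frob2 (A r ω)) + frob2 (B r ω)) (Icc 0 T) :=
      ha.1.add hb.1
    have i2 : IntegrableOn (fun r => Real.sqrt (frob2 (A r ω)) + frob2 (B r ω)
      + frob2 (C r ω)) (Icc 0 T) := i1.add hc.1
    have i3 : IntegrableOn (fun r => Real.sqrt (frob2 (A r ω)) + frob2 (B r ω)
      + frob2 (C r ω) + frob2 (U₁ r ω)) (Icc 0 T) := i2.add hu.1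
    have i4 : IntegrableOn (fun r => Real.sqrt (frob2 (A r ω)) + frob2 (B r ω)
      + frob2 (C r ω) + frob2 (U₁ r ω) + frob2 (U₂ r ω)) (Icc 0 T) := i3.add hv.1
    refine ⟨i4.const_mul κ, le_max_of_le_right ?_⟩
    have z0 : (0 : ℝ) ∈ Icc 0 T := ⟨le_rfl, hT.le⟩
    have z1 : T ∈ Icc 0 T := ⟨hT.le, le_rfl⟩
    rw [intervalIntegral.integral_const_mul,
      intervalIntegral.integral_add (intervalIntegrable_of_mem i3 z0 z1)
        (intervalIntegrable_of_mem hv.1 z0 z1),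
      intervalIntegral.integral_add (intervalIntegrable_of_mem i2 z0 z1)
        (intervalIntegrable_of_mem hu.1 z0 z1),
      intervalIntegral.integral_add (intervalIntegrable_of_mem i1 z0 z1)
        (intervalIntegrable_of_mem hc.1 z0 z1),
      intervalIntegral.integral_add (intervalIntegrable_of_mem ha.1 z0 z1)
        (intervalIntegrable_of_mem hb.1 z0 z1)]
    exact mul_le_mul_of_nonneg_left (by linarith [ha.2, hb.2, hc.2, hu.2, hv.2]) hκ

/-- Each entry of the difference of two matrix-valued backward equations with the same terminal
value satisfies the pathwise hypotheses of the energy estimate. -/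
lemma goodPath_diff (hT : 0 < T) {n : ℕ} {P₁ P₂ Λ₁ Λ₂ M₁ M₂ f₁ f₂ : ℝ → Matrix (Fin n) (Fin n) ℝ}
    {G : Matrix (Fin n) (Fin n) ℝ} {q : ℝ → ℝ} {c₁ c₂ cq : ℝ} (hcq : 0 ≤ cq)
    (hc₁ : ∀ i j, ContinuousOn (fun t => P₁ t i j) (Icc 0 T))
    (hc₂ : ∀ i j, ContinuousOn (fun t => P₂ t i j) (Icc 0 T))
    (hb₁ : ∀ t ∈ Icc 0 T, frob2 (P₁ t) ≤ c₁) (hb₂ : ∀ t ∈ Icc 0 T, frob2 (P₂ t) ≤ c₂)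
    (hm₁ : ∀ i j, Measurable fun r => Λ₁ r i j) (hm₂ : ∀ i j, Measurable fun r => Λ₂ r i j)
    (hi₁ : IntegrableOn (fun r => frob2 (Λ₁ r)) (Icc 0 T))
    (hi₂ : IntegrableOn (fun r => frob2 (Λ₂ r)) (Icc 0 T))
    (hf₁ : ∀ i j, IntegrableOn (fun r => f₁ r i j) (Icc 0 T))
    (hf₂ : ∀ i j, IntegrableOn (fun r => f₂ r i j) (Icc 0 T))
    (he₁ : ∀ t ∈ Icc 0 T, ∀ i j, P₁ t i j = G i j + (∫ r in t..T, f₁ r i j)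
      - (M₁ T i j - M₁ t i j))
    (he₂ : ∀ t ∈ Icc 0 T, ∀ i j, P₂ t i j = G i j + (∫ r in t..T, f₂ r i j)
      - (M₂ T i j - M₂ t i j))
    (hM₁ : ∀ i j, M₁ 0 i j = 0) (hM₂ : ∀ i j, M₂ 0 i j = 0)
    (hq0 : ∀ r, 0 ≤ q r) (hqi : IntegrableOn q (Icc 0 T)) (hqc : (∫ r in (0 : ℝ)..T, q r) ≤ cq)
    (hg : ∀ᵐ r ∂(volume : Measure ℝ).restrict (Icc 0 T), ∀ i j, |(f₁ r - f₂ r) i j| ≤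
      (Real.sqrt (frob2 (P₁ r - P₂ r)) + 1) * q r + frob2 (Λ₁ r - Λ₂ r)) (i j : Fin n) :
    GoodPath T (fun t => (P₁ t - P₂ t) i j) (fun t => (M₁ t - M₂ t) i j)
      (fun t => (f₁ t - f₂ t) i j) (fun t => (Λ₁ t - Λ₂ t) i j) (fun t => 1 + q t)
      ((Real.sqrt c₁ + Real.sqrt c₂ + 1) * cq + (2 * (∫ r in (0 : ℝ)..T, frob2 (Λ₁ r))
        + 2 * ∫ r in (0 : ℝ)..T, frob2 (Λ₂ r))) (max (Real.sqrt c₁ + Real.sqrt c₂) (T + cq)) := by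
  have z0 : (0 : ℝ) ∈ Icc 0 T := ⟨le_rfl, hT.le⟩
  have z1 : T ∈ Icc 0 T := ⟨hT.le, le_rfl⟩
  have hone : IntegrableOn (fun _ : ℝ => (1 : ℝ)) (Icc 0 T) := by simp
  have hb : ∀ t ∈ Icc 0 T, Real.sqrt (frob2 (P₁ t - P₂ t)) ≤ Real.sqrt c₁ + Real.sqrt c₂ :=
    fun t ht => (sqrt_frob2_sub_le _ _).trans
      (add_le_add (Real.sqrt_le_sqrt (hb₁ t ht)) (Real.sqrt_le_sqrt (hb₂ t ht)))
  have hgi : IntegrableOn (fun r => (f₁ r - f₂ r) i j) (Icc 0 T) := (hf₁ i j).sub (hf₂ i j)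
  have hΛm : ∀ i j, Measurable fun r => (Λ₁ r - Λ₂ r) i j := fun i j => (hm₁ i j).sub (hm₂ i j)
  have hΛ2 : IntegrableOn (fun r => 2 * frob2 (Λ₁ r) + 2 * frob2 (Λ₂ r)) (Icc 0 T) :=
    (hi₁.const_mul 2).add (hi₂.const_mul 2)
  have hΛi : IntegrableOn (fun r => frob2 (Λ₁ r - Λ₂ r)) (Icc 0 T) :=
    Integrable.mono' hΛ2 (measurable_frob2 hΛm).aestronglyMeasurable
      (Eventually.of_forall fun r => by
        rw [Real.norm_of_nonneg (frob2_nonneg _)]; exact frob2_sub_le _ _)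
  have hΛe : (∫ r in (0 : ℝ)..T, (2 * frob2 (Λ₁ r) + 2 * frob2 (Λ₂ r)))
      = 2 * (∫ r in (0 : ℝ)..T, frob2 (Λ₁ r)) + 2 * ∫ r in (0 : ℝ)..T, frob2 (Λ₂ r) := by
    rw [intervalIntegral.integral_add (intervalIntegrable_of_mem (hi₁.const_mul 2) z0 z1)
      (intervalIntegrable_of_mem (hi₂.const_mul 2) z0 z1), intervalIntegral.integral_const_mul,
      intervalIntegral.integral_const_mul]
  have hs : 0 ≤ Real.sqrt c₁ + Real.sqrt c₂ :=
    add_nonneg (Real.sqrt_nonneg _) (Real.sqrt_nonneg _)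
  obtain ⟨hΓi, hΓ2⟩ := integrableOn_entry hΛm hΛi i j
  have hX : ∀ t ∈ Icc 0 T, (P₁ t - P₂ t) i j = (∫ r in t..T, (f₁ r - f₂ r) i j)
      - ((M₁ T - M₂ T) i j - (M₁ t - M₂ t) i j) := by
    intro t ht
    have e : (∫ r in t..T, (f₁ r - f₂ r) i j)
        = (∫ r in t..T, f₁ r i j) - ∫ r in t..T, f₂ r i j :=
      intervalIntegral.integral_sub (intervalIntegrable_of_mem (hf₁ i j) ht z1)
        (intervalIntegrable_of_mem (hf₂ i j) ht z1)
    rw [e]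
    simp only [Matrix.sub_apply]
    rw [he₁ t ht i j, he₂ t ht i j]
    ring
  refine ⟨(hc₁ i j).sub (hc₂ i j), fun t ht => ?_, fun t => add_nonneg zero_le_one (hq0 t),
    hone.add hqi, ?_, hgi, ?_, hΓi, hΓ2, ?_, fun t ht => ?_, ?_⟩
  · exact le_max_of_le_left ((Real.abs_le_sqrt (sq_entry_le _ i j)).trans (hb t ht))
  · rw [intervalIntegral.integral_add (intervalIntegrable_of_mem hone z0 z1)
      (intervalIntegrable_of_mem hqi z0 z1)]
    refine le_max_of_le_right ?_
    simp only [intervalIntegral.integral_const, smul_eq_mul, mul_one, sub_zero]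
    linarith
  · have hq' : IntegrableOn (fun r => (Real.sqrt c₁ + Real.sqrt c₂ + 1) * q r) (Icc 0 T) :=
      hqi.const_mul _
    have hd : IntegrableOn (fun r => (Real.sqrt c₁ + Real.sqrt c₂ + 1) * q r
        + (2 * frob2 (Λ₁ r) + 2 * frob2 (Λ₂ r))) (Icc 0 T) := hq'.add hΛ2
    calc (∫ r in (0 : ℝ)..T, |(f₁ r - f₂ r) i j|)
        ≤ ∫ r in (0 : ℝ)..T, ((Real.sqrt c₁ + Real.sqrt c₂ + 1) * q r
          + (2 * frob2 (Λ₁ r) + 2 * frob2 (Λ₂ r))) := by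
          refine intervalIntegral.integral_mono_ae_restrict hT.le
            (intervalIntegrable_of_mem hgi.abs z0 z1) (intervalIntegrable_of_mem hd z0 z1) ?_
          filter_upwards [hg, ae_restrict_mem measurableSet_Icc] with r hr hrm
          refine (hr i j).trans (add_le_add ?_ (frob2_sub_le _ _))
          exact mul_le_mul_of_nonneg_right (by linarith [hb r hrm]) (hq0 r)
      _ ≤ _ := by
          rw [intervalIntegral.integral_add (intervalIntegrable_of_mem hq' z0 z1)
            (intervalIntegrable_of_mem hΛ2 z0 z1), hΛe, intervalIntegral.integral_const_mul]
          have := mul_le_mul_of_nonneg_left hqc (by linarith : 0 ≤ Real.sqrt c₁ + Real.sqrt c₂ + 1)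
          linarith
  · calc (∫ r in (0 : ℝ)..T, (Λ₁ r - Λ₂ r) i j ^ 2)
        ≤ ∫ r in (0 : ℝ)..T, (2 * frob2 (Λ₁ r) + 2 * frob2 (Λ₂ r)) := by
          refine intervalIntegral.integral_mono_on hT.le (intervalIntegrable_of_mem hΓ2 z0 z1)
            (intervalIntegrable_of_mem hΛ2 z0 z1) fun r _ => ?_
          exact (sq_entry_le _ i j).trans (frob2_sub_le _ _)
      _ ≤ _ := by
          rw [hΛe]
          have := mul_nonneg (by linarith : 0 ≤ Real.sqrt c₁ + Real.sqrt c₂ + 1) hcq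
          linarith
  · rw [hX t ht, hX 0 z0, ← intervalIntegral.integral_add_adjacent_intervals
      (intervalIntegrable_of_mem hgi z0 ht) (intervalIntegrable_of_mem hgi ht z1)]
    have : (M₁ 0 - M₂ 0) i j = 0 := by simp [hM₁, hM₂]
    rw [this]
    ring
  · rw [hX T z1]
    simp

end Assembly

end SLQ

namespace SLQ

/-- **Corollary 2.2 (Lü–Wang–Zhang).** Under (AS1), the backward stochastic Riccati equation
admits at most one solution `(P,Λ) ∈ L^∞_𝔽(Ω;C([0,T];S(ℝⁿ))) × L^p_𝔽(Ω;L²(0,T;S(ℝⁿ)))`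
(for all `p ≥ 1`) with `Range K ⊇ Range L`, `K ≥ 0` a.e. and
`K†L ∈ L^∞_𝔽(Ω;L²(0,T;ℝ^{m×n}))`. -/
theorem stmt1 {Ω : Type} {mΩ : MeasurableSpace Ω} (μ : Measure Ω) [IsProbabilityMeasure μ]
    (F : Filtration ℝ mΩ) (W : ℝ → Ω → ℝ) (hW : IsBrownian μ F W)
    {n m : ℕ} (T : ℝ) (hT : 0 < T)
    (A : ℝ → Ω → Matrix (Fin n) (Fin n) ℝ) (B : ℝ → Ω → Matrix (Fin n) (Fin m) ℝ)
    (C : ℝ → Ω → Matrix (Fin n) (Fin n) ℝ) (D : ℝ → Ω → Matrix (Fin n) (Fin m) ℝ)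
    (Q : ℝ → Ω → Matrix (Fin n) (Fin n) ℝ) (R : ℝ → Ω → Matrix (Fin m) (Fin m) ℝ)
    (G : Ω → Matrix (Fin n) (Fin n) ℝ)
    (hAS1 : AS1 μ F T A B C D Q R G) :
    ∀ (P₁ Λ₁ P₂ Λ₂ : ℝ → Ω → Matrix (Fin n) (Fin n) ℝ)
      (Kd₁ Kd₂ : ℝ → Ω → Matrix (Fin m) (Fin m) ℝ),
      SolvesRiccati μ F W T A B C D Q R G P₁ Λ₁ Kd₁ →
      RiccatiClass μ F T B C D R P₁ Λ₁ Kd₁ →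
      SolvesRiccati μ F W T A B C D Q R G P₂ Λ₂ Kd₂ →
      RiccatiClass μ F T B C D R P₂ Λ₂ Kd₂ →
      (∀ᵐ ω ∂μ, ∀ t ∈ Icc (0:ℝ) T, P₁ t ω = P₂ t ω) ∧
      (∀ᵐ p ∂(((volume : Measure ℝ).restrict (Icc 0 T)).prod μ), Λ₁ p.1 p.2 = Λ₂ p.1 p.2) := by
  intro P₁ Λ₁ P₂ Λ₂ Kd₁ Kd₂ hs₁ hr₁ hs₂ hr₂
  obtain ⟨hK₁, M₁, hI₁, hf₁, he₁⟩ := hs₁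
  obtain ⟨hK₂, M₂, hI₂, hf₂, he₂⟩ := hs₂
  obtain ⟨⟨hPm₁, hPc₁, c₁, hPb₁⟩, hPs₁, hΛ₁, -, hR₁, hU₁⟩ := hr₁
  obtain ⟨⟨hPm₂, hPc₂, c₂, hPb₂⟩, hPs₂, hΛ₂, -, hR₂, hU₂⟩ := hr₂
  obtain ⟨-, -, d', hd'⟩ := hAS1.hD
  set f₁ : ℝ → Ω → Matrix (Fin n) (Fin n) ℝ := fun r ω =>
    P₁ r ω * A r ω + (A r ω)ᵀ * P₁ r ω + Λ₁ r ω * C r ω + (C r ω)ᵀ * Λ₁ r ω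
      + (C r ω)ᵀ * P₁ r ω * C r ω + Q r ω
      - (Lof B C D P₁ Λ₁ r ω)ᵀ * Kd₁ r ω * Lof B C D P₁ Λ₁ r ω with hf₁d
  set f₂ : ℝ → Ω → Matrix (Fin n) (Fin n) ℝ := fun r ω =>
    P₂ r ω * A r ω + (A r ω)ᵀ * P₂ r ω + Λ₂ r ω * C r ω + (C r ω)ᵀ * Λ₂ r ω
      + (C r ω)ᵀ * P₂ r ω * C r ω + Q r ω
      - (Lof B C D P₂ Λ₂ r ω)ᵀ * Kd₂ r ω * Lof B C D P₂ Λ₂ r ω with hf₂d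
  set d := max d' 0 with hd
  have hκ : 0 ≤ 20 + 12 * d := by linarith [le_max_right d' 0]
  obtain ⟨q, hq⟩ : ∃ q : ℝ → Ω → ℝ, q = fun r ω => (20 + 12 * d) *
      (Real.sqrt (frob2 (A r ω)) + frob2 (B r ω) + frob2 (C r ω)
        + frob2 (Kd₁ r ω * Lof B C D P₁ Λ₁ r ω) + frob2 (Kd₂ r ω * Lof B C D P₂ Λ₂ r ω)) :=
    ⟨_, rfl⟩
  obtain ⟨hqm, hqj, hq0, cq, hcq, hqc⟩ :=
    rate_bound hT hAS1.hA hAS1.hB hAS1.hC hU₁ hU₂ hκ hq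
  have hdrift : ∀ᵐ ω ∂μ, ∀ᵐ r ∂(volume : Measure ℝ).restrict (Icc 0 T),
      2 * ∑ i, ∑ j, (P₁ r ω - P₂ r ω) i j * (f₁ r ω - f₂ r ω) i j
        ≤ 1 / 2 * frob2 (Λ₁ r ω - Λ₂ r ω) + q r ω * frob2 (P₁ r ω - P₂ r ω) ∧
      ∀ i j, |(f₁ r ω - f₂ r ω) i j| ≤
        (Real.sqrt (frob2 (P₁ r ω - P₂ r ω)) + 1) * q r ω + frob2 (Λ₁ r ω - Λ₂ r ω) := by
    filter_upwards [ae_ae_swap hd', ae_ae_swap hR₁, ae_ae_swap hR₂, hPs₁, hPs₂]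
      with ω hd' hR₁ hR₂ hPs₁ hPs₂
    filter_upwards [hd', hR₁, hR₂, ae_restrict_mem measurableSet_Icc] with r hd' hR₁ hR₂ hr
    exact drift_main (A r ω) (C r ω) (Q r ω) (P₁ r ω) (P₂ r ω) (Λ₁ r ω) (Λ₂ r ω) (B r ω) (D r ω)
      (R r ω) (Kd₁ r ω) (Kd₂ r ω) (Lof B C D P₁ Λ₁ r ω) (Lof B C D P₂ Λ₂ r ω)
      (hAS1.hRsymm r ω) (hPs₁ r hr) (hPs₂ r hr) rfl rfl (range_mul (hK₁ r ω) hR₁.1)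
      (range_mul (hK₂ r ω) hR₂.1) (hd'.trans (le_max_left _ _)) _ rfl _ (by rw [hq])
  have hgood : ∀ᵐ ω ∂μ, ∀ i j, GoodPath T (fun t => (P₁ t ω - P₂ t ω) i j)
      (fun t => (M₁ t ω - M₂ t ω) i j) (fun t => (f₁ t ω - f₂ t ω) i j)
      (fun t => (Λ₁ t ω - Λ₂ t ω) i j) (fun t => 1 + q t ω)
      ((Real.sqrt c₁ + Real.sqrt c₂ + 1) * cq + (2 * (∫ r in (0 : ℝ)..T, frob2 (Λ₁ r ω))
        + 2 * ∫ r in (0 : ℝ)..T, frob2 (Λ₂ r ω)))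
      (max (Real.sqrt c₁ + Real.sqrt c₂) (T + cq)) := by
    have h0₁ : ∀ᵐ ω ∂μ, ∀ i j, M₁ 0 ω i j = 0 :=
      ae_all_iff.2 fun i => ae_all_iff.2 fun j => (hI₁ i j).1
    have h0₂ : ∀ᵐ ω ∂μ, ∀ i j, M₂ 0 ω i j = 0 :=
      ae_all_iff.2 fun i => ae_all_iff.2 fun j => (hI₂ i j).1
    filter_upwards [hdrift, hPc₁, hPc₂, hPb₁, hPb₂, hΛ₁.2.2.1, hΛ₂.2.2.1, hf₁, hf₂, he₁, he₂,
      h0₁, h0₂, hqc] with ω hdrift hPc₁ hPc₂ hPb₁ hPb₂ hΛi₁ hΛi₂ hf₁ hf₂ he₁ he₂ h0₁ h0₂ hqc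
    exact goodPath_diff hT hcq hPc₁ hPc₂ hPb₁ hPb₂
      (fun i j => (hΛ₁.2.1 i j).comp measurable_prodMk_right)
      (fun i j => (hΛ₂.2.1 i j).comp measurable_prodMk_right) hΛi₁ hΛi₂ hf₁ hf₂ he₁ he₂ h0₁ h0₂
      (fun r => hq0 r ω) hqc.1 hqc.2 (hdrift.mono fun r hr => hr.2)
  clear_value f₁ f₂
  have hIto : ∀ i j, ItoData μ F W T (fun t ω => (P₁ t ω - P₂ t ω) i j)
      (fun t ω => (M₁ t ω - M₂ t ω) i j)
      (fun t ω => (∫ r in (0 : ℝ)..t, Λ₁ r ω i j) - ∫ r in (0 : ℝ)..t, Λ₂ r ω i j)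
      (fun t ω => (f₁ t ω - f₂ t ω) i j) (fun t ω => (Λ₁ t ω - Λ₂ t ω) i j)
      (fun t ω => 1 + q t ω)
      (fun ω => (Real.sqrt c₁ + Real.sqrt c₂ + 1) * cq + (2 * (∫ r in (0 : ℝ)..T, frob2 (Λ₁ r ω))
        + 2 * ∫ r in (0 : ℝ)..T, frob2 (Λ₂ r ω)))
      (max (Real.sqrt c₁ + Real.sqrt c₂) (T + cq)) := by
    intro i j
    refine ⟨fun t => (hPm₁ t i j).sub (hPm₂ t i j), (hI₁ i j).2.2.1.sub (hI₂ i j).2.2.1,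
      fun t ht => ?_, ?_, fun t ht => ?_, fun t => (hqm t).const_add 1, hqj.const_add 1, ?_,
      hgood.mono fun ω h => h i j⟩
    · exact ((hI₁ i j).memLp_two ht (integrable_integral_sq hT hΛ₁ i j ht)).sub
        ((hI₂ i j).memLp_two ht (integrable_integral_sq hT hΛ₂ i j ht))
    · have h := (hI₁ i j).2.2.2.1.sub (hI₂ i j).2.2.2.1
      have e : (fun t ω => (M₁ t ω - M₂ t ω) i j * W t ω
          - ((∫ r in (0 : ℝ)..t, Λ₁ r ω i j) - ∫ r in (0 : ℝ)..t, Λ₂ r ω i j))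
          = fun t ω => (M₁ t ω i j * W t ω - ∫ r in (0 : ℝ)..t, Λ₁ r ω i j)
            - (M₂ t ω i j * W t ω - ∫ r in (0 : ℝ)..t, Λ₂ r ω i j) := by
        funext t ω
        rw [Matrix.sub_apply]
        ring
      rw [e]
      exact h
    · filter_upwards [hΛ₁.2.2.1, hΛ₂.2.2.1] with ω h₁ h₂
      have z0 : (0 : ℝ) ∈ Icc 0 T := ⟨le_rfl, hT.le⟩
      have i₁ : IntegrableOn (fun r => Λ₁ r ω i j) (Icc 0 T) := (integrableOn_entry
        (fun i j => (hΛ₁.2.1 i j).comp (measurable_prodMk_right (y := ω))) h₁ i j).1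
      have i₂ : IntegrableOn (fun r => Λ₂ r ω i j) (Icc 0 T) := (integrableOn_entry
        (fun i j => (hΛ₂.2.1 i j).comp (measurable_prodMk_right (y := ω))) h₂ i j).1
      simp only [Matrix.sub_apply]
      rw [intervalIntegral.integral_sub (intervalIntegrable_of_mem i₁ z0 ht)
        (intervalIntegrable_of_mem i₂ z0 ht)]
    · exact (memLp_const ((Real.sqrt c₁ + Real.sqrt c₂ + 1) * cq)).add (((hΛ₁.memLp hT).const_mul 2).add ((hΛ₂.memLp hT).const_mul 2))
  obtain ⟨E, hE⟩ : ∃ E : Ω → ℝ, E = fun ω => ∑ i, ∑ j,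
      ((∫ r in (0 : ℝ)..T, wt (fun r => 1 + q r ω) r * (P₁ r ω - P₂ r ω) i j ^ 2 * (1 + q r ω))
      - 2 * (∫ r in (0 : ℝ)..T,
          wt (fun r => 1 + q r ω) r * (P₁ r ω - P₂ r ω) i j * (f₁ r ω - f₂ r ω) i j)
      + ∫ r in (0 : ℝ)..T, wt (fun r => 1 + q r ω) r * (Λ₁ r ω - Λ₂ r ω) i j ^ 2) := ⟨_, rfl⟩
  have hEi : Integrable E μ ∧ ∫ ω, E ω ∂μ ≤ 0 := by
    rw [hE]
    constructor
    · exact integrable_finsetSum _ fun i _ => integrable_finsetSum _ fun j _ =>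
        ((hIto i j).energy hW hT).1
    · rw [integral_finsetSum _ fun i _ => integrable_finsetSum _ fun j _ =>
        ((hIto i j).energy hW hT).1]
      refine Finset.sum_nonpos fun i _ => ?_
      rw [integral_finsetSum _ fun j _ => ((hIto i j).energy hW hT).1]
      exact Finset.sum_nonpos fun j _ => ((hIto i j).energy hW hT).2
  have hsum : ∀ᵐ ω ∂μ, 0 ≤ E ω ∧ (E ω = 0 → (∀ t ∈ Icc 0 T, P₁ t ω - P₂ t ω = 0) ∧
      ∀ᵐ r ∂(volume : Measure ℝ).restrict (Icc 0 T), Λ₁ r ω - Λ₂ r ω = 0) := by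
    filter_upwards [hgood, hdrift] with ω hgood hdrift
    refine energy_sum hT (X := fun r => P₁ r ω - P₂ r ω) (N := fun r => M₁ r ω - M₂ r ω)
      (g := fun r => f₁ r ω - f₂ r ω) (Γ := fun r => Λ₁ r ω - Λ₂ r ω) hgood
      (hdrift.mono fun r hr => hr.1.trans (le_of_eq (by ring))) (by rw [hE])
  have hE0 : E =ᵐ[μ] 0 := by
    have hnn : 0 ≤ᵐ[μ] E := hsum.mono fun ω h => h.1
    exact (integral_eq_zero_iff_of_nonneg_ae hnn hEi.1).1
      (le_antisymm hEi.2 (integral_nonneg_of_ae hnn))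
  refine ⟨?_, ?_⟩
  · filter_upwards [hsum, hE0] with ω h h0 t ht
    exact sub_eq_zero.1 ((h.2 h0).1 t ht)
  · have hset : MeasurableSet {p : Ω × ℝ | Λ₁ p.2 p.1 = Λ₂ p.2 p.1} := by
      have e : {p : Ω × ℝ | Λ₁ p.2 p.1 = Λ₂ p.2 p.1}
          = ⋂ i, ⋂ j, {p : Ω × ℝ | Λ₁ p.2 p.1 i j = Λ₂ p.2 p.1 i j} := by
        ext p
        simp only [mem_ofPred_eq, mem_iInter]
        exact ⟨fun h i j => by rw [h], fun h => by ext i j; exact h i j⟩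
      rw [e]
      exact MeasurableSet.iInter fun i => MeasurableSet.iInter fun j =>
        measurableSet_eq_fun ((hΛ₁.2.1 i j).comp measurable_swap)
          ((hΛ₂.2.1 i j).comp measurable_swap)
    have h1 : ∀ᵐ p ∂μ.prod ((volume : Measure ℝ).restrict (Icc 0 T)),
        Λ₁ p.2 p.1 = Λ₂ p.2 p.1 := by
      rw [Measure.ae_prod_iff_ae_ae hset]
      filter_upwards [hsum, hE0] with ω h h0
      exact (h.2 h0).2.mono fun r hr => sub_eq_zero.1 hr
    exact Measure.measurePreserving_swap.quasiMeasurePreserving.ae h1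

end SLQ
end
end

section
/- For every real n×n matrix M, the family of matrices (MᵀM + δIₙ)⁻¹Mᵀ converges as δ → 0⁺ (note MᵀM + δIₙ is invertible for every δ > 0), and its limit N satisfies the four Penrose equations: MNM = M, NMN = N, (MN)ᵀ = MN, and (NM)ᵀ = NM; that is, the Moore–Penrose pseudo-inverse of M equals lim_{δ↘0} (MᵀM + δIₙ)⁻¹Mᵀ. -/
/-!
Write `A = MᵀM = U D Uᵀ` by the spectral theorem, with `D` diagonal and nonnegative, and put
`B = U D⁺ Uᵀ`, where `D⁺` inverts the nonzero entries of `D` and keeps the zeros. Then `B` is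
symmetric, commutes with `A`, and satisfies `ABA = A`, `BAB = B`. Cancelling `Mᵀ` on the left in
`MᵀMBA = MᵀM` gives `MBA = M`, and the four Penrose equations for `N = BMᵀ` follow.

For the limit, `Mᵀ = ABMᵀ`, so `(A + δI)⁻¹Mᵀ = U diag(d / (d + δ)) Uᵀ N`. As `δ → 0⁺` each
`d / (d + δ)` tends to `1` if `d ≠ 0` and to `0` if `d = 0`, so the limit is `ABN = N`.
-/

open Matrix Filter Set

/-- `N` is the Moore–Penrose pseudo-inverse of `M`. -/
def IsMPInv {n : ℕ} (M N : Matrix (Fin n) (Fin n) ℝ) : Prop :=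
  M * N * M = M ∧ N * M * N = N ∧ (M * N)ᵀ = M * N ∧ (N * M)ᵀ = N * M

/-- Spectral theorem for the Gram matrix `MᵀM`, with plain transposes. -/
lemma gram_diagonalization {n : ℕ} (M : Matrix (Fin n) (Fin n) ℝ) :
    ∃ (U : Matrix (Fin n) (Fin n) ℝ) (d : Fin n → ℝ), Uᵀ * U = 1 ∧ U * Uᵀ = 1 ∧
      (∀ i, 0 ≤ d i) ∧ Mᵀ * M = U * diagonal d * Uᵀ := by
  have hP : (Mᵀ * M).PosSemidef := by
    simpa using Matrix.posSemidef_conjTranspose_mul_self M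
  refine ⟨hP.1.eigenvectorUnitary, hP.1.eigenvalues, ?_, ?_, hP.eigenvalues_nonneg, ?_⟩
  · simpa [star_eq_conjTranspose] using Unitary.coe_star_mul_self hP.1.eigenvectorUnitary
  · simpa [star_eq_conjTranspose] using Unitary.coe_mul_star_self hP.1.eigenvectorUnitary
  · have h := hP.1.spectral_theorem
    rw [Unitary.conjStarAlgAut_apply] at h
    simpa [star_eq_conjTranspose, Function.comp_def] using h

lemma conj_diagonal_mul {n : ℕ} {U : Matrix (Fin n) (Fin n) ℝ} (hU : Uᵀ * U = 1)
    (a b : Fin n → ℝ) :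
    (U * diagonal a * Uᵀ) * (U * diagonal b * Uᵀ) = U * diagonal (fun i => a i * b i) * Uᵀ := by
  calc _ = U * diagonal a * (Uᵀ * U) * diagonal b * Uᵀ := by simp only [Matrix.mul_assoc]
    _ = _ := by rw [hU, Matrix.mul_one, Matrix.mul_assoc U, diagonal_mul_diagonal]

/-- If `B` is a symmetric reflexive generalized inverse of `MᵀM` commuting with it, then `BMᵀ` is
the Moore–Penrose pseudo-inverse of `M`. -/
lemma isMPInv_of_gram {n : ℕ} {M B : Matrix (Fin n) (Fin n) ℝ} (hB : Bᵀ = B)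
    (hc : (Mᵀ * M) * B = B * (Mᵀ * M)) (hABA : (Mᵀ * M) * (B * (Mᵀ * M)) = Mᵀ * M)
    (hBAB : B * (Mᵀ * M) * B = B) : IsMPInv M (B * Mᵀ) := by
  have hM : M * (B * (Mᵀ * M)) = M := by
    have h : Mᵀ * M * (B * (Mᵀ * M) - 1) = 0 := by
      rw [Matrix.mul_sub, hABA, Matrix.mul_one, sub_self]
    have h2 : M * (B * (Mᵀ * M) - 1) = 0 := by
      have := (Matrix.conjTranspose_mul_self_mul_eq_zero M (B * (Mᵀ * M) - 1)).1
      rw [conjTranspose_eq_transpose_of_trivial] at this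
      exact this h
    rwa [Matrix.mul_sub, Matrix.mul_one, sub_eq_zero] at h2
  refine ⟨?_, ?_, ?_, ?_⟩
  · simpa only [Matrix.mul_assoc] using hM
  · have := congrArg (· * Mᵀ) hBAB
    simpa only [Matrix.mul_assoc] using this
  · simp only [transpose_mul, transpose_transpose, hB, Matrix.mul_assoc]
  · rw [Matrix.mul_assoc B, ← hc]
    simp only [transpose_mul, transpose_transpose, hB]
    exact hc.symm

/-- For `δ ≠ -dᵢ` the matrix `U diag(1 / (d + δ)) Uᵀ` is a right inverse of
`U diag(d) Uᵀ + δI`. -/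
lemma conj_diagonal_add_smul_mul {n : ℕ} {U : Matrix (Fin n) (Fin n) ℝ} (hU : Uᵀ * U = 1)
    (hUt : U * Uᵀ = 1) (d : Fin n → ℝ) (δ : ℝ) (hd : ∀ i, d i + δ ≠ 0) :
    (U * diagonal d * Uᵀ + δ • (1 : Matrix (Fin n) (Fin n) ℝ)) *
      (U * diagonal (fun i => (d i + δ)⁻¹) * Uᵀ) = 1 := by
  have h : U * diagonal d * Uᵀ + δ • (1 : Matrix (Fin n) (Fin n) ℝ)
      = U * diagonal (fun i => d i + δ) * Uᵀ := by
    rw [← diagonal_add, Matrix.mul_add, Matrix.add_mul, ← smul_one_eq_diagonal]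
    simp [hUt]
  rw [h, conj_diagonal_mul hU]
  simp [hd, hUt]

/-- For every real `n×n` matrix `M`, the matrices `(MᵀM + δIₙ)⁻¹Mᵀ` (with `MᵀM + δIₙ`
invertible for every `δ > 0`) converge as `δ → 0⁺`, and the limit is the Moore–Penrose
pseudo-inverse of `M`. -/
theorem stmt7 {n : ℕ} (M : Matrix (Fin n) (Fin n) ℝ) :
    (∀ δ : ℝ, 0 < δ → IsUnit (Mᵀ * M + δ • (1 : Matrix (Fin n) (Fin n) ℝ))) ∧
    ∃ N : Matrix (Fin n) (Fin n) ℝ,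
      Tendsto (fun δ : ℝ => (Mᵀ * M + δ • (1 : Matrix (Fin n) (Fin n) ℝ))⁻¹ * Mᵀ)
        (nhdsWithin 0 (Ioi 0)) (nhds N) ∧
      IsMPInv M N := by
  obtain ⟨U, d, hU, hUt, hd, hA⟩ := gram_diagonalization M
  have hne : ∀ δ : ℝ, 0 < δ → ∀ i, d i + δ ≠ 0 := fun δ hδ i =>
    (add_pos_of_nonneg_of_pos (hd i) hδ).ne'
  have hinv := fun δ hδ => conj_diagonal_add_smul_mul hU hUt d δ (hne δ hδ)
  refine ⟨fun δ hδ => ?_, ?_⟩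
  · rw [hA]
    exact IsUnit.of_mul_eq_one _ (hinv δ hδ)
  -- Since `0⁻¹ = 0` in `ℝ`, the entrywise inverse of `d` is exactly the diagonal of `D⁺`.
  set B := U * diagonal (fun i => (d i)⁻¹) * Uᵀ with hBdef
  have hMP : IsMPInv M (B * Mᵀ) := by
    apply isMPInv_of_gram
    · simp [hBdef, Matrix.mul_assoc]
    · rw [hA, hBdef, conj_diagonal_mul hU, conj_diagonal_mul hU]
      simp only [mul_comm]
    · rw [hA, hBdef, conj_diagonal_mul hU, conj_diagonal_mul hU]
      simp only [← mul_assoc, mul_inv_mul_cancel]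
    · rw [hA, hBdef, conj_diagonal_mul hU, conj_diagonal_mul hU]
      have h : ∀ x : ℝ, x⁻¹ * x * x⁻¹ = x⁻¹ := fun x => by
        simpa using mul_inv_mul_cancel x⁻¹
      simp only [h]
  refine ⟨B * Mᵀ, ?_, hMP⟩
  have hMt : Mᵀ = (Mᵀ * M) * (B * Mᵀ) := by
    have h := congrArg transpose hMP.1
    rw [transpose_mul, hMP.2.2.1] at h
    rw [Matrix.mul_assoc, h]
  have hN : U * diagonal (fun i => (d i)⁻¹ * d i) * Uᵀ * (B * Mᵀ) = B * Mᵀ := by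
    rw [← conj_diagonal_mul hU, ← hA, ← hBdef, Matrix.mul_assoc B, ← hMt]
  have hlim : Tendsto (fun δ : ℝ => U * diagonal (fun i => (d i + δ)⁻¹ * d i) * Uᵀ * (B * Mᵀ))
      (nhdsWithin 0 (Ioi 0)) (nhds (B * Mᵀ)) := by
    have hdiag : Tendsto (fun δ : ℝ => fun i => (d i + δ)⁻¹ * d i)
        (nhdsWithin 0 (Ioi 0)) (nhds (fun i => (d i)⁻¹ * d i)) := by
      refine tendsto_pi_nhds.2 fun i => ?_
      rcases eq_or_ne (d i) 0 with h0 | h0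
      · simp [h0]
      · have hc : ContinuousAt (fun δ : ℝ => (d i + δ)⁻¹ * d i) 0 := by
          refine ContinuousAt.mul (ContinuousAt.inv₀ (by fun_prop) (by simpa using h0)) ?_
          fun_prop
        simpa using hc.tendsto.mono_left nhdsWithin_le_nhds
    have hcont : Continuous (fun e : Fin n → ℝ => U * diagonal e * Uᵀ * (B * Mᵀ)) := by
      fun_prop
    have := (hcont.tendsto _).comp hdiag
    rwa [hN] at this
  refine hlim.congr' ?_
  filter_upwards [self_mem_nhdsWithin] with δ hδ
  rw [hA, Matrix.inv_eq_right_inv (hinv δ hδ), ← conj_diagonal_mul hU, ← hA, Matrix.mul_assoc,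
    ← hMt]
end
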